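/- arXiv:2504.08084 — 5 statements merged into one kernel-verified Lean document; each statement's English description precedes it below -/
import Mathlib

section
/- Let G = *_C G_i (i ∈ I) be an amalgamated free product, let P_i be a normal subsemigroup of G_i for each i ∈ I such that P_i ∩ C = P_j ∩ C for all i, j ∈ I. Then for each i ∈ I, the intersection of G_i with the normal subsemigroup of G generated by the union of all P_j equals P_i. -/
/-- A normal subsemigroup of a group: closed under products and under conjugation by
all elements of the group. -/
def IsNormalSubsemigroup {G : Type*} [Group G] (P : Set G) : Prop :=
  (∀ x ∈ P, ∀ y ∈ P, x * y ∈ P) ∧ ∀ x ∈ P, ∀ g : G, g⁻¹ * x * g ∈ P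

/-- `nss G S`: the normal subsemigroup of `G` generated by `S`, i.e. all nonempty
finite products of conjugates of elements of `S`. -/
def nss (G : Type*) [Group G] (S : Set G) : Set G :=
  {x | ∃ l : List (G × G), l ≠ [] ∧ (∀ p ∈ l, p.1 ∈ S) ∧
    (l.map fun p => p.2⁻¹ * p.1 * p.2).prod = x}

section PlanarDerivations

variable {ι : Type*} {G : ι → Type*} [∀ i, Group (G i)] {H : Type*} [Group H]

/-- `PlanarLE φ Q i a l` is a planar derivation of the inequality `a ≤ ∏ l` in the amalgam of
the `G i`, preordered by the normal submonoid generated by the `Q i`. A derivation reads the word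
`l` from left to right, either consuming a letter of the current factor, or replacing an initial
segment by an element of the amalgamated subgroup which lies below it. -/
inductive PlanarLE (φ : ∀ i, H →* G i) (Q : ∀ i, Submonoid (G i)) :
    ∀ i, G i → List (Σ i, G i) → Prop
  | nil (i : ι) (a : G i) : a⁻¹ ∈ Q i → PlanarLE φ Q i a []
  | cons (i : ι) (a b : G i) (l : List (Σ i, G i)) :
      PlanarLE φ Q i (b⁻¹ * a) l → PlanarLE φ Q i a (⟨i, b⟩ :: l)
  | arc (i j : ι) (a : G i) (c : H) (l m : List (Σ i, G i)) :
      PlanarLE φ Q j (φ j c) l → PlanarLE φ Q i ((φ i c)⁻¹ * a) m → PlanarLE φ Q i a (l ++ m)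

namespace PlanarLE

variable {φ : ∀ i, H →* G i} {Q : ∀ i, Submonoid (G i)}

theorem congr {i : ι} {a b : G i} {l m : List (Σ i, G i)} (h : PlanarLE φ Q i a l)
    (hab : a = b) (hlm : l = m) : PlanarLE φ Q i b m := hab ▸ hlm ▸ h

/-- A letter of a word may be replaced by a word that can be consumed in its place. -/
theorem replace_letter {s : Σ i, G i} {m : List (Σ i, G i)}
    (hs : ∀ (x : G s.1) v, PlanarLE φ Q s.1 (s.2⁻¹ * x) v → PlanarLE φ Q s.1 x (m ++ v))
    {k : ι} {x : G k} {u v : List (Σ i, G i)} (h : PlanarLE φ Q k x (u ++ s :: v)) :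
    PlanarLE φ Q k x (u ++ (m ++ v)) := by
  generalize hl : u ++ s :: v = l at h
  induction h generalizing u v with
  | nil i a ha => simp at hl
  | cons i a b l h ih =>
    rcases u with _ | ⟨t, u⟩
    · simp only [List.nil_append, List.cons.injEq] at hl
      obtain ⟨rfl, rfl⟩ := hl
      exact hs _ _ h
    · simp only [List.cons_append, List.cons.injEq] at hl
      obtain ⟨rfl, hl⟩ := hl
      exact cons _ _ _ _ (ih hl)
  | arc i j a c l₁ l₂ h₁ h₂ ih₁ ih₂ =>
    rcases List.append_eq_append_iff.1 hl with ⟨w, rfl, hw⟩ | ⟨w, rfl, rfl⟩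
    · rcases w with _ | ⟨t, w⟩
      · simp only [List.nil_append] at hw
        subst hw
        have := arc i j a c _ _ h₁ (ih₂ (u := []) (v := v) rfl)
        simpa using this
      · simp only [List.cons_append, List.cons.injEq] at hw
        obtain ⟨rfl, rfl⟩ := hw
        have := arc i j a c _ _ (ih₁ rfl) h₂
        simpa using this
    · have := arc i j a c _ _ h₁ (ih₂ rfl)
      simpa using this

/-- A positive letter may be inserted anywhere in a word. -/
theorem insert {j : ι} {p : G j} (hp : p ∈ Q j) {k : ι} {x : G k} {u v : List (Σ i, G i)}
    (h : PlanarLE φ Q k x (u ++ v)) : PlanarLE φ Q k x (u ++ ⟨j, p⟩ :: v) := by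
  have prepend : ∀ {k : ι} {x : G k} {v}, PlanarLE φ Q k x v →
      PlanarLE φ Q k x (⟨j, p⟩ :: v) := fun {k x v} h =>
    arc k j x 1 [⟨j, p⟩] v (cons _ _ _ _ (nil _ _ (by simpa using hp))) (by simpa using h)
  generalize hl : u ++ v = l at h
  induction h generalizing u v with
  | nil i a ha =>
    obtain ⟨rfl, rfl⟩ := List.append_eq_nil_iff.1 hl
    exact prepend (nil i a ha)
  | cons i a b l h ih =>
    rcases u with _ | ⟨t, u⟩
    · simp only [List.nil_append] at hl
      subst hl
      exact prepend (cons _ _ _ _ h)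
    · simp only [List.cons_append, List.cons.injEq] at hl
      obtain ⟨rfl, hl⟩ := hl
      exact cons _ _ _ _ (ih hl)
  | arc i j' a c l₁ l₂ h₁ h₂ ih₁ ih₂ =>
    rcases List.append_eq_append_iff.1 hl with ⟨w, rfl, rfl⟩ | ⟨w, rfl, rfl⟩
    · have := arc i j' a c _ _ (ih₁ rfl) h₂
      simpa using this
    · have := arc i j' a c _ _ h₁ (ih₂ rfl)
      simpa using this

theorem base_change {i : ι} (j : ι) {c : H} {l : List (Σ i, G i)}
    (h : PlanarLE φ Q i (φ i c) l) : PlanarLE φ Q j (φ j c) l := by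
  have := arc j i (φ j c) c l [] h (nil _ _ (by simp))
  simpa using this

theorem mono {i : ι} {a b : G i} {l : List (Σ i, G i)} (h : PlanarLE φ Q i a l)
    (hab : b⁻¹ * a ∈ Q i) : PlanarLE φ Q i b l := by
  induction h with
  | nil i a ha => exact nil i b (by simpa using mul_mem hab ha)
  | cons i a g l h ih => exact cons _ _ _ _ (ih (by simpa [mul_assoc] using hab))
  | arc i j a c l m h₁ h₂ ih₁ ih₂ =>
    exact arc _ _ _ _ _ _ h₁ (ih₂ (by simpa [mul_assoc] using hab))

theorem inv_mem_of_nil (hφ : ∀ i j h, φ i h ∈ Q i → φ j h ∈ Q j) {i : ι} {a : G i}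
    (h : PlanarLE φ Q i a []) : a⁻¹ ∈ Q i := by
  generalize hl : [] = l at h
  induction h with
  | nil i a ha => exact ha
  | cons => simp at hl
  | arc i j a c l m h₁ h₂ ih₁ ih₂ =>
    obtain ⟨rfl, rfl⟩ := List.append_eq_nil_iff.1 hl.symm
    have hc : φ i c⁻¹ ∈ Q i := hφ j i _ (by simpa using ih₁ rfl)
    simpa [mul_assoc] using mul_mem (ih₂ rfl) hc

theorem append (hconj : ∀ i, ∀ x ∈ Q i, ∀ g : G i, g⁻¹ * x * g ∈ Q i) {i : ι} {a b : G i}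
    {l m : List (Σ i, G i)} (h : PlanarLE φ Q i a l) (h' : PlanarLE φ Q i b m) :
    PlanarLE φ Q i (a * b) (l ++ m) := by
  induction h with
  | nil i a ha => exact h'.mono (by simpa [mul_assoc] using hconj i _ ha b)
  | cons i a g l h ih => exact cons _ _ _ _ ((ih h').congr (by group) rfl)
  | arc i j a c l l' h₁ h₂ ih₁ ih₂ =>
    exact (arc i j _ c _ _ h₁ ((ih₂ h').congr (by group) rfl)).congr rfl (by simp)

/-- Inversion for the first letter of a word. -/
theorem of_cons (hconj : ∀ i, ∀ x ∈ Q i, ∀ g : G i, g⁻¹ * x * g ∈ Q i)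
    (hφ : ∀ i j h, φ i h ∈ Q i → φ j h ∈ Q j) {i k : ι} {y : G k} {b : G i}
    {v : List (Σ i, G i)} (h : PlanarLE φ Q k y (⟨i, b⟩ :: v)) :
    (∃ z : G i, (⟨k, y⟩ : Σ i, G i) = ⟨i, z⟩ ∧ PlanarLE φ Q i (b⁻¹ * z) v) ∨
    ∃ v₁ v₂ d, v = v₁ ++ v₂ ∧ PlanarLE φ Q i (b⁻¹ * φ i d) v₁ ∧
      PlanarLE φ Q k ((φ k d)⁻¹ * y) v₂ := by
  generalize hl : ⟨i, b⟩ :: v = l at h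
  induction h generalizing v with
  | nil => simp at hl
  | cons k y g l h ih =>
    simp only [List.cons.injEq] at hl
    obtain ⟨hl, rfl⟩ := hl
    cases hl
    exact .inl ⟨y, rfl, h⟩
  | arc k j y c l m h₁ h₂ ih₁ ih₂ =>
    rcases l with _ | ⟨t, l⟩
    · have hc : φ k c⁻¹ ∈ Q k := hφ j k _ (by simpa using inv_mem_of_nil hφ h₁)
      have key : ∀ w : G k, w⁻¹ * ((φ k c)⁻¹ * w) ∈ Q k := fun w => by
        simpa [mul_assoc] using hconj k _ hc w
      rcases ih₂ hl with ⟨z, hz, h⟩ | ⟨v₁, v₂, d, rfl, h, h'⟩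
      · cases hz
        exact .inl ⟨y, rfl, h.mono (by simpa [mul_assoc] using key y)⟩
      · refine .inr ⟨v₁, v₂, d, rfl, h, h'.mono ?_⟩
        simpa [mul_assoc] using key y
    · simp only [List.cons_append, List.cons.injEq] at hl
      obtain ⟨rfl, rfl⟩ := hl
      rcases ih₁ rfl with ⟨z, hz, h⟩ | ⟨v₁, v₂, d, rfl, h, h'⟩
      · cases hz
        exact .inr ⟨l, m, c, rfl, h, h₂⟩
      · refine .inr ⟨v₁, v₂ ++ m, d, by simp, h, arc k j _ (d⁻¹ * c) _ _ ?_ ?_⟩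
        · exact h'.congr (by simp) rfl
        · exact h₂.congr (by simp [mul_assoc]) rfl

theorem of_cons_same (hconj : ∀ i, ∀ x ∈ Q i, ∀ g : G i, g⁻¹ * x * g ∈ Q i)
    (hφ : ∀ i j h, φ i h ∈ Q i → φ j h ∈ Q j) {i : ι} {y b : G i}
    {v : List (Σ i, G i)} (h : PlanarLE φ Q i y (⟨i, b⟩ :: v)) :
    PlanarLE φ Q i (b⁻¹ * y) v := by
  rcases of_cons hconj hφ h with ⟨z, hz, h⟩ | ⟨v₁, v₂, d, rfl, h, h'⟩
  · cases hz
    exact h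
  · exact (h.append hconj h').congr (by group) rfl

/-- Inversion for the last letter of a word. -/
theorem of_concat (hconj : ∀ i, ∀ x ∈ Q i, ∀ g : G i, g⁻¹ * x * g ∈ Q i)
    (hφ : ∀ i j h, φ i h ∈ Q i → φ j h ∈ Q j) {i k : ι} {y : G k} {a : G i}
    {u : List (Σ i, G i)} (h : PlanarLE φ Q k y (u ++ [⟨i, a⟩])) :
    (∃ z : G i, (⟨k, y⟩ : Σ i, G i) = ⟨i, z⟩ ∧ PlanarLE φ Q i (z * a⁻¹) u) ∨
    ∃ u₁ u₂ e, u = u₁ ++ u₂ ∧ PlanarLE φ Q k (y * (φ k e)⁻¹) u₁ ∧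
      PlanarLE φ Q i (φ i e * a⁻¹) u₂ := by
  generalize hl : u ++ [⟨i, a⟩] = l at h
  induction h generalizing u with
  | nil => simp at hl
  | cons k y g l h ih =>
    rcases u with _ | ⟨t, u⟩
    · simp only [List.nil_append, List.cons.injEq] at hl
      obtain ⟨hl, rfl⟩ := hl
      cases hl
      refine .inl ⟨y, rfl, nil _ _ ?_⟩
      simpa [mul_assoc] using hconj i _ (inv_mem_of_nil hφ h) a⁻¹
    · simp only [List.cons_append, List.cons.injEq] at hl
      obtain ⟨rfl, rfl⟩ := hl
      rcases ih rfl with ⟨z, hz, h⟩ | ⟨u₁, u₂, e, rfl, h, h'⟩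
      · cases hz
        exact .inl ⟨y, rfl, cons _ _ _ _ (h.congr (by group) rfl)⟩
      · exact .inr ⟨_ :: u₁, u₂, e, rfl, cons _ _ _ _ (h.congr (by group) rfl), h'⟩
  | arc k j y c l m h₁ h₂ ih₁ ih₂ =>
    rcases List.eq_nil_or_concat m with rfl | ⟨m, t, rfl⟩
    · simp only [List.append_nil] at hl
      have hy := inv_mem_of_nil hφ h₂
      rcases ih₁ hl with ⟨z, hz, h⟩ | ⟨u₁, u₂, e, rfl, h, h'⟩
      · cases hz
        refine .inr ⟨[], u, c, rfl, nil _ _ ?_, h⟩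
        simpa [mul_assoc] using hconj k _ hy (φ k c)⁻¹
      · refine .inr ⟨u₁, u₂, e, rfl, mono (a := φ k (c * e⁻¹)) ?_ ?_, h'⟩
        · exact base_change k (h.congr (by simp) rfl)
        · simpa [mul_assoc] using hconj k _ hy (φ k e)⁻¹
    · rw [List.concat_eq_append] at h₂ ih₂ hl
      rw [← List.append_assoc] at hl
      obtain ⟨rfl, ht⟩ := List.append_inj' hl rfl
      simp only [List.cons.injEq, and_true] at ht
      subst ht
      rcases ih₂ rfl with ⟨z, hz, h⟩ | ⟨u₁, u₂, e, rfl, h, h'⟩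
      · cases hz
        exact .inl ⟨y, rfl, arc _ _ _ _ _ _ h₁ (h.congr (by group) rfl)⟩
      · exact .inr ⟨l ++ u₁, u₂, e, by simp, arc _ _ _ _ _ _ h₁ (h.congr (by group) rfl), h'⟩

/-- Adjacent letters of the same factor may be multiplied. -/
theorem merge (hconj : ∀ i, ∀ x ∈ Q i, ∀ g : G i, g⁻¹ * x * g ∈ Q i)
    (hφ : ∀ i j h, φ i h ∈ Q i → φ j h ∈ Q j) {i k : ι} {x : G k} {a b : G i}
    {u v : List (Σ i, G i)} (h : PlanarLE φ Q k x (u ++ ⟨i, a⟩ :: ⟨i, b⟩ :: v)) :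
    PlanarLE φ Q k x (u ++ ⟨i, a * b⟩ :: v) := by
  generalize hl : u ++ ⟨i, a⟩ :: ⟨i, b⟩ :: v = l at h
  induction h generalizing u v with
  | nil => simp at hl
  | cons k x g l h ih =>
    rcases u with _ | ⟨t, u⟩
    · simp only [List.nil_append, List.cons.injEq] at hl
      obtain ⟨hl, rfl⟩ := hl
      cases hl
      exact cons _ _ _ _ ((of_cons_same hconj hφ h).congr (by group) rfl)
    · simp only [List.cons_append, List.cons.injEq] at hl
      obtain ⟨rfl, rfl⟩ := hl
      exact cons _ _ _ _ (ih rfl)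
  | arc k j x c l m h₁ h₂ ih₁ ih₂ =>
    rcases List.append_eq_append_iff.1 hl with ⟨w, rfl, hw⟩ | ⟨w, rfl, rfl⟩
    · rcases w with _ | ⟨t, _ | ⟨t', w⟩⟩
      · simp only [List.nil_append] at hw
        subst hw
        have := arc k j x c _ _ h₁ (ih₂ (u := []) rfl)
        simpa using this
      · simp only [List.cons_append, List.nil_append, List.cons.injEq] at hw
        obtain ⟨rfl, rfl⟩ := hw
        have hu : ∃ u₁ u₂ e, u = u₁ ++ u₂ ∧ PlanarLE φ Q j (φ j (c * e⁻¹)) u₁ ∧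
            PlanarLE φ Q i (φ i e * a⁻¹) u₂ := by
          rcases of_concat hconj hφ h₁ with ⟨z, hz, h⟩ | ⟨u₁, u₂, e, rfl, h, h'⟩
          · cases hz
            exact ⟨[], u, c, rfl, nil _ _ (by simp), h⟩
          · exact ⟨u₁, u₂, e, rfl, h.congr (by simp) rfl, h'⟩
        obtain ⟨u₁, u₂, e, rfl, hu₁, hu₂⟩ := hu
        rcases of_cons hconj hφ h₂ with ⟨z, hz, h⟩ | ⟨v₁, v₂, d, rfl, h, h'⟩
        · obtain ⟨rfl, hz⟩ := Sigma.mk.inj_iff.1 hz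
          obtain rfl := eq_of_heq hz
          have h₃ := hu₂.append hconj
            (cons k (a * ((φ k c)⁻¹ * x)) (a * b) v (h.congr (by group) rfl))
          refine (arc k j x _ _ _ hu₁ (h₃.congr ?_ rfl)).congr rfl (by simp)
          simp [mul_assoc]
        · have h₃ := hu₂.append hconj
            (cons i (a * φ i d) (a * b) v₁ (h.congr (by group) rfl))
          have h₄ : PlanarLE φ Q i (φ i (e * d)) (u₂ ++ ⟨i, a * b⟩ :: v₁) :=
            h₃.congr (by simp) rfl
          refine (arc k j x _ _ _ hu₁ (arc k i _ _ _ _ h₄ (h'.congr ?_ rfl))).congr rfl (by simp)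
          simp [mul_assoc]
      · simp only [List.cons_append, List.cons.injEq] at hw
        obtain ⟨rfl, rfl, rfl⟩ := hw
        have := arc k j x c _ _ (ih₁ rfl) h₂
        simpa using this
    · have := arc k j x c _ _ h₁ (ih₂ rfl)
      simpa using this

/-- Two words are equivalent if no derivation distinguishes them, in any context. -/
def con (φ : ∀ i, H →* G i) (Q : ∀ i, Submonoid (G i)) : Con (FreeMonoid (Σ i, G i)) where
  r l m := ∀ (u v : List (Σ i, G i)) (k : ι) (x : G k),
    PlanarLE φ Q k x (u ++ (l.toList ++ v)) ↔ PlanarLE φ Q k x (u ++ (m.toList ++ v))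
  iseqv :=
    { refl := fun _ _ _ _ _ => Iff.rfl
      symm := fun h u v k x => (h u v k x).symm
      trans := fun h h' u v k x => (h u v k x).trans (h' u v k x) }
  mul' {l m l' m'} h h' u v k x := by
    have h₁ := h u (l'.toList ++ v) k x
    have h₂ := h' (u ++ m.toList) v k x
    simp only [List.append_assoc] at h₂
    simpa using h₁.trans h₂

/-- The inclusion of a factor into the quotient of the monoid of words by `PlanarLE.con`. -/
def factorHom (hconj : ∀ i, ∀ x ∈ Q i, ∀ g : G i, g⁻¹ * x * g ∈ Q i)
    (hφ : ∀ i j h, φ i h ∈ Q i → φ j h ∈ Q j) (i : ι) : G i →* (con φ Q).Quotient where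
  toFun a := ((FreeMonoid.of ⟨i, a⟩ : FreeMonoid (Σ i, G i)) : (con φ Q).Quotient)
  map_one' := by
    refine (Con.eq _).2 fun u v k x => ⟨fun h => ?_, fun h => ?_⟩
    · exact replace_letter (s := ⟨i, 1⟩) (m := []) (fun x v h => by simpa using h) h
    · exact insert (one_mem _) h
  map_mul' a b := by
    refine (Con.eq _).2 fun u v k x => ⟨fun h => ?_, fun h => ?_⟩
    · exact replace_letter (s := ⟨i, a * b⟩) (m := [⟨i, a⟩, ⟨i, b⟩])
        (fun x v h => cons _ _ _ _ (cons _ _ _ _ (h.congr (by simp [mul_assoc]) rfl))) h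
    · exact merge hconj hφ h

theorem factorHom_comp (hconj : ∀ i, ∀ x ∈ Q i, ∀ g : G i, g⁻¹ * x * g ∈ Q i)
    (hφ : ∀ i j h, φ i h ∈ Q i → φ j h ∈ Q j) (i j : ι) :
    (factorHom hconj hφ i).comp (φ i) = (factorHom hconj hφ j).comp (φ j) := by
  have key : ∀ (i j : ι) (h : H) (u v : List (Σ i, G i)) (k : ι) (x : G k),
      PlanarLE φ Q k x (u ++ ⟨i, φ i h⟩ :: v) → PlanarLE φ Q k x (u ++ ⟨j, φ j h⟩ :: v) :=
    fun i j h u v k x hx => replace_letter (s := ⟨i, φ i h⟩) (m := [⟨j, φ j h⟩])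
      (fun x v hx => arc i j x h _ _ (cons _ _ _ _ (nil _ _ (by simp))) hx) hx
  ext h
  exact (Con.eq _).2 fun u v k x => ⟨key i j h u v k x, key j i h u v k x⟩

end PlanarLE

/-- Each factor meets the normal submonoid generated by the `Q j` in `Q i` only. -/
theorem mem_of_of_mem_closure_conjugates {φ : ∀ i, H →* G i} {Q : ∀ i, Submonoid (G i)}
    (hconj : ∀ i, ∀ x ∈ Q i, ∀ g : G i, g⁻¹ * x * g ∈ Q i)
    (hφ : ∀ i j h, φ i h ∈ Q i → φ j h ∈ Q j) {i : ι} {x : G i}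
    (hx : Monoid.PushoutI.of (φ := φ) i x ∈ Submonoid.closure
      {y | ∃ j, ∃ p ∈ Q j, ∃ g, y = g⁻¹ * Monoid.PushoutI.of (φ := φ) j p * g}) :
    x ∈ Q i := by
  let F : Monoid.PushoutI φ →* (PlanarLE.con φ Q).Quotient :=
    Monoid.PushoutI.lift (PlanarLE.factorHom hconj hφ) ((PlanarLE.factorHom hconj hφ i).comp (φ i))
      fun j => PlanarLE.factorHom_comp hconj hφ j i
  have hF : ∀ j (a : G j), F (Monoid.PushoutI.of j a) =
      ((FreeMonoid.of ⟨j, a⟩ : FreeMonoid (Σ i, G i)) : (PlanarLE.con φ Q).Quotient) :=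
    fun j a => Monoid.PushoutI.lift_of _ _ _ a
  have key : ∀ y ∈ Submonoid.closure
      {y | ∃ j, ∃ p ∈ Q j, ∃ g, y = g⁻¹ * Monoid.PushoutI.of (φ := φ) j p * g},
      ∃ l : FreeMonoid (Σ i, G i), F y = l ∧ PlanarLE φ Q i 1 l.toList := by
    intro y hy
    induction hy using Submonoid.closure_induction with
    | mem y hy =>
      obtain ⟨j, p, hp, g, rfl⟩ := hy
      obtain ⟨l, hl⟩ := Con.mk'_surjective (F g)
      obtain ⟨l', hl'⟩ := Con.mk'_surjective (F g⁻¹)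
      have h : ((l' * l : FreeMonoid (Σ i, G i)) : (PlanarLE.con φ Q).Quotient) =
          ((1 : FreeMonoid (Σ i, G i)) : (PlanarLE.con φ Q).Quotient) := by
        have : F g⁻¹ * F g = 1 := by rw [← map_mul, inv_mul_cancel, map_one]
        rw [← hl, ← hl'] at this
        exact this
      refine ⟨l' * FreeMonoid.of ⟨j, p⟩ * l, ?_, ?_⟩
      · rw [map_mul, map_mul, hF, ← hl, ← hl']
        rfl
      · have h₁ := ((Con.eq _).1 h [] [] i 1).2 (PlanarLE.nil _ _ (by simp))
        have h₂ : PlanarLE φ Q i 1 (l'.toList ++ l.toList) := by simpa using h₁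
        simpa using h₂.insert hp
    | one => exact ⟨1, map_one F, PlanarLE.nil _ _ (by simp)⟩
    | mul y z _ _ hy hz =>
      obtain ⟨l, hl, h⟩ := hy
      obtain ⟨m, hm, h'⟩ := hz
      exact ⟨l * m, by rw [map_mul, hl, hm]; rfl, (h.append hconj h').congr (by simp) (by simp)⟩
  obtain ⟨l, hl, h⟩ := key _ hx
  rw [hF] at hl
  have h₁ : PlanarLE φ Q i 1 [⟨i, x⟩] := by
    simpa using ((Con.eq _).1 hl [] [] i 1).2 (by simpa using h)
  simpa using PlanarLE.inv_mem_of_nil hφ (PlanarLE.of_cons_same hconj hφ h₁)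

end PlanarDerivations

/-- If `P i` is a normal subsemigroup of `G i` for each `i`, with `P i ∩ C = P j ∩ C`
for all `i, j`, then in the amalgam `G = *_C G i`,
`G i ∩ NSS_G(⋃ j, P j) = P i` for every `i`. -/
theorem factor_inter_nss_eq {ι : Type*} {G : ι → Type*} [∀ i, Group (G i)]
    {H : Type*} [Group H] (φ : ∀ i, H →* G i) (hφ : ∀ i, Function.Injective (φ i))
    (P : ∀ i, Set (G i)) (hP : ∀ i, IsNormalSubsemigroup (P i))
    (hPC : ∀ i j (h : H), φ i h ∈ P i ↔ φ j h ∈ P j) (i : ι) (x : G i) :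
    Monoid.PushoutI.of (φ := φ) i x ∈
        nss (Monoid.PushoutI φ) (⋃ j, Monoid.PushoutI.of (φ := φ) j '' P j) ↔
      x ∈ P i := by
  let Q : ∀ j, Submonoid (G j) := fun j =>
    { carrier := {a | a = 1 ∨ a ∈ P j}
      one_mem' := .inl rfl
      mul_mem' := by
        rintro a b (rfl | ha) (rfl | hb)
        · exact .inl (one_mul 1)
        · exact .inr (by simpa using hb)
        · exact .inr (by simpa using ha)
        · exact .inr ((hP j).1 a ha b hb) }
  have hconj : ∀ j, ∀ a ∈ Q j, ∀ g : G j, g⁻¹ * a * g ∈ Q j := by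
    rintro j a (rfl | ha) g
    · exact .inl (by simp)
    · exact .inr ((hP j).2 a ha g)
  have hQφ : ∀ j k h, φ j h ∈ Q j → φ k h ∈ Q k := by
    rintro j k h (hh | hh)
    · rw [map_eq_one_iff _ (hφ j)] at hh
      exact .inl (by rw [hh, map_one])
    · exact .inr ((hPC j k h).1 hh)
  constructor
  · rintro ⟨l, hl, hS, hx⟩
    let M : Submonoid (Monoid.PushoutI φ) := Submonoid.closure
      {y | ∃ j, ∃ p ∈ Q j, ∃ g, y = g⁻¹ * Monoid.PushoutI.of (φ := φ) j p * g}
    have hmem : ∀ q ∈ l, q.2⁻¹ * q.1 * q.2 ∈ M := by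
      intro q hq
      obtain ⟨j, p, hp, hpq⟩ := Set.mem_iUnion.1 (hS q hq)
      exact Submonoid.subset_closure ⟨j, p, .inr hp, q.2, by rw [hpq]⟩
    have hxQ : x ∈ Q i := by
      refine mem_of_of_mem_closure_conjugates hconj hQφ ?_
      rw [← hx]
      refine Submonoid.list_prod_mem _ fun y hy => ?_
      obtain ⟨q, hq, rfl⟩ := List.mem_map.1 hy
      exact hmem q hq
    rcases hxQ with rfl | hxP
    · obtain ⟨q, l, rfl⟩ := List.exists_cons_of_ne_nil hl
      obtain ⟨j, p, hp, hpq⟩ := Set.mem_iUnion.1 (hS q (by simp))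
      rw [map_one, List.map_cons, List.prod_cons, ← hpq] at hx
      have hpinv : p⁻¹ ∈ Q j := by
        refine mem_of_of_mem_closure_conjugates hconj hQφ ?_
        change _ ∈ M
        have hrest : (l.map fun q => q.2⁻¹ * q.1 * q.2).prod ∈ M := by
          refine Submonoid.list_prod_mem _ fun y hy => ?_
          obtain ⟨r, hr, rfl⟩ := List.mem_map.1 hy
          exact hmem r (List.mem_cons_of_mem _ hr)
        have hconj_closure : M ≤ M.comap (MulAut.conj q.2).toMonoidHom := by
          refine Submonoid.closure_le.2 ?_
          rintro _ ⟨k, r, hr, g, rfl⟩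
          exact Submonoid.subset_closure ⟨k, r, hr, g * q.2⁻¹, by simp [mul_assoc]⟩
        have := hconj_closure hrest
        rw [eq_inv_of_mul_eq_one_right hx] at this
        simpa [mul_assoc] using this
      have h1 : (1 : G j) ∈ P j := by
        rcases hpinv with h | h
        · rwa [inv_eq_one.1 h] at hp
        · simpa using (hP j).1 p hp _ h
      simpa using (hPC j i 1).1 (by simpa using h1)
    · exact hxP
  · intro hx
    exact ⟨[(Monoid.PushoutI.of i x, 1)], by simp,
      by simpa using ⟨i, x, hx, rfl⟩, by simp⟩
end

section
/- Let G = *_{i∈I} G_i be an amalgam over C, fix i₀ ∈ I and a subset R ⊆ G_{i₀} \ {1}. Then 1 ∉ NSS_G(R) if and only if there exists a normal subsemigroup P_j of G_j for each j ∈ I with R ⊆ P_{i₀}, 1 ∉ P_{i₀}, and P_j ∩ C = P_{j'} ∩ C for all j, j' ∈ I. -/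
open Monoid Monoid.PushoutI

/-- An abstraction of the syllable length on an amalgamated product. The field
`exists_head` says that left translates of `x` by the factor `G j` have length
`m` or `m + 1`, the smaller value being attained on a coset of the amalgamated subgroup. -/
structure AmalgamLength {ι : Type*} {G : ι → Type*} [∀ i, Group (G i)] {H : Type*} [Group H]
    (φ : ∀ i, H →* G i) where
  /-- The length of an element. -/
  len : PushoutI φ → ℕ
  exists_head : ∀ (x : PushoutI φ) (j : ι), ∃ (h : G j) (m : ℕ), ∀ g : G j,
    (g * h ∈ (φ j).range → len (of j g * x) = m) ∧
      (g * h ∉ (φ j).range → len (of j g * x) = m + 1)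
  eq_of_len_lt : ∀ (x : PushoutI φ) (j k : ι) (a : G j) (b : G k),
    len (of j a * x) < len x → len (of k b * x) < len x → j = k
  exists_len_lt : ∀ x : PushoutI φ, 0 < len x → ∃ (j : ι) (g : G j), len (of j g * x) < len x
  mem_range_base : ∀ x : PushoutI φ, len x = 0 → x ∈ (base φ).range
  len_base : ∀ h : H, len (base φ h) = 0

section Length

open Monoid.PushoutI.NormalWord

variable {ι : Type*} {G : ι → Type*} [∀ i, Group (G i)] {H : Type*} [Group H]
  {φ : ∀ i, H →* G i}

theorem Monoid.CoprodI.Word.length_rcons_fstIdx [∀ i, DecidableEq (G i)] {i : ι}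
    (p : CoprodI.Word.Pair G i) :
    (p.head = 1 ∧ (CoprodI.Word.rcons p).toList.length = p.tail.toList.length ∧
        (CoprodI.Word.rcons p).fstIdx ≠ some i) ∨
      (p.head ≠ 1 ∧ (CoprodI.Word.rcons p).toList.length = p.tail.toList.length + 1 ∧
        (CoprodI.Word.rcons p).fstIdx = some i) := by
  by_cases h : p.head = 1
  · simp [CoprodI.Word.rcons, h, p.fstIdx_ne]
  · right
    simp [CoprodI.Word.rcons, h, CoprodI.Word.cons, CoprodI.Word.fstIdx]

theorem Monoid.PushoutI.NormalWord.length_rcons_fstIdx {d : Transversal φ} [DecidableEq ι]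
    [∀ i, DecidableEq (G i)] {i : ι} (p : NormalWord.Pair d i) :
    (p.head ∈ (φ i).range ∧ (NormalWord.rcons i p).toList.length = p.tail.toList.length ∧
        (NormalWord.rcons i p).fstIdx ≠ some i) ∨
      (p.head ∉ (φ i).range ∧
        (NormalWord.rcons i p).toList.length = p.tail.toList.length + 1 ∧
        (NormalWord.rcons i p).fstIdx = some i) := by
  have key := CoprodI.Word.length_rcons_fstIdx
    { p.toPair with head := ((Subgroup.IsComplement.equiv (d.compl i) p.head).2 : G i) }
  have hiff := Subgroup.IsComplement.coe_equiv_snd_eq_one_iff_mem (g := p.head) (d.compl i)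
    (d.one_mem i)
  simp only [← SetLike.mem_coe, ← hiff]
  simpa only [NormalWord.rcons, CoprodI.Word.equivPair_symm] using key

theorem nonempty_amalgamLength (hφ : ∀ i, Function.Injective (φ i)) :
    Nonempty (AmalgamLength φ) := by
  classical
  obtain ⟨d⟩ := transversal_nonempty φ hφ
  let w : PushoutI φ → NormalWord d := fun x => NormalWord.equiv x
  have hw : ∀ x (j : ι) (g : G j), w (of j g * x) =
      NormalWord.rcons j { NormalWord.equivPair j (w x) with
        head := g * (NormalWord.equivPair j (w x)).head } := by
    intro x j g
    change (of j g * x) • (NormalWord.empty : NormalWord d) = _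
    rw [mul_smul, summand_smul_def]
    rfl
  have hw' : ∀ x (j : ι), w x = NormalWord.rcons j (NormalWord.equivPair j (w x)) :=
    fun x j => ((NormalWord.equivPair j).symm_apply_apply (w x)).symm
  have hlt : ∀ x (j : ι) (g : G j),
      (w (of j g * x)).toList.length < (w x).toList.length → (w x).fstIdx = some j := by
    intro x j g h
    have h1 := NormalWord.length_rcons_fstIdx (NormalWord.equivPair j (w x))
    rw [← hw'] at h1
    have h2 := NormalWord.length_rcons_fstIdx { NormalWord.equivPair j (w x) with
        head := g * (NormalWord.equivPair j (w x)).head }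
    rw [← hw] at h2
    simp only at h2
    rcases h1 with h1 | h1
    · rcases h2 with h2 | h2 <;> omega
    · exact h1.2.2
  refine ⟨⟨fun x => (w x).toList.length, ?_, ?_, ?_, ?_, ?_⟩⟩
  · intro x j
    refine ⟨(NormalWord.equivPair j (w x)).head,
      (NormalWord.equivPair j (w x)).tail.toList.length, fun g => ?_⟩
    rw [hw]
    rcases NormalWord.length_rcons_fstIdx { NormalWord.equivPair j (w x) with
        head := g * (NormalWord.equivPair j (w x)).head } with h | h
    · exact ⟨fun _ => h.2.1, fun h' => absurd h.1 h'⟩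
    · exact ⟨fun h' => absurd h' h.1, fun _ => h.2.1⟩
  · intro x j k a b ha hb
    exact Option.some_injective _ ((hlt x j a ha).symm.trans (hlt x k b hb))
  · intro x hx
    obtain ⟨j, hj⟩ : ∃ j, (w x).fstIdx = some j := by
      cases h : (w x).fstIdx with
      | some j => exact ⟨j, rfl⟩
      | none =>
        simp only [CoprodI.Word.fstIdx, Option.map_eq_none_iff, List.head?_eq_none_iff] at h
        simp [h] at hx
    refine ⟨j, ((NormalWord.equivPair j (w x)).head)⁻¹, ?_⟩
    have h1 := NormalWord.length_rcons_fstIdx (NormalWord.equivPair j (w x))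
    rw [← hw'] at h1
    have h2 := NormalWord.length_rcons_fstIdx { NormalWord.equivPair j (w x) with
        head := (NormalWord.equivPair j (w x)).head⁻¹ * (NormalWord.equivPair j (w x)).head }
    rw [← hw] at h2
    have h3 := (h1.resolve_left fun h => h.2.2 hj).2.1
    have h4 := (h2.resolve_right fun h => h.1 (by simp)).2.1
    rw [h3]
    simp only at h4
    omega
  · intro x hx
    refine ⟨(w x).head, ?_⟩
    have h0 : (w x).prod = x := NormalWord.equiv.symm_apply_apply x
    have h1 : (w x).toWord = CoprodI.Word.empty :=
      CoprodI.Word.ext (List.eq_nil_of_length_eq_zero hx)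
    conv_rhs => rw [← h0]
    simp [NormalWord.prod, h1]
  · intro h
    change (base φ h • (NormalWord.empty : NormalWord d)).toList.length = 0
    rw [base_smul_def]
    rfl

end Length

section Order

variable {ι : Type*} {G : ι → Type*} [∀ i, Group (G i)] {H : Type*} [Group H]
  {φ : ∀ i, H →* G i}

namespace AmalgamLength

variable (L : AmalgamLength φ)

theorem len_mul_le (x : PushoutI φ) (j : ι) (g : G j) : L.len (of j g * x) ≤ L.len x + 1 := by
  obtain ⟨h, m, hm⟩ := L.exists_head x j
  have h1 := hm g
  have h2 := hm 1
  simp only [map_one, one_mul] at h2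
  by_cases hg : g * h ∈ (φ j).range <;> by_cases hh : h ∈ (φ j).range <;> (simp_all; try omega)

theorem len_base_mul (x : PushoutI φ) (j : ι) (c : H) :
    L.len (of j (φ j c) * x) = L.len x := by
  obtain ⟨h, m, hm⟩ := L.exists_head x j
  have h1 := hm (φ j c)
  have h2 := hm 1
  simp only [map_one, one_mul] at h2
  rw [Subgroup.mul_mem_cancel_left _ (MonoidHom.mem_range.2 ⟨c, rfl⟩)] at h1
  by_cases hh : h ∈ (φ j).range <;> simp_all

theorem len_mul_le_of_notMem_range {n : ℕ} {u : PushoutI φ} {j : ι} {g : G j}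
    (hg : g ∉ (φ j).range) (hu : L.len u ≤ n) (hgu : L.len (of j g * u) ≤ n) (a : G j) :
    L.len (of j a * u) ≤ n := by
  obtain ⟨h, m, hm⟩ := L.exists_head u j
  have h1 := hm g
  have h2 := hm 1
  have h3 := hm a
  simp only [map_one, one_mul] at h2
  by_cases hh : h ∈ (φ j).range
  · rw [Subgroup.mul_mem_cancel_right _ hh] at h1
    have := h1.2 hg
    by_cases ha : a * h ∈ (φ j).range
    · have := h3.1 ha
      omega
    · have := h3.2 ha
      omega
  · have := h2.2 hh
    by_cases ha : a * h ∈ (φ j).range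
    · have := h3.1 ha
      omega
    · have := h3.2 ha
      omega

/-- The element `x` lies in a translate under `G j` of the ball of radius `n`. -/
def Near (n : ℕ) (j : ι) (x : PushoutI φ) : Prop :=
  ∃ a : G j, L.len (of j a * x) ≤ n

variable {L}

theorem Near.of_len_le {n : ℕ} {j : ι} {x : PushoutI φ} (h : L.len x ≤ n) : L.Near n j x :=
  ⟨1, by simpa using h⟩

theorem Near.mul {n : ℕ} {j : ι} {x : PushoutI φ} (h : L.Near n j x) (g : G j) :
    L.Near n j (of j g * x) := by
  obtain ⟨a, ha⟩ := h
  exact ⟨a * g⁻¹, by simpa [mul_assoc] using ha⟩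

theorem Near.eq {n : ℕ} {j k : ι} {x : PushoutI φ} (hj : L.Near n j x) (hk : L.Near n k x)
    (hx : n < L.len x) : j = k := by
  obtain ⟨a, ha⟩ := hj
  obtain ⟨b, hb⟩ := hk
  exact L.eq_of_len_lt x j k a b (by omega) (by omega)

theorem mul_inv_mem_range {n : ℕ} {j : ι} {x : PushoutI φ} {a b : G j}
    (ha : L.len (of j a * x) ≤ n) (hb : L.len (of j b * x) ≤ n) (hx : n < L.len x) :
    a * b⁻¹ ∈ (φ j).range := by
  obtain ⟨h, m, hm⟩ := L.exists_head x j
  have h1 := hm a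
  have h2 := hm b
  have h3 := hm 1
  simp only [map_one, one_mul] at h3
  have hm' : m = n := by
    by_cases a * h ∈ (φ j).range <;> by_cases h ∈ (φ j).range <;> simp_all <;> omega
  have ha' : a * h ∈ (φ j).range := by
    by_contra hc
    have := h1.2 hc
    omega
  have hb' : b * h ∈ (φ j).range := by
    by_contra hc
    have := h2.2 hc
    omega
  simpa [mul_assoc] using mul_mem ha' (inv_mem hb')

theorem mem_range_or_near {n : ℕ} {j : ι} {x : PushoutI φ} {g : G j}
    (hx : L.len x ≤ n + 1) (hgx : L.len (of j g * x) ≤ n + 1) :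
    g ∈ (φ j).range ∨ L.Near n j x := by
  obtain ⟨h, m, hm⟩ := L.exists_head x j
  have h1 := hm g
  have h2 := hm 1
  have h3 := hm h⁻¹
  simp only [map_one, one_mul, inv_mul_cancel, one_mem, forall_const] at h2 h3
  by_cases hmn : m ≤ n
  · exact .inr ⟨h⁻¹, by rw [h3.1]; exact hmn⟩
  · left
    by_cases hh : h ∈ (φ j).range
    · rw [Subgroup.mul_mem_cancel_right _ hh] at h1
      by_contra hg
      have := h1.2 hg
      omega
    · have := h2.2 hh
      omega

theorem exists_near [Nonempty ι] {n : ℕ} {x : PushoutI φ} (hx : L.len x ≤ n + 1) :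
    ∃ j, L.Near n j x := by
  rcases Nat.eq_zero_or_pos (L.len x) with h | h
  · exact ⟨Classical.arbitrary ι, .of_len_le (by omega)⟩
  · obtain ⟨j, g, hg⟩ := L.exists_len_lt x h
    exact ⟨j, g, by omega⟩

end AmalgamLength

/-- A family of normal submonoids of the factors with a common trace on the
amalgamated subgroup. -/
structure NormalSubmonoidFamily (φ : ∀ i, H →* G i) where
  /-- The submonoid of each factor. -/
  carrier : ∀ j, Submonoid (G j)
  conj_mem : ∀ j, ∀ x ∈ carrier j, ∀ g : G j, g * x * g⁻¹ ∈ carrier j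
  compat : ∀ j k h, φ j h ∈ carrier j → φ k h ∈ carrier k

namespace NormalSubmonoidFamily

variable (Q : NormalSubmonoidFamily φ)

/-- The relation obtained by transporting the product of the order on `G j` and a
relation `R` on the amalgam along the multiplication map. -/
def Step (R : PushoutI φ → PushoutI φ → Prop) (j : ι) (x y : PushoutI φ) : Prop :=
  ∃ (g k : G j) (u v : PushoutI φ), k ∈ Q.carrier j ∧ R u v ∧
    x = of j g * u ∧ y = of j (g * k) * v

/-- The preorders on the balls of the amalgam generated by the orders on the factors. -/
def Rel : ℕ → PushoutI φ → PushoutI φ → Prop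
  | 0, x, y => x ∈ (base φ).range ∧ ∃ h, (∀ j, φ j h ∈ Q.carrier j) ∧ y = x * base φ h
  | n + 1, x, y => Relation.TransGen (fun a b => ∃ j, Q.Step (Rel n) j a b) x y

/-- A transitive relation on the ball of radius `n` which is compatible with the
partial actions of the factors. -/
structure IsCompatible (L : AmalgamLength φ) (n : ℕ) (R : PushoutI φ → PushoutI φ → Prop) :
    Prop where
  trans : ∀ {x y z}, R x y → R y z → R x z
  len_left : ∀ {x y}, R x y → L.len x ≤ n
  len_right : ∀ {x y}, R x y → L.len y ≤ n
  rel_mul : ∀ {j} {p : G j} {u}, p ∈ Q.carrier j → L.len u ≤ n → L.len (of j p * u) ≤ n →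
    R u (of j p * u)
  mul_rel : ∀ {j} {g : G j} {u v}, R u v → L.len (of j g * u) ≤ n →
    L.len (of j g * v) ≤ n → R (of j g * u) (of j g * v)

variable {Q}
variable {L : AmalgamLength φ} {n : ℕ} {R : PushoutI φ → PushoutI φ → Prop}

theorem Step.mul {j : ι} {x y : PushoutI φ} (h : Q.Step R j x y) (a : G j) :
    Q.Step R j (of j a * x) (of j a * y) := by
  obtain ⟨g, k, u, v, hk, huv, rfl, rfl⟩ := h
  exact ⟨a * g, k, u, v, hk, huv, by simp [mul_assoc], by simp [mul_assoc]⟩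

theorem Step.of_rel {x y : PushoutI φ} (h : R x y) (j : ι) : Q.Step R j x y :=
  ⟨1, 1, x, y, one_mem _, h, by simp, by simp⟩

namespace IsCompatible

variable (hR : Q.IsCompatible L n R)

include hR

theorem refl_rel [Nonempty ι] {x : PushoutI φ} (hx : L.len x ≤ n) : R x x := by
  have j := Classical.arbitrary ι
  simpa using hR.rel_mul (j := j) (p := 1) (u := x) (one_mem _) hx (by simpa using hx)

theorem near_left {j : ι} {x y : PushoutI φ} (h : Q.Step R j x y) : L.Near n j x := by
  obtain ⟨g, k, u, v, hk, huv, rfl, rfl⟩ := h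
  exact (AmalgamLength.Near.of_len_le (hR.len_left huv)).mul g

theorem near_right {j : ι} {x y : PushoutI φ} (h : Q.Step R j x y) : L.Near n j y := by
  obtain ⟨g, k, u, v, hk, huv, rfl, rfl⟩ := h
  exact (AmalgamLength.Near.of_len_le (hR.len_right huv)).mul (g * k)

theorem step_mul [Nonempty ι] {j : ι} {x : PushoutI φ} (hx : L.Near n j x) {p : G j}
    (hp : p ∈ Q.carrier j) : Q.Step R j x (of j p * x) := by
  obtain ⟨a, ha⟩ := hx
  exact ⟨a⁻¹, a * p * a⁻¹, of j a * x, of j a * x, Q.conj_mem j p hp a, hR.refl_rel ha,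
    by simp, by simp [mul_assoc]⟩

theorem rel_of_step {j : ι} {x y : PushoutI φ} (h : Q.Step R j x y) (hx : L.len x ≤ n)
    (hy : L.len y ≤ n) : R x y := by
  obtain ⟨g, k, u, v, hk, huv, rfl, rfl⟩ := h
  have hu := hR.len_left huv
  have hv := hR.len_right huv
  have hk' : of j (g * k) = of j (φ := φ) (g * k * g⁻¹) * of j g := by simp
  have hgk := Q.conj_mem j k hk g
  have key : L.len (of j (g * k) * u) ≤ n ∨ L.len (of j g * v) ≤ n := by
    by_cases hr : g * k ∈ (φ j).range
    · obtain ⟨c, hc⟩ := hr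
      left
      rw [← hc, L.len_base_mul]
      exact hu
    · exact .inr (L.len_mul_le_of_notMem_range hr hv hy g)
  rcases key with h | h
  · refine hR.trans ?_ (hR.mul_rel huv h hy)
    rw [hk', mul_assoc] at h ⊢
    exact hR.rel_mul hgk hx h
  · refine hR.trans (hR.mul_rel huv hx h) ?_
    rw [hk', mul_assoc] at hy ⊢
    exact hR.rel_mul hgk h hy

theorem step_trans {j k : ι} {x y z : PushoutI φ} (h₁ : Q.Step R j x y) (h₂ : Q.Step R k y z)
    (hy : n < L.len y) : j = k ∧ Q.Step R k x z := by
  obtain rfl := (hR.near_right h₁).eq (hR.near_left h₂) hy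
  refine ⟨rfl, ?_⟩
  obtain ⟨g, a, u, v, ha, huv, rfl, rfl⟩ := h₁
  obtain ⟨g', b, u', v', hb, huv', h, rfl⟩ := h₂
  obtain ⟨c, hc⟩ := AmalgamLength.mul_inv_mem_range (L := L) (a := (g * a)⁻¹) (b := g'⁻¹)
    (by simpa [mul_assoc] using hR.len_right huv) (by rw [h]; simpa using hR.len_left huv') hy
  have hv : v = of j (φ j c) * u' := by
    rw [hc, inv_inv, map_mul, mul_assoc, ← h]
    simp [mul_assoc]
  have hc' : g' = g * a * φ j c := by
    rw [hc]
    group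
  refine ⟨g, a * (φ j c * b * (φ j c)⁻¹), u, of j (φ j c) * v',
    mul_mem ha (Q.conj_mem j b hb _), hR.trans huv ?_, rfl, ?_⟩
  · rw [hv]
    refine hR.mul_rel huv' ?_ ?_
    · rw [L.len_base_mul]
      exact hR.len_left huv'
    · rw [L.len_base_mul]
      exact hR.len_right huv'
  · rw [hc', ← mul_assoc, ← map_mul]
    congr 2
    group

theorem rel_of_transGen {x y : PushoutI φ}
    (h : Relation.TransGen (fun a b => ∃ j, Q.Step R j a b) x y)
    (hx : L.len x ≤ n) (hy : L.len y ≤ n) : R x y := by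
  obtain ⟨i, -⟩ : ∃ i : ι, True := by
    obtain ⟨_, ⟨j, _⟩, _⟩ := Relation.TransGen.head'_iff.1 h
    exact ⟨j, trivial⟩
  have : Nonempty ι := ⟨i⟩
  have key : (L.len y ≤ n ∧ R x y) ∨ (n < L.len y ∧ ∃ z j, R x z ∧ Q.Step R j z y) := by
    replace h := h.to_reflTransGen
    clear hy
    induction h with
    | refl => exact .inl ⟨hx, hR.refl_rel hx⟩
    | @tail y y' _ hs ih =>
      obtain ⟨j, hj⟩ := hs
      rcases ih with ⟨hy, hxy⟩ | ⟨hy, z, k, hxz, hzy⟩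
      · rcases le_or_gt (L.len y') n with hy' | hy'
        · exact .inl ⟨hy', hR.trans hxy (hR.rel_of_step hj hy hy')⟩
        · exact .inr ⟨hy', y, j, hxy, hj⟩
      · have hzy' := (hR.step_trans hzy hj hy).2
        rcases le_or_gt (L.len y') n with hy' | hy'
        · exact .inl ⟨hy', hR.trans hxz (hR.rel_of_step hzy' (hR.len_right hxz) hy')⟩
        · exact .inr ⟨hy', z, j, hxz, hzy'⟩
  rcases key with h | h
  · exact h.2
  · omega

theorem reflTransGen_step {j : ι} {x y : PushoutI φ}
    (h : Relation.ReflTransGen (fun a b => ∃ j, Q.Step R j a b) x y)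
    (hx : L.Near n j x) (hy : L.Near n j y) : Relation.ReflTransGen (Q.Step R j) x y := by
  have key : (L.Near n j y ∧ Relation.ReflTransGen (Q.Step R j) x y) ∨
      (¬ L.Near n j y ∧ ∃ z k, L.len z ≤ n ∧ Relation.ReflTransGen (Q.Step R j) x z ∧
        Q.Step R k z y) := by
    clear hy
    induction h with
    | refl => exact .inl ⟨hx, .refl⟩
    | @tail y y' _ hs ih =>
      obtain ⟨k, hk⟩ := hs
      have hyk := hR.near_left hk
      have hyk' := hR.near_right hk
      rcases ih with ⟨hy, hxy⟩ | ⟨hy, z, k', hz, hxz, hzy⟩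
      · by_cases hjk : j = k
        · subst hjk
          exact .inl ⟨hyk', hxy.tail hk⟩
        · have hyn : L.len y ≤ n := by
            by_contra hc
            exact hjk (hy.eq hyk (by omega))
          rcases le_or_gt (L.len y') n with hy' | hy'
          · exact .inl ⟨.of_len_le hy', hxy.tail (.of_rel (hR.rel_of_step hk hyn hy') j)⟩
          · exact .inr ⟨fun hc => hjk (hc.eq hyk' hy'), y, k, hyn, hxy, hk⟩
      · have hyn : n < L.len y := by
          by_contra hc
          exact hy (.of_len_le (by omega))
        obtain ⟨rfl, hzy'⟩ := hR.step_trans hzy hk hyn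
        rcases le_or_gt (L.len y') n with hy' | hy'
        · exact .inl ⟨.of_len_le hy', hxz.tail (.of_rel (hR.rel_of_step hzy' hz hy') j)⟩
        · refine .inr ⟨fun hc => ?_, z, _, hz, hxz, hzy'⟩
          obtain rfl := hc.eq hyk' hy'
          exact hy (hR.near_right hzy)
  rcases key with h | h
  · exact h.2
  · exact absurd hy h.1

theorem transGen [Nonempty ι] : Q.IsCompatible L (n + 1)
    (Relation.TransGen fun a b => ∃ j, Q.Step R j a b) where
  trans := Relation.TransGen.trans
  len_left h := by
    obtain ⟨_, ⟨j, g, k, u, v, -, huv, rfl, -⟩, -⟩ := Relation.TransGen.head'_iff.1 h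
    exact (L.len_mul_le u j g).trans (Nat.succ_le_succ (hR.len_left huv))
  len_right h := by
    obtain ⟨_, -, ⟨j, g, k, u, v, -, huv, -, rfl⟩⟩ := Relation.TransGen.tail'_iff.1 h
    exact (L.len_mul_le v j (g * k)).trans (Nat.succ_le_succ (hR.len_right huv))
  rel_mul {j p u} hp hu hpu := by
    refine .single ?_
    rcases AmalgamLength.mem_range_or_near hu hpu with ⟨c, rfl⟩ | h
    · obtain ⟨k, hk⟩ := AmalgamLength.exists_near hu
      refine ⟨k, ?_⟩
      rw [of_apply_eq_base, ← of_apply_eq_base φ k]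
      exact hR.step_mul hk (Q.compat j k c hp)
    · exact ⟨j, hR.step_mul h hp⟩
  mul_rel {j g u v} h hgu hgv := by
    have hu : L.len u ≤ n + 1 := by
      obtain ⟨_, ⟨j, g, k, u, v, -, huv, rfl, -⟩, -⟩ := Relation.TransGen.head'_iff.1 h
      exact (L.len_mul_le u j g).trans (Nat.succ_le_succ (hR.len_left huv))
    have hv : L.len v ≤ n + 1 := by
      obtain ⟨_, -, ⟨j, g, k, u, v, -, huv, -, rfl⟩⟩ := Relation.TransGen.tail'_iff.1 h
      exact (L.len_mul_le v j (g * k)).trans (Nat.succ_le_succ (hR.len_right huv))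
    by_cases hg : g ∈ (φ j).range
    · obtain ⟨c, rfl⟩ := hg
      refine h.lift (of j (φ j c) * ·) fun a b ⟨k, hab⟩ => ⟨k, ?_⟩
      simp only [of_apply_eq_base]
      rw [← of_apply_eq_base φ k]
      exact hab.mul _
    · have hu' := (AmalgamLength.mem_range_or_near hu hgu).resolve_left hg
      have hv' := (AmalgamLength.mem_range_or_near hv hgv).resolve_left hg
      have h' := hR.reflTransGen_step h.to_reflTransGen hu' hv'
      refine Relation.TransGen.tail' (b := of j g * v)
        (h'.lift (of j g * ·) fun a b hab => ⟨j, hab.mul g⟩) ⟨j, ?_⟩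
      simpa using hR.step_mul (hv'.mul g) (one_mem (Q.carrier j))

end IsCompatible

theorem isCompatible_rel [Nonempty ι] (Q : NormalSubmonoidFamily φ) (L : AmalgamLength φ)
    (hφ : ∀ i, Function.Injective (φ i)) (n : ℕ) : Q.IsCompatible L n (Q.Rel n) := by
  induction n with
  | succ n ih => exact ih.transGen
  | zero =>
    have hlen : ∀ {x : PushoutI φ}, x ∈ (base φ).range → L.len x ≤ 0 := by
      rintro _ ⟨h, rfl⟩
      exact (L.len_base h).le
    refine ⟨?_, fun h => hlen h.1, ?_, ?_, ?_⟩
    · rintro x y z ⟨hx, q, hq, rfl⟩ ⟨-, q', hq', rfl⟩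
      exact ⟨hx, q * q', fun j => by rw [map_mul]; exact mul_mem (hq j) (hq' j),
        by simp [mul_assoc]⟩
    · rintro x y ⟨hx, q, hq, rfl⟩
      exact hlen (mul_mem hx ⟨q, rfl⟩)
    · intro j p u hp hu hpu
      obtain ⟨c, rfl⟩ := L.mem_range_base u (by omega)
      obtain ⟨d, hd⟩ := L.mem_range_base _ (Nat.le_zero.1 hpu)
      have hp' : p = φ j (d * c⁻¹) := by
        apply of_injective hφ j
        rw [of_apply_eq_base, map_mul, hd]
        simp
      refine ⟨⟨c, rfl⟩, c⁻¹ * d, fun k => Q.compat j k _ ?_, ?_⟩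
      · have := Q.conj_mem j p hp (φ j c⁻¹)
        rw [hp'] at this
        simpa [mul_assoc] using this
      · rw [← hd]
        simp
    · rintro j g u v ⟨hu, q, hq, rfl⟩ hgu -
      exact ⟨L.mem_range_base _ (Nat.le_zero.1 hgu), q, hq, (mul_assoc _ _ _).symm⟩

theorem mem_of_rel_one [Nonempty ι] (Q : NormalSubmonoidFamily φ)
    (hφ : ∀ i, Function.Injective (φ i)) {n : ℕ} {j : ι} {p : G j}
    (h : Q.Rel n (of j p) 1) : p⁻¹ ∈ Q.carrier j := by
  obtain ⟨L⟩ := nonempty_amalgamLength hφ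
  have h1 : L.len (1 : PushoutI φ) ≤ 0 := by simpa using (L.len_base 1).le
  have hp : L.len (of (φ := φ) j p) ≤ 1 := by
    have := L.len_mul_le 1 j p
    rw [mul_one] at this
    omega
  have hdown : ∀ n, Q.Rel (n + 1) (of j p) 1 → Q.Rel 1 (of j p) 1 := by
    intro n
    induction n with
    | zero => exact id
    | succ n ih =>
      exact fun h => ih ((isCompatible_rel Q L hφ (n + 1)).rel_of_transGen h (by omega)
        (by omega))
  have hup : Q.Rel (n + 1) (of j p) 1 := .single ⟨j, .of_rel h j⟩
  have hR := isCompatible_rel Q L hφ 0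
  have hch := hR.reflTransGen_step (j := j) (hdown n hup).to_reflTransGen
    ⟨p⁻¹, by simpa using h1⟩ (.of_len_le h1)
  have key : ∀ y, Relation.ReflTransGen (Q.Step (Q.Rel 0) j) (of j p) y →
      ∃ k ∈ Q.carrier j, y = of j (p * k) := by
    intro y hy
    induction hy with
    | refl => exact ⟨1, one_mem _, by simp⟩
    | tail _ hs ih =>
      obtain ⟨k, hk, rfl⟩ := ih
      obtain ⟨g, a, u, v, ha, ⟨⟨c, rfl⟩, q, hq, rfl⟩, hx, rfl⟩ := hs
      refine ⟨k * ((φ j c)⁻¹ * a * φ j c * φ j q),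
        mul_mem hk (mul_mem ?_ (hq j)), ?_⟩
      · simpa using Q.conj_mem j a ha (φ j c)⁻¹
      · rw [← of_apply_eq_base φ j, ← map_mul] at hx
        have hx' := of_injective hφ j hx
        rw [← mul_assoc p, hx', ← of_apply_eq_base φ j, ← of_apply_eq_base φ j, ← map_mul,
          ← map_mul]
        congr 1
        group
  obtain ⟨k, hk, h⟩ := key 1 hch
  have : p * k = 1 := of_injective hφ j (by rw [← h, map_one])
  rwa [inv_eq_of_mul_eq_one_right this]

/-- The preorder on the amalgam generated by the orders on the factors. -/
def LE (Q : NormalSubmonoidFamily φ) (x y : PushoutI φ) : Prop :=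
  ∃ n, Q.Rel n x y

theorem Rel.mono [Nonempty ι] {m n : ℕ} (hmn : m ≤ n) {x y : PushoutI φ} (h : Q.Rel m x y) :
    Q.Rel n x y := by
  induction hmn with
  | refl => exact h
  | step _ ih => exact .single ⟨Classical.arbitrary ι, .of_rel ih _⟩

theorem LE.trans [Nonempty ι] (hφ : ∀ i, Function.Injective (φ i)) {x y z : PushoutI φ}
    (hxy : Q.LE x y) (hyz : Q.LE y z) : Q.LE x z := by
  obtain ⟨L⟩ := nonempty_amalgamLength hφ
  obtain ⟨m, hm⟩ := hxy
  obtain ⟨n, hn⟩ := hyz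
  exact ⟨max m n, (isCompatible_rel Q L hφ _).trans (hm.mono (le_max_left m n))
    (hn.mono (le_max_right m n))⟩

theorem LE.mul_left [Nonempty ι] (hφ : ∀ i, Function.Injective (φ i)) {x y : PushoutI φ}
    (hxy : Q.LE x y) (g : PushoutI φ) : Q.LE (g * x) (g * y) := by
  obtain ⟨L⟩ := nonempty_amalgamLength hφ
  have hof : ∀ (j : ι) (a : G j) (x y : PushoutI φ), Q.LE x y →
      Q.LE (of j a * x) (of j a * y) := by
    rintro j a x y ⟨n, hn⟩
    have hR := isCompatible_rel Q L hφ n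
    have hx := hR.len_left hn
    have hy := hR.len_right hn
    exact ⟨n + 1, (isCompatible_rel Q L hφ (n + 1)).mul_rel (hn.mono n.le_succ)
      ((L.len_mul_le x j a).trans (by omega)) ((L.len_mul_le y j a).trans (by omega))⟩
  induction g using PushoutI.induction_on generalizing x y with
  | of j a => exact hof j a x y hxy
  | base h =>
    rw [← of_apply_eq_base φ (Classical.arbitrary ι)]
    exact hof _ _ x y hxy
  | mul a b iha ihb =>
    rw [mul_assoc, mul_assoc]
    exact iha (ihb hxy)

theorem le_mul [Nonempty ι] (hφ : ∀ i, Function.Injective (φ i)) {j : ι} {p : G j}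
    (hp : p ∈ Q.carrier j) (x : PushoutI φ) : Q.LE x (of j p * x) := by
  obtain ⟨L⟩ := nonempty_amalgamLength hφ
  exact ⟨L.len x + 1, (isCompatible_rel Q L hφ _).rel_mul hp (by omega) (L.len_mul_le x j p)⟩

theorem le_prod_mul [Nonempty ι] (hφ : ∀ i, Function.Injective (φ i)) {j : ι}
    {l : List (PushoutI φ × PushoutI φ)} (hl : ∀ q ∈ l, q.1 ∈ of j '' (Q.carrier j : Set (G j)))
    (x : PushoutI φ) : Q.LE x ((l.map fun q => q.2⁻¹ * q.1 * q.2).prod * x) := by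
  induction l with
  | nil => simpa using le_mul hφ (one_mem (Q.carrier j)) x
  | cons q l ih =>
    refine (ih fun r hr => hl r (List.mem_cons_of_mem _ hr)).trans hφ ?_
    obtain ⟨p, hp, hpq⟩ := hl q List.mem_cons_self
    have := (le_mul hφ hp (q.2 * ((l.map fun q => q.2⁻¹ * q.1 * q.2).prod * x))).mul_left hφ
      q.2⁻¹
    simpa [mul_assoc, ← hpq] using this

end NormalSubmonoidFamily

end Order

theorem isNormalSubsemigroup_nss (G : Type*) [Group G] (S : Set G) :
    IsNormalSubsemigroup (nss G S) := by
  constructor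
  · rintro _ ⟨l, hl, hS, rfl⟩ _ ⟨l', -, hS', rfl⟩
    refine ⟨l ++ l', by simp [hl], fun p hp => ?_, by simp⟩
    exact (List.mem_append.1 hp).elim (hS p) (hS' p)
  · rintro _ ⟨l, hl, hS, rfl⟩ g
    refine ⟨l.map fun p => (p.1, p.2 * g), by simpa using hl, ?_, ?_⟩
    · intro p hp
      obtain ⟨q, hq, rfl⟩ := List.mem_map.1 hp
      exact hS q hq
    · clear hl hS
      induction l with
      | nil => simp
      | cons q l ih =>
        rw [List.map_cons, List.map_cons, List.prod_cons, ih, List.map_cons, List.prod_cons]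
        group

theorem subset_nss (G : Type*) [Group G] (S : Set G) : S ⊆ nss G S :=
  fun x hx => ⟨[(x, 1)], by simp, by simpa using hx, by simp⟩

/-- For `R ⊆ G i₀ \ {1}` in an amalgam `G = *_C G i`: `1 ∉ NSS_G(R)` iff there are
normal subsemigroups `P j ⊆ G j` with `R ⊆ P i₀`, `1 ∉ P i₀`, and
`P j ∩ C = P j' ∩ C` for all `j, j'`. -/
theorem one_notMem_nss_iff {ι : Type*} {G : ι → Type*} [∀ i, Group (G i)]
    {H : Type*} [Group H] (φ : ∀ i, H →* G i) (hφ : ∀ i, Function.Injective (φ i))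
    (i₀ : ι) (R : Set (G i₀)) (hR : (1 : G i₀) ∉ R) :
    (1 : Monoid.PushoutI φ) ∉
        nss (Monoid.PushoutI φ) (Monoid.PushoutI.of (φ := φ) i₀ '' R) ↔
      ∃ P : ∀ j, Set (G j), (∀ j, IsNormalSubsemigroup (P j)) ∧
        R ⊆ P i₀ ∧ (1 : G i₀) ∉ P i₀ ∧
        ∀ j j' (h : H), φ j h ∈ P j ↔ φ j' h ∈ P j' := by
  have : Nonempty ι := ⟨i₀⟩
  constructor
  · intro h
    have hN := isNormalSubsemigroup_nss (PushoutI φ) (of (φ := φ) i₀ '' R)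
    refine ⟨fun j => of (φ := φ) j ⁻¹' nss (PushoutI φ) (of (φ := φ) i₀ '' R), ?_, ?_, ?_, ?_⟩
    · refine fun j => ⟨fun x hx y hy => ?_, fun x hx g => ?_⟩
      · simpa using hN.1 _ hx _ hy
      · simpa using hN.2 _ hx (of j g)
    · exact fun x hx => subset_nss _ _ ⟨x, hx, rfl⟩
    · simpa using h
    · intro j j' c
      simp only [Set.mem_preimage, of_apply_eq_base]
  · rintro ⟨P, hP, hRP, h1, hc⟩ ⟨l, hl, hlR, hprod⟩
    let Q : NormalSubmonoidFamily φ :=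
      { carrier := fun j =>
          { carrier := insert 1 (P j)
            one_mem' := Set.mem_insert _ _
            mul_mem' := by
              rintro a b (rfl | ha) (rfl | hb)
              · simp
              · simpa using .inr hb
              · simpa using .inr ha
              · exact .inr ((hP j).1 a ha b hb) }
        conj_mem := by
          rintro j x (rfl | hx) g
          · simp
          · exact .inr (by simpa using (hP j).2 x hx g⁻¹)
        compat := by
          rintro j k h (h' | h')
          · rw [map_eq_one_iff _ (hφ j)] at h'
            subst h'
            simp
          · exact .inr ((hc j k h).1 h') }
    obtain _ | ⟨q, l⟩ := l
    · exact hl rfl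
    obtain ⟨p, hp, hpq⟩ := hlR q List.mem_cons_self
    have hle := NormalSubmonoidFamily.le_prod_mul (Q := Q) hφ (j := i₀) (l := l)
      (fun r hr => Set.image_mono (hRP.trans (Set.subset_insert _ _))
        (hlR r (List.mem_cons_of_mem _ hr))) q.2⁻¹
    rw [List.map_cons, List.prod_cons, ← hpq] at hprod
    have hle' := hle.mul_left hφ (of i₀ p * q.2)
    have hprod' : of i₀ p * q.2 * ((l.map fun q => q.2⁻¹ * q.1 * q.2).prod * q.2⁻¹) = 1 := by
      simpa [mul_assoc] using congrArg (fun x => q.2 * x * q.2⁻¹) hprod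
    rw [hprod', mul_inv_cancel_right] at hle'
    obtain ⟨n, hn⟩ := hle'
    rcases NormalSubmonoidFamily.mem_of_rel_one Q hφ hn with h | h
    · rw [inv_eq_one] at h
      exact hR (h ▸ hp)
    · exact h1 (by simpa using (hP i₀).1 _ (hRP hp) _ h)
end

section
/- Let G = *_C G_i (i ∈ I) be an amalgamated free product. Suppose no element of ∪_{i∈I} G_i is a generalized torsion element of G. Then for each i ∈ I there is a family F_i of normal subsemigroups of G_i satisfying: (1) G_i \ {1} = ∪_{P ∈ F_i} P for every i; (2) for all i, j ∈ I and each P ∈ F_i there is Q ∈ F_j with P ∩ C = Q ∩ C. Conversely, if such families exist, then no element of ∪_{i∈I} G_i is generalized torsion in G. -/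
/-- `g` is a generalized torsion element: `g ≠ 1` and some nonempty finite product of
conjugates of `g` equals `1`. -/
def IsGenTorsion {G : Type*} [Group G] (g : G) : Prop :=
  g ≠ 1 ∧ ∃ l : List G, l ≠ [] ∧ (l.map fun h => h⁻¹ * g * h).prod = 1

namespace AmalgamOrder

variable {ι Γ : Type*} [Group Γ]

/-- A compatible family of normal submonoids `M j` of the subgroups `A j`: they agree on the
common subgroup `B`. -/
structure CompatibleCones (A : ι → Subgroup Γ) (B : Subgroup Γ) (M : ι → Set Γ) : Prop where
  le : ∀ j, B ≤ A j
  one_mem : ∀ j, 1 ∈ M j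
  mul_mem : ∀ j, ∀ x ∈ M j, ∀ y ∈ M j, x * y ∈ M j
  conj_mem : ∀ j, ∀ x ∈ M j, ∀ a ∈ A j, a⁻¹ * x * a ∈ M j
  sub : ∀ j, M j ⊆ A j
  agree : ∀ j k, ∀ x ∈ M j, x ∈ B → x ∈ M k

theorem CompatibleCones.conj_mem' {A : ι → Subgroup Γ} {B : Subgroup Γ} {M : ι → Set Γ}
    (hM : CompatibleCones A B M) {j : ι} {x a : Γ} (hx : x ∈ M j) (ha : a ∈ A j) :
    a * x * a⁻¹ ∈ M j := by
  simpa using hM.conj_mem j x hx a⁻¹ (inv_mem ha)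

/-- A preorder `R` on a subset `S` of `Γ` that is compatible with left multiplication by
elements of the factors `A j`, as far as such multiplication stays inside `S`. -/
structure IsStage (A : ι → Subgroup Γ) (B : Subgroup Γ) (M : ι → Set Γ)
    (S : Set Γ) (T : ι → Set Γ) (R : Γ → Γ → Prop) : Prop where
  T_sub : ∀ j, T j ⊆ S
  smul_T : ∀ j, ∀ a ∈ A j, ∀ x ∈ T j, a * x ∈ T j
  smul_S : ∀ b ∈ B, ∀ x ∈ S, b * x ∈ S
  mem_of : ∀ j, ∀ x ∈ S, x ∉ T j → ∀ a ∈ A j, a * x ∈ S → a ∈ B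
  refl : ∀ x ∈ S, R x x
  left_mem : ∀ x y, R x y → x ∈ S
  right_mem : ∀ x y, R x y → y ∈ S
  trans : ∀ x y z, R x y → R y z → R x z
  mul_left : ∀ j, ∀ a ∈ A j, ∀ x y, R x y → a * x ∈ S → a * y ∈ S → R (a * x) (a * y)
  le_mul : ∀ j, ∀ m ∈ M j, ∀ x ∈ S, m * x ∈ S → R x (m * x)

/-- The relation on `A j * S` induced by a relation `R` on `S`. -/
def InducedRel (A : ι → Subgroup Γ) (M : ι → Set Γ) (R : Γ → Γ → Prop) (j : ι) (x y : Γ) : Prop :=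
  ∃ a ∈ A j, ∃ m ∈ M j, R (a * x) (m⁻¹ * (a * y))

/-- The preorder on `A j * S` generated by `InducedRel`. -/
def FactorRel (A : ι → Subgroup Γ) (M : ι → Set Γ) (T : ι → Set Γ) (R : Γ → Γ → Prop) (j : ι)
    (x y : Γ) : Prop :=
  InducedRel A M R j x y ∨ ∃ t ∈ T j, InducedRel A M R j x t ∧ InducedRel A M R j t y

/-- The union over `j` of the preorders `FactorRel`, amalgamated over `S`. -/
def NextRel (A : ι → Subgroup Γ) (M : ι → Set Γ) (S : Set Γ) (T : ι → Set Γ)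
    (R : Γ → Γ → Prop) (x y : Γ) : Prop :=
  (∃ j, FactorRel A M T R j x y) ∨
    ∃ s ∈ S, ∃ j k, FactorRel A M T R j x s ∧ FactorRel A M T R k s y

variable {A : ι → Subgroup Γ} {B : Subgroup Γ} {M : ι → Set Γ} {S : Set Γ} {T : ι → Set Γ}
  {R : Γ → Γ → Prop}

namespace IsStage

theorem mem_T_iff (h : IsStage A B M S T R) {j : ι} {a x : Γ} (ha : a ∈ A j) :
    a * x ∈ T j ↔ x ∈ T j :=
  ⟨fun hx => by simpa using h.smul_T j a⁻¹ (inv_mem ha) _ hx, h.smul_T j a ha x⟩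

theorem inducedRel_of_rel (hM : CompatibleCones A B M) {j : ι} {x y : Γ} (hxy : R x y) :
    InducedRel A M R j x y :=
  ⟨1, one_mem _, 1, hM.one_mem j, by simpa using hxy⟩

theorem rel_of_inducedRel (hM : CompatibleCones A B M) (h : IsStage A B M S T R) {j : ι}
    {x y : Γ} (hx : x ∈ S) (hy : y ∈ S) (hxy : InducedRel A M R j x y) : R x y := by
  obtain ⟨a, ha, m, hm, hR⟩ := hxy
  have hmA := hM.sub j hm
  have hc := hM.conj_mem j m hm a ha
  by_cases hT : a * x ∈ T j
  · have hxT : x ∈ T j := (h.mem_T_iff ha).1 hT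
    have h1 : (a⁻¹ * m * a) * x ∈ S := h.T_sub j (h.smul_T j _ (hM.sub j hc) _ hxT)
    have h2 := h.mul_left j (a⁻¹ * m) (mul_mem (inv_mem ha) hmA) _ _ hR
      (by simpa [mul_assoc] using h1) (by simpa [mul_assoc] using hy)
    refine h.trans _ _ _ (h.le_mul j _ hc x hx h1) ?_
    simpa [mul_assoc] using h2
  · have haB : a⁻¹ ∈ B := h.mem_of j _ (h.left_mem _ _ hR) hT _ (inv_mem ha) (by simpa using hx)
    have h1 := h.smul_S _ haB _ (h.right_mem _ _ hR)
    have h2 := h.mul_left j _ (inv_mem ha) _ _ hR (by simpa using hx) h1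
    refine h.trans _ _ _ (by simpa using h2) ?_
    have h3 := h.le_mul j _ hc _ h1 (by simpa [mul_assoc] using hy)
    simpa [mul_assoc] using h3

theorem inducedRel_trans (hM : CompatibleCones A B M) (h : IsStage A B M S T R) {j : ι}
    {x y z : Γ} (hxy : InducedRel A M R j x y) (hyz : InducedRel A M R j y z)
    (hT : y ∈ T j → z ∈ T j) : InducedRel A M R j x z := by
  obtain ⟨a, ha, m, hm, hR⟩ := hxy
  obtain ⟨a', ha', m', hm', hR'⟩ := hyz
  have hmA := hM.sub j hm
  have hmA' := hM.sub j hm'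
  have hd : m⁻¹ * a * a'⁻¹ ∈ A j := mul_mem (mul_mem (inv_mem hmA) ha) (inv_mem ha')
  have hdy : (m⁻¹ * a * a'⁻¹) * (a' * y) ∈ S := by
    simpa [mul_assoc] using h.right_mem _ _ hR
  have hdz : (m⁻¹ * a * a'⁻¹) * (m'⁻¹ * (a' * z)) ∈ S := by
    by_cases hy : y ∈ T j
    · exact h.T_sub j ((h.mem_T_iff hd).2
        ((h.mem_T_iff (inv_mem hmA')).2 ((h.mem_T_iff ha').2 (hT hy))))
    · refine h.smul_S _ (h.mem_of j _ (h.left_mem _ _ hR') ?_ _ hd hdy) _ (h.right_mem _ _ hR')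
      rwa [h.mem_T_iff ha']
  refine ⟨a, ha, (a * a'⁻¹) * m' * (a * a'⁻¹)⁻¹ * m,
    hM.mul_mem j _ (hM.conj_mem' hm' (mul_mem ha (inv_mem ha'))) _ hm, ?_⟩
  have h2 := h.mul_left j _ hd _ _ hR' hdy hdz
  refine h.trans _ _ _ hR ?_
  simpa [mul_assoc] using h2

theorem inducedRel_trans_of_mem (hM : CompatibleCones A B M) (h : IsStage A B M S T R) {j : ι}
    {x y z : Γ} (hxy : InducedRel A M R j x y) (hyz : InducedRel A M R j y z)
    (hx : x ∈ T j) (hy : y ∈ T j) : InducedRel A M R j x z := by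
  obtain ⟨a, ha, m, hm, hR⟩ := hxy
  obtain ⟨a', ha', m', hm', hR'⟩ := hyz
  have hd : a' * a⁻¹ * m ∈ A j := mul_mem (mul_mem ha' (inv_mem ha)) (hM.sub j hm)
  have hc := hM.conj_mem j m hm (a * a'⁻¹) (mul_mem ha (inv_mem ha'))
  have hx' := h.smul_T j a' ha' x hx
  have h1 := h.mul_left j _ hd _ _ hR (h.T_sub j (h.smul_T j _ hd _ (h.smul_T j a ha x hx)))
    (by simpa [mul_assoc] using h.T_sub j (h.smul_T j a' ha' y hy))
  refine ⟨a', ha', m', hm', h.trans _ _ _ (h.le_mul j _ hc _ (h.T_sub j hx') ?_)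
    (h.trans _ _ _ ?_ hR')⟩
  · exact h.T_sub j (h.smul_T j _ (hM.sub j hc) _ hx')
  · simpa [mul_assoc] using h1

theorem factorRel_of_rel (hM : CompatibleCones A B M) {j : ι} {x y : Γ} (hxy : R x y) :
    FactorRel A M T R j x y :=
  Or.inl (inducedRel_of_rel hM hxy)

theorem rel_of_factorRel (hM : CompatibleCones A B M) (h : IsStage A B M S T R) {j : ι}
    {x y : Γ} (hx : x ∈ S) (hy : y ∈ S) (hxy : FactorRel A M T R j x y) : R x y := by
  rcases hxy with hxy | ⟨t, ht, h1, h2⟩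
  · exact h.rel_of_inducedRel hM hx hy hxy
  · exact h.trans _ _ _ (h.rel_of_inducedRel hM hx (h.T_sub j ht) h1)
      (h.rel_of_inducedRel hM (h.T_sub j ht) hy h2)

theorem factorRel_trans (hM : CompatibleCones A B M) (h : IsStage A B M S T R) {j : ι}
    {x y z : Γ} (hxy : FactorRel A M T R j x y) (hyz : FactorRel A M T R j y z) :
    FactorRel A M T R j x z := by
  rcases hxy with hxy | ⟨t, ht, h1, h2⟩ <;> rcases hyz with hyz | ⟨t', ht', h3, h4⟩
  · by_cases hy : y ∈ T j
    · exact Or.inr ⟨y, hy, hxy, hyz⟩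
    · exact Or.inl (h.inducedRel_trans hM hxy hyz fun hy' => absurd hy' hy)
  · exact Or.inr ⟨t', ht', h.inducedRel_trans hM hxy h3 fun _ => ht', h4⟩
  · refine Or.inr ⟨t, ht, h1, ?_⟩
    by_cases hy : y ∈ T j
    · exact h.inducedRel_trans_of_mem hM h2 hyz ht hy
    · exact h.inducedRel_trans hM h2 hyz fun hy' => absurd hy' hy
  · exact Or.inr ⟨t', ht', h.inducedRel_trans hM h1
      (h.inducedRel_trans hM h2 h3 fun _ => ht') fun _ => ht', h4⟩

theorem inducedRel_mul_left {j : ι} {c x y : Γ} (hc : c ∈ A j) (hxy : InducedRel A M R j x y) :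
    InducedRel A M R j (c * x) (c * y) := by
  obtain ⟨a, ha, m, hm, hR⟩ := hxy
  exact ⟨a * c⁻¹, mul_mem ha (inv_mem hc), m, hm, by simpa [mul_assoc] using hR⟩

theorem factorRel_mul_left (h : IsStage A B M S T R) {j : ι} {c x y : Γ} (hc : c ∈ A j)
    (hxy : FactorRel A M T R j x y) : FactorRel A M T R j (c * x) (c * y) := by
  rcases hxy with hxy | ⟨t, ht, h1, h2⟩
  · exact Or.inl (inducedRel_mul_left hc hxy)
  · exact Or.inr ⟨c * t, h.smul_T j c hc t ht, inducedRel_mul_left hc h1,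
      inducedRel_mul_left hc h2⟩

theorem factorRel_mul (hM : CompatibleCones A B M) (h : IsStage A B M S T R) {j : ι} {a m x : Γ}
    (hm : m ∈ M j) (ha : a ∈ A j) (hx : a * x ∈ S) : FactorRel A M T R j x (m * x) := by
  refine Or.inl ⟨a, ha, a * m * a⁻¹, hM.conj_mem' hm ha, ?_⟩
  simpa [mul_assoc] using h.refl _ hx

theorem inducedRel_left_mem (h : IsStage A B M S T R) {j : ι} {x y : Γ}
    (hxy : InducedRel A M R j x y) : ∃ a ∈ A j, a * x ∈ S := by
  obtain ⟨a, ha, m, hm, hR⟩ := hxy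
  exact ⟨a, ha, h.left_mem _ _ hR⟩

theorem inducedRel_right_mem (hM : CompatibleCones A B M) (h : IsStage A B M S T R) {j : ι}
    {x y : Γ} (hxy : InducedRel A M R j x y) : ∃ a ∈ A j, a * y ∈ S := by
  obtain ⟨a, ha, m, hm, hR⟩ := hxy
  exact ⟨m⁻¹ * a, mul_mem (inv_mem (hM.sub j hm)) ha, by
    simpa [mul_assoc] using h.right_mem _ _ hR⟩

theorem factorRel_left_mem (h : IsStage A B M S T R) {j : ι} {x y : Γ}
    (hxy : FactorRel A M T R j x y) : ∃ a ∈ A j, a * x ∈ S := by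
  rcases hxy with hxy | ⟨t, -, h1, -⟩
  exacts [h.inducedRel_left_mem hxy, h.inducedRel_left_mem h1]

theorem factorRel_right_mem (hM : CompatibleCones A B M) (h : IsStage A B M S T R) {j : ι}
    {x y : Γ} (hxy : FactorRel A M T R j x y) : ∃ a ∈ A j, a * y ∈ S := by
  rcases hxy with hxy | ⟨t, -, -, h1⟩
  exacts [h.inducedRel_right_mem hM hxy, h.inducedRel_right_mem hM h1]

variable {S' : Set Γ} {T' : ι → Set Γ}

theorem factorRel_of_factorRel (hM : CompatibleCones A B M) (h : IsStage A B M S T R)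
    (hT' : ∀ j x, x ∈ T' j ↔ ∃ a ∈ A j, a * x ∈ S)
    (hinter : ∀ j k x, j ≠ k → x ∈ T' j → x ∈ T' k → x ∈ S) {j k : ι} {x y : Γ}
    (hx : x ∈ T' j) (hy : y ∈ T' j) (hxy : FactorRel A M T R k x y) :
    FactorRel A M T R j x y := by
  by_cases hjk : j = k
  · exact hjk ▸ hxy
  · exact factorRel_of_rel hM <| h.rel_of_factorRel hM
      (hinter j k x hjk hx ((hT' k x).2 (h.factorRel_left_mem hxy)))
      (hinter j k y hjk hy ((hT' k y).2 (h.factorRel_right_mem hM hxy))) hxy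

theorem factorRel_of_nextRel (hM : CompatibleCones A B M) (h : IsStage A B M S T R)
    (hT' : ∀ j x, x ∈ T' j ↔ ∃ a ∈ A j, a * x ∈ S)
    (hinter : ∀ j k x, j ≠ k → x ∈ T' j → x ∈ T' k → x ∈ S) {j : ι} {x y : Γ}
    (hx : x ∈ T' j) (hy : y ∈ T' j) (hxy : NextRel A M S T R x y) :
    FactorRel A M T R j x y := by
  rcases hxy with ⟨k, hk⟩ | ⟨s, hs, k, l, hk, hl⟩
  · exact h.factorRel_of_factorRel hM hT' hinter hx hy hk
  · have hs' : s ∈ T' j := (hT' j s).2 ⟨1, one_mem _, by simpa using hs⟩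
    exact h.factorRel_trans hM (h.factorRel_of_factorRel hM hT' hinter hx hs' hk)
      (h.factorRel_of_factorRel hM hT' hinter hs' hy hl)

theorem nextRel_trans (hM : CompatibleCones A B M) (h : IsStage A B M S T R)
    (hT' : ∀ j x, x ∈ T' j ↔ ∃ a ∈ A j, a * x ∈ S)
    (hinter : ∀ j k x, j ≠ k → x ∈ T' j → x ∈ T' k → x ∈ S) {x y z : Γ}
    (hxy : NextRel A M S T R x y) (hyz : NextRel A M S T R y z) : NextRel A M S T R x z := by
  have hST : ∀ s ∈ S, ∀ j, s ∈ T' j := fun s hs j =>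
    (hT' j s).2 ⟨1, one_mem _, by simpa using hs⟩
  have left : ∀ {k x y}, FactorRel A M T R k x y → x ∈ T' k := fun {k x y} hk =>
    (hT' k x).2 (h.factorRel_left_mem hk)
  have right : ∀ {k x y}, FactorRel A M T R k x y → y ∈ T' k := fun {k x y} hk =>
    (hT' k y).2 (h.factorRel_right_mem hM hk)
  have loc : ∀ {j k x y}, x ∈ T' j → y ∈ T' j → FactorRel A M T R k x y →
      FactorRel A M T R j x y := fun hx hy => h.factorRel_of_factorRel hM hT' hinter hx hy
  rcases hxy with ⟨j, hj⟩ | ⟨s, hs, a, b, ha, hb⟩ <;>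
    rcases hyz with ⟨k, hk⟩ | ⟨s', hs', c, d, hc, hd⟩
  · by_cases hjk : j = k
    · subst hjk
      exact Or.inl ⟨j, h.factorRel_trans hM hj hk⟩
    · exact Or.inr ⟨y, hinter j k y hjk (right hj) (left hk), j, k, hj, hk⟩
  · exact Or.inr ⟨s', hs', j, d, h.factorRel_trans hM hj (loc (right hj) (hST s' hs' j) hc), hd⟩
  · exact Or.inr ⟨s, hs, a, k, ha, h.factorRel_trans hM (loc (hST s hs k) (left hk) hb) hk⟩
  · exact Or.inr ⟨s', hs', a, d, h.factorRel_trans hM ha <| loc (hST s hs a) (hST s' hs' a) <|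
      h.factorRel_trans hM hb (loc (right hb) (hST s' hs' b) hc), hd⟩

theorem next (hM : CompatibleCones A B M) (h : IsStage A B M S T R)
    (hT' : ∀ j x, x ∈ T' j ↔ ∃ a ∈ A j, a * x ∈ S) (hS' : ∀ x, x ∈ S' ↔ ∃ j, x ∈ T' j)
    (hinter : ∀ j k x, j ≠ k → x ∈ T' j → x ∈ T' k → x ∈ S)
    (hmem : ∀ j, ∀ x ∈ S', x ∉ T' j → ∀ a ∈ A j, a * x ∈ S' → a ∈ B) :
    IsStage A B M S' T' (NextRel A M S T R) := by
  have smul_T' : ∀ j, ∀ a ∈ A j, ∀ x ∈ T' j, a * x ∈ T' j := by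
    intro j a ha x hx
    obtain ⟨c, hc, hcx⟩ := (hT' j x).1 hx
    exact (hT' j _).2 ⟨c * a⁻¹, mul_mem hc (inv_mem ha), by simpa [mul_assoc] using hcx⟩
  have mem_T'_iff : ∀ j, ∀ a ∈ A j, ∀ x, a * x ∈ T' j ↔ x ∈ T' j := fun j a ha x =>
    ⟨fun hx => by simpa using smul_T' j a⁻¹ (inv_mem ha) _ hx, smul_T' j a ha x⟩
  have left : ∀ {k x y}, FactorRel A M T R k x y → x ∈ S' := fun {k x y} hk =>
    (hS' x).2 ⟨k, (hT' k x).2 (h.factorRel_left_mem hk)⟩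
  have right : ∀ {k x y}, FactorRel A M T R k x y → y ∈ S' := fun {k x y} hk =>
    (hS' y).2 ⟨k, (hT' k y).2 (h.factorRel_right_mem hM hk)⟩
  refine
    { T_sub := fun j x hx => (hS' x).2 ⟨j, hx⟩
      smul_T := smul_T'
      smul_S := ?_
      mem_of := hmem
      refl := ?_
      left_mem := ?_
      right_mem := ?_
      trans := fun x y z hxy hyz => h.nextRel_trans hM hT' hinter hxy hyz
      mul_left := ?_
      le_mul := ?_ }
  · intro b hb x hx
    obtain ⟨j, hj⟩ := (hS' x).1 hx
    exact (hS' _).2 ⟨j, smul_T' j b (hM.le j hb) x hj⟩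
  · intro x hx
    obtain ⟨j, hj⟩ := (hS' x).1 hx
    obtain ⟨a, ha, hax⟩ := (hT' j x).1 hj
    exact Or.inl ⟨j, by simpa using h.factorRel_mul hM (hM.one_mem j) ha hax⟩
  · rintro x y (⟨j, hj⟩ | ⟨s, hs, j, k, hj, hk⟩)
    exacts [left hj, left hj]
  · rintro x y (⟨j, hj⟩ | ⟨s, hs, j, k, hj, hk⟩)
    exacts [right hj, right hk]
  · intro j a ha x y hxy hax hay
    by_cases hj : x ∈ T' j ∧ y ∈ T' j
    · exact Or.inl ⟨j, h.factorRel_mul_left ha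
        (h.factorRel_of_nextRel hM hT' hinter hj.1 hj.2 hxy)⟩
    · have haB : a ∈ B := by
        by_cases hx : x ∈ T' j
        · have hy : a * y ∉ T' j := fun hy => hj ⟨hx, (mem_T'_iff j a ha y).1 hy⟩
          have hyS : y ∈ S' := by
            rcases hxy with ⟨k, hk⟩ | ⟨s, hs, k, l, hk, hl⟩
            exacts [right hk, right hl]
          have := hmem j _ hay hy a⁻¹ (inv_mem ha) (by simpa using hyS)
          simpa using this
        · refine hmem j x ?_ hx a ha hax
          rcases hxy with ⟨k, hk⟩ | ⟨s, hs, k, l, hk, hl⟩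
          exacts [left hk, left hk]
      rcases hxy with ⟨k, hk⟩ | ⟨s, hs, k, l, hk, hl⟩
      · exact Or.inl ⟨k, h.factorRel_mul_left (hM.le k haB) hk⟩
      · exact Or.inr ⟨a * s, h.smul_S a haB s hs, k, l, h.factorRel_mul_left (hM.le k haB) hk,
          h.factorRel_mul_left (hM.le l haB) hl⟩
  · intro j m hm x hx hmx
    by_cases hxT : x ∈ T' j
    · obtain ⟨a, ha, hax⟩ := (hT' j x).1 hxT
      exact Or.inl ⟨j, h.factorRel_mul hM hm ha hax⟩
    · have hmB := hmem j x hx hxT m (hM.sub j hm) hmx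
      obtain ⟨k, hk⟩ := (hS' x).1 hx
      obtain ⟨a, ha, hax⟩ := (hT' k x).1 hk
      exact Or.inl ⟨k, h.factorRel_mul hM (hM.agree j k m hm hmB) ha hax⟩

end IsStage

/-- A length function on an amalgam, together with the index of the factor containing the first
letter of a normal form. -/
structure IsLength (A : ι → Subgroup Γ) (B : Subgroup Γ) (len : Γ → ℕ) (fst : Γ → Option ι) :
    Prop where
  len_one : len 1 = 0
  len_base_mul : ∀ b ∈ B, ∀ x, len (b * x) = len x
  fst_base_mul : ∀ b ∈ B, ∀ x, fst (b * x) = fst x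
  len_mul : ∀ j, ∀ a ∈ A j, a ∉ B → ∀ x, fst x ≠ some j → len (a * x) = len x + 1
  fst_mul : ∀ j, ∀ a ∈ A j, a ∉ B → ∀ x, fst x ≠ some j → fst (a * x) = some j
  exists_fst_ne : ∀ j x, ∃ a ∈ A j, fst (a * x) ≠ some j
  mem_base : ∀ x, fst x = none → x ∈ B

/-- For `n = k + 1`, the elements of `Γ` of the form `a * x` with `a` in the factor `A j` and `x`
of length at most `k`. -/
def factorLayer (A : ι → Subgroup Γ) (len : Γ → ℕ) : ℕ → ι → Set Γ
  | 0, _ => ∅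
  | n + 1, j => {x | ∃ a ∈ A j, len (a * x) ≤ n}

/-- The preorder on the elements of length at most `n`. -/
def layerRel (A : ι → Subgroup Γ) (B : Subgroup Γ) (M : ι → Set Γ) (len : Γ → ℕ) (i : ι) :
    ℕ → Γ → Γ → Prop
  | 0 => fun x y => x ∈ B ∧ y ∈ B ∧ x⁻¹ * y ∈ M i
  | n + 1 => NextRel A M {x | len x ≤ n} (factorLayer A len n) (layerRel A B M len i n)

namespace IsLength

variable {len : Γ → ℕ} {fst : Γ → Option ι}

theorem exists_len_lt (hL : IsLength A B len fst) {j : ι} {x : Γ} (hx : fst x = some j) :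
    ∃ a ∈ A j, fst (a * x) ≠ some j ∧ len x = len (a * x) + 1 := by
  obtain ⟨a, ha, hax⟩ := hL.exists_fst_ne j x
  refine ⟨a, ha, hax, ?_⟩
  have haB : a⁻¹ ∉ B := fun haB => hax <| by
    rw [hL.fst_base_mul a (by simpa using haB), hx]
  simpa using hL.len_mul j a⁻¹ (inv_mem ha) haB _ hax

theorem len_of_mem_base (hL : IsLength A B len fst) {b : Γ} (hb : b ∈ B) : len b = 0 := by
  simpa [hL.len_one] using hL.len_base_mul b hb 1

theorem mem_base_of_len (hL : IsLength A B len fst) {x : Γ} (hx : len x = 0) : x ∈ B := by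
  refine hL.mem_base x (Option.eq_none_iff_forall_not_mem.2 fun j hj => ?_)
  obtain ⟨a, -, -, h⟩ := hL.exists_len_lt hj
  omega

theorem len_le_of_mul (hL : IsLength A B len fst) {j : ι} {a x : Γ} (ha : a ∈ A j)
    (hx : fst x ≠ some j) : len x ≤ len (a * x) := by
  by_cases haB : a ∈ B
  · exact (hL.len_base_mul a haB x).ge
  · simp [hL.len_mul j a ha haB x hx]

theorem len_le_of_mul' (hL : IsLength A B len fst) {j : ι} {a x : Γ} (ha : a ∈ A j) :
    len x ≤ len (a * x) + 1 := by
  by_cases hx : fst x = some j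
  · obtain ⟨c, hc, hcx, hlen⟩ := hL.exists_len_lt hx
    have := hL.len_le_of_mul (mul_mem ha (inv_mem hc)) hcx
    simp only [mul_assoc, inv_mul_cancel_left] at this
    omega
  · exact (hL.len_le_of_mul ha hx).trans (Nat.le_succ _)

theorem len_eq_of_notMem (hL : IsLength A B len fst) {n : ℕ} {j : ι} {x : Γ} (hx : len x ≤ n)
    (hxT : x ∉ factorLayer A len n j) : len x = n ∧ fst x ≠ some j := by
  cases n with
  | zero =>
    refine ⟨Nat.le_zero.1 hx, fun hj => ?_⟩
    obtain ⟨a, -, -, h⟩ := hL.exists_len_lt hj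
    omega
  | succ n =>
    constructor
    · by_contra hne
      exact hxT ⟨1, one_mem _, by rw [one_mul]; omega⟩
    · intro hj
      obtain ⟨a, ha, -, h⟩ := hL.exists_len_lt hj
      exact hxT ⟨a, ha, by omega⟩

theorem mem_base_of_mul (hL : IsLength A B len fst) {n : ℕ} {j : ι} {a x : Γ} (hx : len x ≤ n)
    (hxT : x ∉ factorLayer A len n j) (ha : a ∈ A j) (hax : len (a * x) ≤ n) : a ∈ B := by
  obtain ⟨h1, h2⟩ := hL.len_eq_of_notMem hx hxT
  by_contra haB
  have := hL.len_mul j a ha haB x h2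
  omega

theorem len_le_iff [Nonempty ι] (hL : IsLength A B len fst) {n : ℕ} {x : Γ} :
    len x ≤ n + 1 ↔ ∃ j, x ∈ factorLayer A len (n + 1) j := by
  constructor
  · intro hx
    cases hj : fst x with
    | none =>
      obtain ⟨j⟩ := ‹Nonempty ι›
      exact ⟨j, 1, one_mem _, by simp [hL.len_of_mem_base (hL.mem_base x hj)]⟩
    | some j =>
      obtain ⟨a, ha, -, h⟩ := hL.exists_len_lt hj
      exact ⟨j, a, ha, by omega⟩
  · rintro ⟨j, a, ha, hax⟩
    have := hL.len_le_of_mul' (x := x) ha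
    omega

theorem len_le_of_mem_of_mem (hL : IsLength A B len fst) {n : ℕ} {j k : ι} {x : Γ} (hjk : j ≠ k)
    (hj : x ∈ factorLayer A len (n + 1) j) (hk : x ∈ factorLayer A len (n + 1) k) :
    len x ≤ n := by
  obtain ⟨a, ha, hax⟩ := hj
  obtain ⟨c, hc, hcx⟩ := hk
  by_cases hx : fst x = some j
  · exact (hL.len_le_of_mul hc (by simpa [hx] using hjk)).trans hcx
  · exact (hL.len_le_of_mul ha hx).trans hax

theorem isStage (hM : CompatibleCones A B M) (hL : IsLength A B len fst) (i : ι) (n : ℕ) :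
    IsStage A B M {x | len x ≤ n} (factorLayer A len n) (layerRel A B M len i n) := by
  have : Nonempty ι := ⟨i⟩
  induction n with
  | zero =>
    have hB : ∀ x, len x ≤ 0 → x ∈ B := fun x hx => hL.mem_base_of_len (Nat.le_zero.1 hx)
    exact
      { T_sub := fun j => Set.empty_subset _
        smul_T := fun j a _ x hx => hx.elim
        smul_S := fun b hb x hx => (hL.len_base_mul b hb x).trans_le hx
        mem_of := fun j x hx hxT a ha hax => hL.mem_base_of_mul hx hxT ha hax
        refl := fun x hx => ⟨hB x hx, hB x hx, by simpa using hM.one_mem i⟩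
        left_mem := fun x y hxy => (hL.len_of_mem_base hxy.1).le
        right_mem := fun x y hxy => (hL.len_of_mem_base hxy.2.1).le
        trans := fun x y z hxy hyz => ⟨hxy.1, hyz.2.1, by
          simpa [mul_assoc] using hM.mul_mem i _ hxy.2.2 _ hyz.2.2⟩
        mul_left := fun j a ha x y hxy hax hay => ⟨hB _ hax, hB _ hay, by
          simpa [mul_assoc] using hxy.2.2⟩
        le_mul := fun j m hm x hx hmx => by
          have hmB : m ∈ B := hL.mem_base_of_mul hx (Set.notMem_empty x) (hM.sub j hm) hmx
          refine ⟨hB _ hx, hB _ hmx, ?_⟩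
          simpa [mul_assoc] using
            hM.conj_mem i m (hM.agree j i m hm hmB) x (hM.le i (hB x hx)) }
  | succ n ih =>
    exact ih.next hM (fun j x => Iff.rfl) (fun x => hL.len_le_iff)
      (fun j k x hjk hj hk => hL.len_le_of_mem_of_mem hjk hj hk)
      (fun j x hx hxT a ha hax => hL.mem_base_of_mul hx hxT ha hax)

theorem layerRel_succ_iff (hM : CompatibleCones A B M) (hL : IsLength A B len fst) (i : ι)
    {n : ℕ} {x y : Γ} (hx : len x ≤ n) (hy : len y ≤ n) :
    layerRel A B M len i (n + 1) x y ↔ layerRel A B M len i n x y := by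
  have h := hL.isStage hM i n
  refine ⟨fun hxy => ?_, fun hxy => Or.inl ⟨i, IsStage.factorRel_of_rel hM hxy⟩⟩
  exact h.rel_of_factorRel hM hx hy <| h.factorRel_of_nextRel (T' := factorLayer A len (n + 1)) hM
    (fun j x => Iff.rfl) (fun j k x hjk hj hk => hL.len_le_of_mem_of_mem hjk hj hk) (j := i)
    ⟨1, one_mem _, by simpa using hx⟩ ⟨1, one_mem _, by simpa using hy⟩ hxy

theorem layerRel_iff_of_le (hM : CompatibleCones A B M) (hL : IsLength A B len fst) (i : ι)
    {n m : ℕ} (hnm : n ≤ m) {x y : Γ} (hx : len x ≤ n) (hy : len y ≤ n) :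
    layerRel A B M len i m x y ↔ layerRel A B M len i n x y := by
  induction m, hnm using Nat.le_induction with
  | base => rfl
  | succ m hnm ih => rw [hL.layerRel_succ_iff hM i (hx.trans hnm) (hy.trans hnm), ih]

theorem inv_mem_of_layerRel (hM : CompatibleCones A B M) (hL : IsLength A B len fst) (i : ι)
    {j : ι} {x : Γ} (hx : x ∈ A j) (hR : layerRel A B M len i 1 x 1) : x⁻¹ ∈ M j := by
  have h := (hL.isStage hM i 0).factorRel_of_nextRel (T' := factorLayer A len 1) hM
    (fun j x => Iff.rfl) (fun j k x hjk hj hk => hL.len_le_of_mem_of_mem hjk hj hk) (j := j)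
    ⟨x⁻¹, inv_mem hx, by simp [hL.len_one]⟩ ⟨1, one_mem _, by simp [hL.len_one]⟩ hR
  rcases h with ⟨a, ha, m, hm, h1, h2, h3⟩ | ⟨t, ht, -⟩
  · have h4 := hM.agree i j _ h3 (mul_mem (inv_mem h1) h2)
    have h5 := hM.mul_mem j _ h4 _ (hM.conj_mem j m hm a ha)
    simpa [mul_assoc] using h5
  · exact ht.elim

/-- Compatible normal submonoids of the factors of an amalgam are the nonnegative elements of
a left-invariant preorder on the amalgam for which they act by inflationary maps. -/
theorem exists_preorder (hM : CompatibleCones A B M) (hL : IsLength A B len fst) (i : ι) :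
    ∃ R : Γ → Γ → Prop, (∀ x, R x x) ∧ (∀ x y z, R x y → R y z → R x z) ∧
      (∀ j, ∀ a ∈ A j, ∀ x y, R x y → R (a * x) (a * y)) ∧
      (∀ j, ∀ m ∈ M j, ∀ x, R x (m * x)) ∧ ∀ j, ∀ x ∈ A j, R x 1 → x⁻¹ ∈ M j := by
  have lift : ∀ {n m x y}, n ≤ m → layerRel A B M len i n x y → layerRel A B M len i m x y :=
    fun {n m x y} hnm hxy => (hL.layerRel_iff_of_le hM i hnm
      ((hL.isStage hM i n).left_mem _ _ hxy) ((hL.isStage hM i n).right_mem _ _ hxy)).2 hxy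
  refine ⟨fun x y => ∃ n, layerRel A B M len i n x y, ?_, ?_, ?_, ?_, ?_⟩
  · exact fun x => ⟨len x, (hL.isStage hM i _).refl x (le_refl (len x))⟩
  · rintro x y z ⟨n, hn⟩ ⟨m, hm⟩
    exact ⟨max n m, (hL.isStage hM i _).trans _ _ _ (lift (le_max_left _ _) hn)
      (lift (le_max_right _ _) hm)⟩
  · rintro j a ha x y ⟨n, hn⟩
    exact ⟨max n (max (len (a * x)) (len (a * y))), (hL.isStage hM i _).mul_left j a ha x y
      (lift (le_max_left _ _) hn) (by simp) (by simp)⟩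
  · intro j m hm x
    exact ⟨max (len x) (len (m * x)), (hL.isStage hM i _).le_mul j m hm x (by simp) (by simp)⟩
  · rintro j x hx ⟨n, hn⟩
    have hx1 : len x ≤ 1 := by
      simpa [hL.len_one] using hL.len_le_of_mul' (x := x) (inv_mem hx)
    have h1 : len (1 : Γ) ≤ 1 := by simp [hL.len_one]
    exact hL.inv_mem_of_layerRel hM i hx <| (hL.layerRel_iff_of_le hM i (le_max_right n 1) hx1 h1).1
      (lift (le_max_left n 1) hn)

end IsLength

end AmalgamOrder

namespace Monoid.PushoutI

open NormalWord AmalgamOrder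

variable {ι : Type*} {G : ι → Type*} [∀ i, Group (G i)] {H : Type*} [Group H] {φ : ∀ i, H →* G i}

theorem exists_isLength (hφ : ∀ i, Function.Injective (φ i)) :
    ∃ (len : PushoutI φ → ℕ) (fst : PushoutI φ → Option ι),
      IsLength (fun i => (of (φ := φ) i).range) (base φ).range len fst := by
  classical
  obtain ⟨d⟩ := transversal_nonempty φ hφ
  have not_mem : ∀ {j : ι} {g : G j}, of (φ := φ) j g ∉ (base φ).range → g ∉ (φ j).range := by
    rintro j _ hg ⟨h, rfl⟩
    exact hg ⟨h, (of_apply_eq_base φ j h).symm⟩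
  refine ⟨fun x => (x • (empty : NormalWord d)).toList.length,
    fun x => (x • (empty : NormalWord d)).fstIdx, ?_, ?_, ?_, ?_, ?_, ?_, ?_⟩
  · simp
  · rintro _ ⟨h, rfl⟩ x
    rw [mul_smul, base_smul_def]
  · rintro _ ⟨h, rfl⟩ x
    rw [mul_smul, base_smul_def]
  · rintro j _ ⟨g, rfl⟩ hg x hx
    rw [mul_smul, ← cons_eq_smul g _ hx (not_mem hg)]
    simp [NormalWord.cons, CoprodI.Word.cons]
  · rintro j _ ⟨g, rfl⟩ hg x hx
    rw [mul_smul, ← cons_eq_smul g _ hx (not_mem hg)]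
    simp [NormalWord.cons]
  · intro j x
    have key : ∀ w : NormalWord d, ∃ g : G j, (of (φ := φ) j g • w).fstIdx ≠ some j := by
      intro w
      induction w using consRecOn with
      | empty => exact ⟨1, by simp [CoprodI.Word.fstIdx]⟩
      | cons i g w hmw _ hgr _ _ =>
        by_cases hij : i = j
        · subst hij
          refine ⟨g⁻¹, ?_⟩
          rwa [cons_eq_smul, smul_smul, ← map_mul, inv_mul_cancel, map_one, one_smul]
        · exact ⟨1, by simpa [NormalWord.cons] using hij⟩
      | base h w _ ih =>
        obtain ⟨g, hg⟩ := ih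
        refine ⟨g * φ j h⁻¹, ?_⟩
        rwa [smul_smul, map_mul, of_apply_eq_base, mul_assoc, ← map_mul, inv_mul_cancel, map_one,
          mul_one]
    obtain ⟨g, hg⟩ := key (x • empty)
    exact ⟨_, ⟨g, rfl⟩, by rwa [mul_smul]⟩
  · intro x hx
    have hnil : (x • (empty : NormalWord d)).toList = [] := by
      simpa [CoprodI.Word.fstIdx] using hx
    have hw : x • (empty : NormalWord d) = base φ (x • (empty : NormalWord d)).head • empty := by
      rw [base_smul_def]
      ext
      · simp
      · simp [hnil]
    have := congrArg NormalWord.prod hw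
    simp only [prod_smul, prod_empty, mul_one] at this
    exact ⟨_, this.symm⟩

/-- The union of `{1}` with the image of a family of normal subsemigroups of the factors. -/
theorem compatibleCones {Q : ∀ i, Set (G i)} (hφ : ∀ i, Function.Injective (φ i))
    (hQ : ∀ i, IsNormalSubsemigroup (Q i)) (hagree : ∀ i j h, φ i h ∈ Q i → φ j h ∈ Q j) :
    CompatibleCones (fun i => (of (φ := φ) i).range) (base φ).range
      (fun i => of (φ := φ) i '' insert 1 (Q i)) where
  le := by
    rintro j _ ⟨h, rfl⟩
    exact ⟨φ j h, of_apply_eq_base φ j h⟩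
  one_mem j := ⟨1, Set.mem_insert _ _, map_one _⟩
  mul_mem := by
    rintro j _ ⟨x, hx, rfl⟩ _ ⟨y, hy, rfl⟩
    refine ⟨x * y, ?_, map_mul _ _ _⟩
    rcases hx with rfl | hx
    · simpa using hy
    rcases hy with rfl | hy
    · simp [hx]
    exact Or.inr ((hQ j).1 x hx y hy)
  conj_mem := by
    rintro j _ ⟨x, hx, rfl⟩ _ ⟨a, rfl⟩
    refine ⟨a⁻¹ * x * a, ?_, by simp⟩
    rcases hx with rfl | hx
    · simp
    · exact Or.inr ((hQ j).2 x hx a)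
  sub := by
    rintro j _ ⟨x, -, rfl⟩
    exact ⟨x, rfl⟩
  agree := by
    rintro j k _ ⟨x, hx, rfl⟩ ⟨h, hh⟩
    rw [← of_apply_eq_base φ j] at hh
    obtain rfl := of_injective hφ j hh
    refine ⟨φ k h, ?_, by rw [of_apply_eq_base, of_apply_eq_base]⟩
    rcases hx with hx | hx
    · obtain rfl : h = 1 := hφ j (by rw [hx, map_one])
      exact Or.inl (map_one _)
    · exact Or.inr (hagree j k h hx)

/-- An element of a normal subsemigroup `Q i` not containing `1` is not a generalized torsion
element of the amalgam if `Q i` extends to a compatible family of normal subsemigroups. -/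
theorem not_isGenTorsion_of {Q : ∀ i, Set (G i)} (hφ : ∀ i, Function.Injective (φ i))
    (hQ : ∀ i, IsNormalSubsemigroup (Q i)) (hagree : ∀ i j h, φ i h ∈ Q i → φ j h ∈ Q j)
    {i : ι} {g : G i} (hg : g ∈ Q i) (hone : 1 ∉ Q i) :
    ¬ IsGenTorsion (of (φ := φ) i g) := by
  rintro ⟨-, l, hl, hprod⟩
  obtain ⟨len, fst, hL⟩ := exists_isLength hφ
  obtain ⟨R, hrefl, htrans, hleft, hmul, hinv⟩ :=
    hL.exists_preorder (compatibleCones hφ hQ hagree) i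
  have hleft' : ∀ a x y, R x y → R (a * x) (a * y) := by
    intro a
    induction a using induction_on with
    | of j b => exact hleft j _ ⟨b, rfl⟩
    | base h => exact hleft i _ ⟨φ i h, of_apply_eq_base φ i h⟩
    | mul a b iha ihb =>
      intro x y hxy
      simpa only [mul_assoc] using iha _ _ (ihb _ _ hxy)
  have hconj : ∀ a x, R x (a⁻¹ * of i g * a * x) := by
    intro a x
    simpa [mul_assoc] using hleft' a⁻¹ _ _ (hmul i _ ⟨g, Or.inr hg, rfl⟩ (a * x))
  have hlist : ∀ (t : List (PushoutI φ)) x,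
      R x ((t.map fun a => a⁻¹ * of i g * a).prod * x) := by
    intro t
    induction t with
    | nil => simpa using hrefl
    | cons a t ih =>
      intro x
      rw [List.map_cons, List.prod_cons, mul_assoc]
      exact htrans _ _ _ (ih x) (hconj a _)
  obtain ⟨a, t, rfl⟩ := List.exists_cons_of_ne_nil hl
  rw [List.map_cons, List.prod_cons, mul_eq_one_iff_eq_inv'] at hprod
  have h1 := hleft' a _ _ (hlist t (a⁻¹ * of i g))
  rw [hprod] at h1
  obtain ⟨q, hq, hqg⟩ := hinv i _ ⟨g, rfl⟩ (by simpa [mul_assoc] using h1)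
  rw [← map_inv] at hqg
  obtain rfl := of_injective hφ i hqg
  rcases hq with hq | hq
  · exact hone (inv_eq_one.1 hq ▸ hg)
  · exact hone (by simpa using (hQ i).1 _ hg _ hq)

end Monoid.PushoutI

/-- The normal subsemigroup generated by an element. -/
def normalSubsemigroupOf {G : Type*} [Group G] (g : G) : Set G :=
  {x | ∃ l : List G, l ≠ [] ∧ (l.map fun h => h⁻¹ * g * h).prod = x}

theorem isNormalSubsemigroup_normalSubsemigroupOf {G : Type*} [Group G] (g : G) :
    IsNormalSubsemigroup (normalSubsemigroupOf g) := by
  constructor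
  · rintro _ ⟨l, hl, rfl⟩ _ ⟨l', -, rfl⟩
    exact ⟨l ++ l', by simp [hl], by simp⟩
  · rintro _ ⟨l, hl, rfl⟩ a
    refine ⟨l.map (· * a), by simpa using hl, ?_⟩
    have := map_list_prod (MulAut.conj a⁻¹) (l.map fun h => h⁻¹ * g * h)
    rw [MulAut.conj_apply, inv_inv] at this
    rw [this, List.map_map, List.map_map]
    congr 2
    ext h
    simp [mul_assoc]

theorem mem_normalSubsemigroupOf_self {G : Type*} [Group G] (g : G) :
    g ∈ normalSubsemigroupOf g :=
  ⟨[1], by simp, by simp⟩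

theorem IsNormalSubsemigroup.preimage {G K : Type*} [Group G] [Group K] {P : Set K}
    (hP : IsNormalSubsemigroup P) (f : G →* K) : IsNormalSubsemigroup (f ⁻¹' P) :=
  ⟨fun x hx y hy => by simpa using hP.1 _ hx _ hy, fun x hx a => by simpa using hP.2 _ hx (f a)⟩

/-- In an amalgam `G = *_C G i`, no element of `⋃ i, G i` is generalized torsion in `G`
iff there exist families `F i` of normal subsemigroups of `G i` with
(1) `G i \ {1} = ⋃_{P ∈ F i} P` for every `i`, and
(2) for all `i, j` and `P ∈ F i` there is `Q ∈ F j` with `P ∩ C = Q ∩ C`. -/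
theorem no_genTorsion_in_factors_iff_families {ι : Type*} {G : ι → Type*}
    [∀ i, Group (G i)] {H : Type*} [Group H] (φ : ∀ i, H →* G i)
    (hφ : ∀ i, Function.Injective (φ i)) :
    (∀ (i : ι) (g : G i), ¬ IsGenTorsion (Monoid.PushoutI.of (φ := φ) i g)) ↔
      ∃ F : ∀ i, Set (Set (G i)),
        (∀ i, ∀ P ∈ F i, IsNormalSubsemigroup P) ∧
        (∀ i, {x : G i | x ≠ 1} = ⋃ P ∈ F i, P) ∧
        (∀ i j, ∀ P ∈ F i, ∃ Q ∈ F j, ∀ h : H, φ i h ∈ P ↔ φ j h ∈ Q) := by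
  constructor
  · intro hG
    refine ⟨fun i => {P | ∃ (j : ι) (g : G j), g ≠ 1 ∧
      P = Monoid.PushoutI.of (φ := φ) i ⁻¹' normalSubsemigroupOf (Monoid.PushoutI.of j g)},
      ?_, ?_, ?_⟩
    · rintro i _ ⟨j, g, -, rfl⟩
      exact (isNormalSubsemigroup_normalSubsemigroupOf _).preimage _
    · intro i
      ext x
      simp only [Set.mem_ofPred_eq, Set.mem_iUnion]
      constructor
      · exact fun hx => ⟨_, ⟨i, x, hx, rfl⟩, mem_normalSubsemigroupOf_self _⟩
      · rintro ⟨_, ⟨j, g, hg, rfl⟩, hx⟩ rfl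
        rw [Set.mem_preimage, map_one] at hx
        refine hG j g ⟨fun h => hg ?_, hx⟩
        exact Monoid.PushoutI.of_injective hφ j (by rw [h, map_one])
    · rintro i j _ ⟨k, g, hg, rfl⟩
      refine ⟨_, ⟨k, g, hg, rfl⟩, fun h => ?_⟩
      rw [Set.mem_preimage, Set.mem_preimage, Monoid.PushoutI.of_apply_eq_base,
        Monoid.PushoutI.of_apply_eq_base]
  · rintro ⟨F, hF, hcover, hcompat⟩ i g hg
    have hg1 : g ≠ 1 := fun h => hg.1 (by rw [h, map_one])
    have hone : ∀ j, ∀ P ∈ F j, (1 : G j) ∉ P := by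
      intro j P hP h1
      have h2 : (1 : G j) ∈ ⋃ P ∈ F j, P := Set.mem_biUnion hP h1
      rw [← hcover j] at h2
      exact h2 rfl
    obtain ⟨P, hP, hgP⟩ : ∃ P ∈ F i, g ∈ P := by
      have h2 : g ∈ {x : G i | x ≠ 1} := hg1
      rw [hcover i] at h2
      simpa using h2
    have hex : ∀ j, ∃ Q ∈ F j, (∀ h : H, φ i h ∈ P ↔ φ j h ∈ Q) ∧ ∀ e : i = j, e ▸ g ∈ Q := by
      intro j
      by_cases e : i = j
      · subst e
        exact ⟨P, hP, fun _ => Iff.rfl, fun _ => hgP⟩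
      · obtain ⟨Q, hQ, hPQ⟩ := hcompat i j P hP
        exact ⟨Q, hQ, hPQ, fun e' => absurd e' e⟩
    choose Q hQF hPQ hgQ using hex
    exact Monoid.PushoutI.not_isGenTorsion_of hφ (fun j => hF j _ (hQF j))
      (fun j k h hj => (hPQ k h).1 ((hPQ j h).2 hj)) (hgQ i rfl) (hone i _ (hQF i)) hg
end

section
/- Let G = *_C G_i be an amalgam of groups, A one of the factors. If A is GTF and C is RTF in A, and each G_i is a copy of A (index set of cardinality ≥ 2), then taking for each factor the family {NSS_A({a}) : a ∈ A \ {1}} of normal subsemigroups yields families satisfying: (1) each family covers G_i \ {1}; (2) the C-intersections of corresponding members agree across factors. Consequently G is GTF. -/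
/-- A group is generalized torsion-free if it has no generalized torsion elements. -/
def IsGTF (G : Type*) [Group G] : Prop := ∀ g : G, ¬ IsGenTorsion g

section Matching

variable {T : Type*} [DecidableEq T]

/-- The sum of `c` and the values of `f` along the list up to and including `t`. -/
def prefixSum (f : T → ℚ) : List T → ℚ → T → ℚ
  | [], _, _ => 0
  | a :: l, c, t => if t = a then c + f a else prefixSum f l (c + f a) t

lemma prefixSum_append (f : T → ℚ) (l₁ l₂ : List T) (c : ℚ) (t : T) :
    prefixSum f (l₁ ++ l₂) c t =
      if t ∈ l₁ then prefixSum f l₁ c t else prefixSum f l₂ (c + (l₁.map f).sum) t := by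
  induction l₁ generalizing c with
  | nil => simp
  | cons a l ih =>
    by_cases h : t = a
    · simp [prefixSum, h]
    · simp [prefixSum, h, ih, add_assoc]

/-- The letters of a word that reduces to the empty word can be matched in inverse pairs without
crossings, so that partial sums of a function that is odd under the matching are the same on both
sides of a pair. -/
theorem exists_matching {X : Type*} (lab : T → X × Bool) (l : List T) (hl : l.Nodup)
    (hred : FreeGroup.Red (l.map lab) []) :
    ∃ μ : T → T, (∀ t ∈ l, μ t ∈ l ∧ μ (μ t) = t ∧ lab (μ t) = ((lab t).1, !(lab t).2)) ∧
      ∀ f : T → ℚ, (∀ t ∈ l, f (μ t) = - f t) →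
        ∀ t ∈ l, prefixSum f l 0 (μ t) = prefixSum f l 0 t - f t := by
  induction hn : l.length using Nat.strong_induction_on generalizing l with
  | _ n ih =>
  rcases Relation.ReflTransGen.cases_head hred with h | ⟨l', hs, hr⟩
  · have : l = [] := by simpa using h
    subst this
    exact ⟨id, by simp, by simp⟩
  · generalize hw : l.map lab = w at hs
    cases hs with
    | @not L₁ L₂ x b =>
    obtain ⟨A, l2, rfl, hA, h2⟩ := List.map_eq_append_iff.1 hw
    obtain ⟨a, l3, rfl, ha, h3⟩ := List.map_eq_cons_iff.1 h2
    obtain ⟨a', B, rfl, ha', hB⟩ := List.map_eq_cons_iff.1 h3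
    have hnd : (A ++ B).Nodup ∧ a ∉ A ++ B ∧ a' ∉ A ++ B ∧ a ≠ a' := by
      simp only [List.nodup_append, List.nodup_cons, List.mem_cons, List.mem_append] at hl ⊢
      grind
    obtain ⟨hAB, haAB, haAB', hne⟩ := hnd
    obtain ⟨μ, h1, hμ⟩ := ih (A ++ B).length (by subst hn; simp) (A ++ B) hAB
      (by rw [List.map_append, hA, hB]; exact hr) rfl
    have hmem : ∀ t, t ∈ A ++ a :: a' :: B ↔ t = a ∨ t = a' ∨ t ∈ A ++ B := by
      intro t; simp only [List.mem_append, List.mem_cons]; tauto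
    let ν : T → T := fun t => if t = a then a' else if t = a' then a else μ t
    have νa : ν a = a' := by simp [ν]
    have νa' : ν a' = a := by simp [ν, hne.symm]
    have νAB : ∀ t ∈ A ++ B, ν t = μ t := by
      intro t ht
      have e1 : t ≠ a := fun h => haAB (h ▸ ht)
      have e2 : t ≠ a' := fun h => haAB' (h ▸ ht)
      simp [ν, e1, e2]
    refine ⟨ν, ?_, ?_⟩
    · intro t ht
      rcases (hmem t).1 ht with rfl | rfl | h
      · refine ⟨by rw [νa]; simp, by rw [νa, νa'], by rw [νa, ha, ha']⟩
      · refine ⟨by rw [νa']; simp, by rw [νa', νa], by rw [νa', ha, ha']; simp⟩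
      · obtain ⟨m1, m2, m3⟩ := h1 t h
        rw [νAB t h]
        exact ⟨(hmem _).2 (Or.inr (Or.inr m1)), by rw [νAB _ m1, m2], m3⟩
    · intro f hf
      have hfa : f a' = - f a := by rw [← νa]; exact hf a (by simp)
      have hpAB : ∀ t ∈ A ++ B, prefixSum f (A ++ a :: a' :: B) 0 t = prefixSum f (A ++ B) 0 t := by
        intro t ht
        have e1 : t ≠ a := fun h => haAB (h ▸ ht)
        have e2 : t ≠ a' := fun h => haAB' (h ▸ ht)
        rw [prefixSum_append, prefixSum_append]
        simp [prefixSum, e1, e2, hfa]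
      have haA : a ∉ A := fun h => haAB (List.mem_append_left _ h)
      have haA' : a' ∉ A := fun h => haAB' (List.mem_append_left _ h)
      intro t ht
      rcases (hmem t).1 ht with rfl | rfl | h
      · rw [νa, prefixSum_append, prefixSum_append, if_neg haA, if_neg haA']
        simp [prefixSum, hne.symm, hfa]
      · rw [νa', prefixSum_append, prefixSum_append, if_neg haA, if_neg haA']
        simp [prefixSum, hne.symm, hfa]
      · rw [νAB t h, hpAB t h, hpAB _ (h1 t h).1]
        exact hμ f (fun s hs => by rw [← νAB s hs]; exact hf s ((hmem s).2 (Or.inr (Or.inr hs)))) t h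

end Matching

section FirstReturn

variable {T : Type*} {p : T → Prop} {μ e : T → T}

private lemma iterate_comp_reverse (hμ : Function.Involutive μ) (he : Function.Involutive e)
    (n : ℕ) (t : T) : (μ ∘ e)^[n] (e ((μ ∘ e)^[n] t)) = e t := by
  induction n with
  | zero => rfl
  | succ n ih =>
    rw [Function.iterate_succ_apply, Function.iterate_succ_apply']
    simpa [he _, hμ _] using ih

/-- If `μ` and `e` are involutions of a finite type and `e` fixes every element satisfying `p`,
then following `μ` and `e` alternately until `p` holds again defines an involution `θ` of the
elements satisfying `p`. -/
theorem exists_firstReturn [Finite T] (hμ : Function.Involutive μ) (he : Function.Involutive e)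
    (hp : ∀ t, p t → e t = t) :
    ∃ θ : T → T, (∀ d, p d → p (θ d) ∧ θ (θ d) = d) ∧
      (∀ R : T → T → Prop, (∀ t, R t (μ t)) → (∀ d t, R d t → ¬ p t → R d (μ (e t))) →
        ∀ d, p d → R d (θ d)) ∧
      ∀ f : T → ℚ, (∀ d, p d → f (θ d) = - f d) →
        ∃ g : T → ℚ, (∀ d, p d → g d = f d) ∧ (∀ t, g (μ t) = - g t) ∧
          ∀ t, ¬ p t → g (e t) = - g t := by
  classical
  set π : T → T := μ ∘ e with hπ
  have hrev : ∀ n t, π^[n] (e (π^[n] t)) = e t := iterate_comp_reverse hμ he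
  have hpe : ∀ t, p (e t) → p t := fun t h => by
    have := hp _ h
    rw [he t] at this
    rwa [← this] at h
  have hinj : Function.Injective π := hμ.injective.comp he.injective
  have hper : ∀ t, ∃ N, 0 < N ∧ π^[N] t = t := fun t => by
    obtain ⟨N, hN, h⟩ := hinj.mem_periodicPts t
    exact ⟨N, hN, h⟩
  let Hit : T → Prop := fun t => ∃ n, p (π^[n + 1] t)
  have hitp : ∀ d, p d → Hit d := fun d hd => by
    obtain ⟨N, hN, h⟩ := hper d
    refine ⟨N - 1, ?_⟩
    rwa [Nat.sub_add_cancel hN, h]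
  let θ : T → T := fun t => if h : Hit t then π^[Nat.find h + 1] t else t
  have hθ : ∀ t n, p (π^[n + 1] t) → (∀ m < n, ¬ p (π^[m + 1] t)) → θ t = π^[n + 1] t := by
    intro t n h1 h2
    have h : Hit t := ⟨n, h1⟩
    have : Nat.find h = n := (Nat.find_eq_iff h).2 ⟨h1, h2⟩
    simp only [θ, h, dite_true, this]
  have hfirst : ∀ t, Hit t → ∃ n, p (π^[n + 1] t) ∧ ∀ m < n, ¬ p (π^[m + 1] t) := by
    intro t h
    exact ⟨Nat.find h, Nat.find_spec h, fun m hm => Nat.find_min h hm⟩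
  have hback : ∀ t n, ∀ i ≤ n, π^[i] (e (π^[n] t)) = e (π^[n - i] t) := by
    intro t n i hi
    have := hrev i (π^[n - i] t)
    rwa [← Function.iterate_add_apply, Nat.add_sub_cancel' hi] at this
  have hθp : ∀ d, p d → p (θ d) ∧ θ (θ d) = d := by
    intro d hd
    obtain ⟨n, h1, h2⟩ := hfirst d (hitp d hd)
    have e1 := hθ d n h1 h2
    refine ⟨e1 ▸ h1, ?_⟩
    have hb := hback d (n + 1)
    rw [hp _ h1] at hb
    rw [e1, hθ _ n]
    · rw [hb _ le_rfl]; simpa using hp d hd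
    · rw [hb _ le_rfl]; simpa [hp d hd] using hd
    · intro m hm hpm
      rw [hb _ (by omega)] at hpm
      have := hpe _ hpm
      rw [show n + 1 - (m + 1) = (n - m - 1) + 1 by omega] at this
      exact h2 _ (by omega) this
  refine ⟨θ, hθp, ?_, ?_⟩
  · intro R hR1 hR2 d hd
    obtain ⟨n, h1, h2⟩ := hfirst d (hitp d hd)
    rw [hθ d n h1 h2]
    clear h1
    induction n with
    | zero => simpa [π, hp d hd] using hR1 d
    | succ n ih =>
      have := hR2 d _ (ih fun m hm => h2 m (by omega)) (h2 n (by omega))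
      rwa [Function.iterate_succ_apply']
  · intro f hf
    let g : T → ℚ := fun t => if p t then f t else if Hit t then f (θ t) else 0
    have hg1 : ∀ t, p t → g t = f t := fun t ht => by simp [g, ht]
    have hgπ : ∀ t, g (π t) = if p t then - f t else g t := by
      intro t
      have key : p (π t) → θ t = π t := fun h => hθ t 0 (by simpa using h) (by simp)
      have key2 : ¬ p (π t) → (Hit (π t) ↔ Hit t) := by
        intro h
        constructor
        · rintro ⟨n, hn⟩
          exact ⟨n + 1, by rwa [Function.iterate_succ_apply]⟩
        · rintro ⟨n, hn⟩
          cases n with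
          | zero => exact absurd hn h
          | succ n => exact ⟨n, by rwa [Function.iterate_succ_apply] at hn⟩
      have key3 : ¬ p (π t) → Hit (π t) → θ (π t) = θ t := by
        intro h hh
        obtain ⟨n, h1, h2⟩ := hfirst _ hh
        rw [hθ _ n h1 h2, hθ t (n + 1)]
        · exact (Function.iterate_succ_apply π (n + 1) t).symm
        · rwa [Function.iterate_succ_apply]
        · intro m hm
          cases m with
          | zero => exact h
          | succ m => rw [Function.iterate_succ_apply]; exact h2 m (by omega)
      by_cases ht : p t
      · rw [if_pos ht]
        by_cases h : p (π t)
        · rw [hg1 _ h, ← key h, hf t ht]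
        · have hh : Hit (π t) := (key2 h).2 (hitp t ht)
          simp only [g, h, hh, if_true, if_false]
          rw [key3 h hh, hf t ht]
      · rw [if_neg ht]
        by_cases h : p (π t)
        · have hh : Hit t := ⟨0, h⟩
          simp only [g, h, ht, hh, if_true, if_false, key h]
        · by_cases hh : Hit (π t)
          · simp only [g, h, ht, hh, (key2 h).1 hh, if_true, if_false, key3 h hh]
          · simp only [g, h, ht, hh, mt (key2 h).2 hh, if_false]
    have hge : ∀ t, ¬ p t → g (e t) = - g t := by
      intro t ht
      have hte : ¬ p (e t) := fun h => ht (hpe t h)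
      have hit_e : ∀ t, Hit t → Hit (e t) := by
        rintro t ⟨n, hn⟩
        obtain ⟨N, hN, h⟩ := hper (e t)
        have hper' : ∀ j, π^[N * j] (e t) = e t := fun j =>
          (Function.IsPeriodicPt.mul_const (show Function.IsPeriodicPt π N (e t) from h) j)
        have h1 := hrev (n + 1) t
        rw [hp _ hn] at h1
        refine ⟨N * (n + 1 + 1) - (n + 1) - 1, ?_⟩
        have hle : n + 1 + 1 ≤ N * (n + 1 + 1) := Nat.le_mul_of_pos_left _ hN
        have h2 : π^[n + 1] (π^[N * (n + 1 + 1) - (n + 1)] (e t)) = π^[n + 1] (π^[n + 1] t) := by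
          rw [← Function.iterate_add_apply, Nat.add_sub_cancel' (by omega), hper', h1]
        have h3 := hinj.iterate (n + 1) h2
        rw [Nat.sub_add_cancel (by omega), h3]
        exact hn
      by_cases hh : Hit t
      · obtain ⟨n, h1, h2⟩ := hfirst t hh
        obtain ⟨j, h3, h4⟩ := hfirst _ (hit_e t hh)
        have e1 := hθ _ n h1 h2
        have e2 := hθ _ j h3 h4
        have hb := hback (e t) (j + 1)
        rw [hp _ h3] at hb
        have hbt : π^[j + 1] (π^[j + 1] (e t)) = t := by
          rw [hb _ le_rfl]; simp [he t]
        have e3 : θ (π^[j + 1] (e t)) = π^[n + 1] t := by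
          rw [hθ _ (n + (j + 1))]
          · rw [show n + (j + 1) + 1 = (n + 1) + (j + 1) by ring, Function.iterate_add_apply _ (n+1),
              hbt]
          · rw [show n + (j + 1) + 1 = (n + 1) + (j + 1) by ring, Function.iterate_add_apply _ (n+1),
              hbt]
            exact h1
          · intro m hm hpm
            rcases lt_trichotomy m j with hmj | rfl | hmj
            · rw [hb _ (by omega)] at hpm
              have := hpe _ hpm
              rw [show j + 1 - (m + 1) = (j - m - 1) + 1 by omega] at this
              exact h4 _ (by omega) this
            · rw [hbt] at hpm; exact ht hpm
            · rw [show m + 1 = (m - j - 1 + 1) + (j + 1) by omega, Function.iterate_add_apply,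
                hbt] at hpm
              exact h2 _ (by omega) hpm
        simp only [g, ht, hte, hh, hit_e t hh, if_true, if_false]
        rw [e1, e2, ← e3, hf _ h3, neg_neg]
      · have : ¬ Hit (e t) := fun h => hh (by simpa [he t] using hit_e _ h)
        simp only [g, ht, hte, hh, this, if_false, neg_zero]
    refine ⟨g, hg1, fun t => ?_, hge⟩
    have h1 := hgπ (e t)
    have h2 : π (e t) = μ t := by simp [π, he t]
    rw [h2] at h1
    by_cases ht : p t
    · rw [h1, hp t ht, if_pos ht, hg1 t ht]
    · rw [h1, if_neg (fun h => ht (hpe t h)), hge t ht]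

end FirstReturn

section Pairing

lemma prefixSum_getElem {T : Type*} [DecidableEq T] (g : T → ℚ) (l : List T) (hl : l.Nodup)
    (c : ℚ) (i : ℕ) (hi : i < l.length) :
    prefixSum g l c l[i] = c + ((l.take (i + 1)).map g).sum := by
  induction l generalizing c i with
  | nil => simp at hi
  | cons a l ih =>
    cases i with
    | zero => simp [prefixSum]
    | succ i =>
      have hi' : i < l.length := by simpa using hi
      have hne : l[i] ≠ a := by
        rintro rfl
        exact (List.nodup_cons.1 hl).1 (List.getElem_mem hi')
      simp [prefixSum, hne, ih (List.nodup_cons.1 hl).2 _ i hi', add_assoc]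

lemma prefixSum_finRange_cyclic {T : Type*} [DecidableEq T] (g : T → ℚ) {L : ℕ} [NeZero L]
    (ι : Fin L → T) (hι : Function.Injective ι) (c : ℚ) (h0 : ∑ i, g (ι i) = 0) (i : Fin L) :
    prefixSum g ((List.finRange L).map ι) c (ι i) =
      prefixSum g ((List.finRange L).map ι) c (ι (i - 1)) + g (ι i) := by
  set l := (List.finRange L).map ι with hl
  have hnd : l.Nodup := (List.nodup_finRange L).map hι
  have hlen : l.length = L := by simp [hl]
  have hget : ∀ (j : Fin L) (hj : (j : ℕ) < l.length), l[(j : ℕ)] = ι j := by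
    intro j hj; simp [hl]
  have hP : ∀ j : Fin L, prefixSum g l c (ι j) = c + ((l.take (j + 1)).map g).sum := by
    intro j
    rw [← hget j (by rw [hlen]; exact j.2)]
    exact prefixSum_getElem g l hnd c j _
  have htot : (l.map g).sum = 0 := by
    rw [hl, List.map_map, ← List.ofFn_eq_map, List.sum_ofFn]
    exact h0
  have hil : (i : ℕ) < l.length := by rw [hlen]; exact i.2
  have hsucc : ((l.take (i + 1)).map g).sum = ((l.take i).map g).sum + g (ι i) := by
    rw [← hget i hil, ← List.take_concat_get' l i hil, List.map_append, List.sum_append]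
    simp
  rw [hP, hP, hsucc, ← add_assoc]
  congr 2
  rcases Nat.eq_zero_or_pos (i : ℕ) with h | h
  · have : i = 0 := Fin.ext (by simpa using h)
    subst this
    have h2 : ((0 - 1 : Fin L) : ℕ) + 1 = L := by
      obtain ⟨n, rfl⟩ := Nat.exists_eq_succ_of_ne_zero (NeZero.ne L)
      rw [zero_sub, Fin.coe_neg_one]
    rw [h2, List.take_of_length_le hlen.le, htot]
    simp
  · have h2 : ((i - 1 : Fin L) : ℕ) + 1 = i := by
      rw [Fin.val_sub_one_of_ne_zero (fun h0 => by simp [h0] at h)]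
      omega
    rw [h2]

lemma prefixSum_flatMap {T S : Type*} [DecidableEq T] (g : T → ℚ) (block : S → List T)
    (h0 : ∀ s, ((block s).map g).sum = 0) (hd : ∀ s s' t, t ∈ block s → t ∈ block s' → s = s')
    (l : List S) (s : S) (hs : s ∈ l) (t : T) (ht : t ∈ block s) :
    prefixSum g (l.flatMap block) 0 t = prefixSum g (block s) 0 t := by
  induction l with
  | nil => simp at hs
  | cons a l ih =>
    rw [List.flatMap_cons, prefixSum_append]
    by_cases h : t ∈ block a
    · rw [if_pos h, hd s a t ht h]
    · rw [if_neg h, h0, add_zero]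
      refine ih ((List.mem_cons.1 hs).resolve_left ?_)
      rintro rfl
      exact h ht

lemma sum_palindrome {T : Type*} (g : T → ℚ) (e : T → T) (l m : List T)
    (hg : ∀ t ∈ l, g (e t) = - g t) (hm : (m.map g).sum = 0) :
    ((l ++ m ++ (l.map e).reverse).map g).sum = 0 := by
  induction l with
  | nil => simpa using hm
  | cons a l ih =>
    have := ih fun t ht => hg t (List.mem_cons_of_mem _ ht)
    have ha := hg a (by simp)
    simp only [List.map_append, List.sum_append, List.map_cons, List.sum_cons, List.reverse_cons,
      List.map_nil, List.sum_nil, ha] at this ⊢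
    linarith

lemma prefixSum_palindrome {T : Type*} [DecidableEq T] (g : T → ℚ) (e : T → T) (l m : List T)
    (hg : ∀ t ∈ l, g (e t) = - g t) (hm : (m.map g).sum = 0)
    (hnd : (l ++ m ++ (l.map e).reverse).Nodup) (c : ℚ) (t : T) (ht : t ∈ l) :
    prefixSum g (l ++ m ++ (l.map e).reverse) c (e t) =
      prefixSum g (l ++ m ++ (l.map e).reverse) c t - g t := by
  induction l generalizing c with
  | nil => simp at ht
  | cons a l ih =>
    have hg' : ∀ t ∈ l, g (e t) = - g t := fun t ht => hg t (List.mem_cons_of_mem _ ht)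
    have heq : (a :: l) ++ m ++ ((a :: l).map e).reverse =
        a :: ((l ++ m ++ (l.map e).reverse) ++ [e a]) := by simp
    rw [heq] at hnd ⊢
    obtain ⟨h1, h2⟩ := List.nodup_cons.1 hnd
    rw [List.nodup_append] at h2
    obtain ⟨h3, -, h4⟩ := h2
    have hea : e a ∉ l ++ m ++ (l.map e).reverse := fun h => h4 _ h _ (by simp) rfl
    have hane : e a ≠ a := fun h => h1 (by simp [h])
    rcases List.mem_cons.1 ht with rfl | ht
    · simp only [prefixSum, if_true, if_neg hane]
      rw [prefixSum_append, if_neg hea, sum_palindrome g e l m hg' hm]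
      simp [prefixSum, hg t (by simp)]
    · have m1 : t ∈ l ++ m ++ (l.map e).reverse := by simp [ht]
      have m2 : e t ∈ l ++ m ++ (l.map e).reverse := by
        simp only [List.mem_append, List.mem_reverse, List.mem_map]
        exact Or.inr ⟨t, ht, rfl⟩
      have n1 : t ≠ a := by rintro rfl; exact h1 (List.mem_append_left _ m1)
      have n2 : e t ≠ a := fun h => h1 (List.mem_append_left _ (h ▸ m2))
      simp only [prefixSum, if_neg n1, if_neg n2]
      rw [prefixSum_append _ _ [e a], prefixSum_append _ _ [e a], if_pos m1, if_pos m2]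
      exact ih hg' h3 _ ht

/-- If a product of `k` conjugates of words of length `L` is trivial in a free group, then the
letters of these words can be paired with inverse letters, and any function that is odd under this
pairing and has zero sum along every word is the coboundary of a function on corners which is
compatible with the pairing. -/
theorem exists_pairing {X : Type*} {k L : ℕ} [NeZero L] (lab : Fin k × Fin L → X × Bool)
    (h : Fin k → List (X × Bool))
    (h1 : ((List.finRange k).map fun s => FreeGroup.mk (h s) *
      FreeGroup.mk ((List.finRange L).map fun i => lab (s, i)) * (FreeGroup.mk (h s))⁻¹).prod = 1) :
    ∃ θ : Fin k × Fin L → Fin k × Fin L, Function.Involutive θ ∧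
      (∀ d, lab (θ d) = ((lab d).1, !(lab d).2)) ∧
      ∀ f : Fin k × Fin L → ℚ, (∀ d, f (θ d) = - f d) → (∀ s, ∑ i, f (s, i) = 0) →
        ∃ P : Fin k × Fin L → ℚ, (∀ d, P d = P (d.1, d.2 - 1) + f d) ∧
          ∀ d, P ((θ d).1, (θ d).2 - 1) = P d := by
  classical
  let T := (Fin k × Fin L) ⊕ ((Σ s, Fin (h s).length) × Bool)
  let flip : X × Bool → X × Bool := fun x => (x.1, !x.2)
  let e : T → T := Sum.map id fun x => (x.1, !x.2)
  let p : T → Prop := fun t => ∃ d, t = Sum.inl d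
  let labT : T → X × Bool := Sum.elim lab fun x =>
    if x.2 then (h x.1.1)[x.1.2] else flip (h x.1.1)[x.1.2]
  let front : Fin k → List T := fun s =>
    (List.finRange (h s).length).map fun i => Sum.inr (⟨s, i⟩, true)
  let face : Fin k → List T := fun s => (List.finRange L).map fun i => Sum.inl (s, i)
  let block : Fin k → List T := fun s => front s ++ face s ++ ((front s).map e).reverse
  let W : List T := (List.finRange k).flatMap block
  have he : Function.Involutive e := by rintro (d | ⟨d, b⟩) <;> simp [e]
  have hp : ∀ t, p t → e t = t := by rintro _ ⟨d, rfl⟩; rfl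
  have hlabe : ∀ t, ¬ p t → labT (e t) = flip (labT t) := by
    rintro (d | ⟨d, b⟩) ht
    · exact absurd ⟨d, rfl⟩ ht
    · cases b <;> simp [labT, e, flip]
  have hmf : ∀ s d, Sum.inl d ∈ block s ↔ d.1 = s := by
    rintro s ⟨s', i⟩
    simp [block, front, face, e, eq_comm]
  have hmt : ∀ s x b, Sum.inr (x, b) ∈ block s ↔ x.1 = s := by
    rintro s ⟨s', i⟩ b
    simp only [block, front, face, e, List.mem_append, List.mem_reverse, List.mem_map]
    constructor
    · rintro ((⟨i, -, hi⟩ | ⟨i, -, hi⟩) | ⟨_, ⟨i, -, rfl⟩, hi⟩)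
      · exact (congrArg (Sum.elim (fun _ => s) fun x => x.1.1) hi).symm
      · cases hi
      · exact (congrArg (Sum.elim (fun _ => s) fun x => x.1.1) hi).symm
    · rintro rfl
      cases b
      · simp
      · simp
  have hd : ∀ s s' t, t ∈ block s → t ∈ block s' → s = s' := by
    rintro s s' (d | ⟨x, b⟩) h2 h3
    · rw [hmf] at h2 h3; rw [← h2, ← h3]
    · rw [hmt] at h2 h3; rw [← h2, ← h3]
  have hbl : ∀ t, ∃ s, t ∈ block s := by
    rintro (d | ⟨x, b⟩)
    · exact ⟨d.1, (hmf _ _).2 rfl⟩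
    · exact ⟨x.1, (hmt _ _ _).2 rfl⟩
  have hmW : ∀ t, t ∈ W := fun t => by
    obtain ⟨s, hs⟩ := hbl t
    exact List.mem_flatMap.2 ⟨s, List.mem_finRange s, hs⟩
  have hfront : ∀ s, (front s).Nodup := fun s =>
    (List.nodup_finRange _).map fun i j hij => by cases hij; rfl
  have hbnd : ∀ s, (block s).Nodup := by
    intro s
    have h3 : (face s).Nodup := (List.nodup_finRange _).map fun i j hij => by
      cases hij; rfl
    have h4 : ((front s).map e).Nodup := (hfront s).map he.injective
    rw [List.nodup_append, List.nodup_append]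
    refine ⟨⟨hfront s, h3, ?_⟩, List.nodup_reverse.2 h4, ?_⟩
    · simp [front, face]
    · simp [front, face, e]
      grind
  have hWnd : W.Nodup := by
    rw [List.nodup_flatMap]
    refine ⟨fun s _ => hbnd s, (List.nodup_finRange k).imp ?_⟩
    intro s s' hne t h2 h3
    exact hne (hd _ _ _ h2 h3)
  have hfl : ∀ s, (front s).map labT = h s := by
    intro s
    simp only [front, List.map_map]
    apply List.ext_getElem <;> simp [labT]
  have hlabb : ∀ s, (block s).map labT =
      h s ++ ((List.finRange L).map fun i => lab (s, i)) ++ FreeGroup.invRev (h s) := by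
    intro s
    have h3 : (face s).map labT = (List.finRange L).map fun i => lab (s, i) := by
      simp only [face, List.map_map]; rfl
    have h4 : ((front s).map e).map labT = (h s).map flip := by
      rw [← hfl s, List.map_map (l := front s), List.map_map (l := front s)]
      refine List.map_congr_left fun t ht => hlabe t ?_
      rintro ⟨d, rfl⟩
      simp [front] at ht
    simp only [block, List.map_append, List.map_reverse, h4, hfl, h3, FreeGroup.invRev]
    rfl
  have hmk : ∀ l : List (Fin k), FreeGroup.mk ((l.flatMap block).map labT) =
      (l.map fun s => FreeGroup.mk (h s) *
      FreeGroup.mk ((List.finRange L).map fun i => lab (s, i)) * (FreeGroup.mk (h s))⁻¹).prod := by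
    intro l
    induction l with
    | nil => rfl
    | cons s l ih =>
      rw [List.flatMap_cons, List.map_append, ← FreeGroup.mul_mk, ih, hlabb, List.map_cons,
        List.prod_cons, FreeGroup.inv_mk, FreeGroup.mul_mk, FreeGroup.mul_mk]
  have hred : FreeGroup.Red (W.map labT) [] := by
    have h2 : FreeGroup.mk (W.map labT) = FreeGroup.mk [] := by
      rw [hmk, h1]; rfl
    obtain ⟨c, hc1, hc2⟩ := FreeGroup.Red.exact.1 h2
    rwa [FreeGroup.Red.nil_iff.1 hc2] at hc1
  obtain ⟨μ, hμ, hpre⟩ := exists_matching labT W hWnd hred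
  have hμi : Function.Involutive μ := fun t => (hμ t (hmW t)).2.1
  have hμlab : ∀ t, labT (μ t) = flip (labT t) := fun t => (hμ t (hmW t)).2.2
  have hff : ∀ x, flip (flip x) = x := by rintro ⟨x, b⟩; simp [flip]
  obtain ⟨θ, hθ, hR, hext⟩ := exists_firstReturn hμi he hp
  have hθp : ∀ d : Fin k × Fin L, ∃ d', θ (Sum.inl d) = Sum.inl d' := fun d => (hθ _ ⟨d, rfl⟩).1
  choose θ' hθ' using hθp
  refine ⟨θ', ?_, ?_, ?_⟩
  · intro d
    have := (hθ (Sum.inl d) ⟨d, rfl⟩).2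
    rw [hθ', hθ'] at this
    exact Sum.inl_injective this
  · intro d
    have := hR (fun d t => labT t = flip (labT d)) hμlab
      (fun d t hdt ht => by rw [hμlab, hlabe t ht, hff, hdt]) (Sum.inl d) ⟨d, rfl⟩
    rw [hθ'] at this
    exact this
  · intro f hf hf0
    obtain ⟨g, hg1, hg2, hg3⟩ := hext (Sum.elim f 0) (by
      rintro _ ⟨d, rfl⟩
      rw [hθ']
      exact hf d)
    have hgf : ∀ d, g (Sum.inl d) = f d := fun d => hg1 _ ⟨d, rfl⟩
    have hpf : ∀ s, ∀ t ∈ front s, ¬ p t := by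
      rintro s t ht ⟨d, rfl⟩
      simp [front] at ht
    have hge : ∀ s, ∀ t ∈ front s, g (e t) = - g t := fun s t ht => hg3 t (hpf s t ht)
    have hface : ∀ s, ((face s).map g).sum = 0 := by
      intro s
      simp only [face, List.map_map]
      rw [← List.ofFn_eq_map, List.sum_ofFn]
      simpa [hgf] using hf0 s
    set Q : T → ℚ := prefixSum g W 0 with hQ
    have hQb : ∀ s t, t ∈ block s → Q t = prefixSum g (block s) 0 t := fun s t ht =>
      prefixSum_flatMap g block (fun s => sum_palindrome g e _ _ (hge s) (hface s)) hd _ s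
        (List.mem_finRange s) t ht
    have hQμ : ∀ t, Q (μ t) = Q t - g t := fun t => hpre g (fun t _ => hg2 t) t (hmW t)
    have hQf : ∀ s, ∀ t ∈ front s, Q (e t) = Q t - g t := by
      intro s t ht
      rw [hQb s t, hQb s (e t)]
      · exact prefixSum_palindrome g e _ _ (hge s) (hface s) (hbnd s) 0 t ht
      · simp only [block, List.mem_append, List.mem_reverse, List.mem_map]
        exact Or.inr ⟨t, ht, rfl⟩
      · simp only [block, List.mem_append]
        exact Or.inl (Or.inl ht)
    have hQe : ∀ t, ¬ p t → Q (e t) = Q t - g t := by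
      rintro (d | ⟨⟨s, i⟩, b⟩) ht
      · exact absurd ⟨d, rfl⟩ ht
      · have hm : (Sum.inr (⟨s, i⟩, true) : T) ∈ front s := by simp [front]
        cases b
        · have h2 := hQf s _ hm
          have h3 := hge s _ hm
          change Q (Sum.inr (⟨s, i⟩, true)) = Q (Sum.inr (⟨s, i⟩, false)) - _
          change Q (Sum.inr (⟨s, i⟩, false)) = _ at h2
          change g (Sum.inr (⟨s, i⟩, false)) = _ at h3
          rw [h3, h2]; ring
        · exact hQf s _ hm
    have hcyc : ∀ d : Fin k × Fin L, Q (Sum.inl d) = Q (Sum.inl (d.1, d.2 - 1)) + f d := by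
      rintro ⟨s, i⟩
      have hm : ∀ j, (Sum.inl (s, j) : T) ∉ front s := fun j => by simp [front]
      have hm' : ∀ j, (Sum.inl (s, j) : T) ∈ face s := fun j => by simp [face]
      have hQi : ∀ j, Q (Sum.inl (s, j)) =
          prefixSum g (face s) (0 + ((front s).map g).sum) (Sum.inl (s, j)) := by
        intro j
        rw [hQb s _ ((hmf _ _).2 rfl)]
        simp only [block]
        rw [prefixSum_append, if_pos (List.mem_append_right _ (hm' j)), prefixSum_append,
          if_neg (hm j)]
      rw [hQi, hQi, ← hgf]
      refine prefixSum_finRange_cyclic g (fun i => (Sum.inl (s, i) : T)) ?_ _ ?_ i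
      · intro i j hij; cases hij; rfl
      · simpa [hgf] using hf0 s
    refine ⟨fun d => Q (Sum.inl d), hcyc, fun d => ?_⟩
    have h2 := hR (fun d t => Q t = Q d - g d ∧ Q t - g t = Q d)
      (fun t => ⟨hQμ t, by rw [hQμ, hg2]; ring⟩)
      (fun d t hdt ht => by
        rw [hQμ, hg2, hQe t ht, hg3 t ht]
        exact ⟨by linarith [hdt.1], by linarith [hdt.2]⟩) (Sum.inl d) ⟨d, rfl⟩
    rw [hθ', hgf] at h2
    have h3 := hcyc (θ' d)
    rw [hf] at h3
    change Q _ = Q _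
    linarith [h2.1]

end Pairing

section Counting

lemma card_descents_add_le {k L : ℕ} [NeZero L] (e : Fin L → Bool) (θ : Fin k × Fin L → Fin k × Fin L)
    (hθ : Function.Involutive θ) (hsign : ∀ d, e (θ d).2 = !e d.2) :
    Fintype.card {d : Fin k × Fin L // (θ d).2 - 1 < d.2} + k ≤
      Fintype.card {d : Fin k × Fin L // e d.2 = true} := by
  classical
  let pos : Fin k × Fin L → {d : Fin k × Fin L // e d.2 = true} := fun d =>
    if h : e d.2 = true then ⟨d, h⟩ else ⟨θ d, by rw [hsign]; simpa using h⟩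
  have hpos : ∀ d d', pos d = pos d' → d = d' ∨ θ d = d' := by
    intro d d' h
    have h' := congrArg Subtype.val h
    simp only [pos] at h'
    split_ifs at h' with h1 h2 h2
    · exact Or.inl h'
    · right; rw [show d = θ d' from h', hθ]
    · exact Or.inr h'
    · exact Or.inl (hθ.injective h')
  have hdesc : ∀ d : Fin k × Fin L, (θ d).2 - 1 < d.2 → (θ d).2 ≠ 0 ∧ (θ d).2 ≤ d.2 := by
    intro d hd
    have h0 : (θ d).2 ≠ 0 := by
      intro h0
      rw [h0] at hd
      obtain ⟨n, rfl⟩ := Nat.exists_eq_succ_of_ne_zero (NeZero.ne L)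
      rw [zero_sub, Fin.lt_def, Fin.coe_neg_one] at hd
      have := d.2.2
      omega
    refine ⟨h0, ?_⟩
    rw [Fin.lt_def, Fin.val_sub_one_of_ne_zero h0] at hd
    rw [Fin.le_def]
    omega
  have hne : ∀ d, (θ d).2 ≠ d.2 := by
    intro d h
    have := hsign d
    rw [h] at this
    cases h1 : e d.2 <;> simp [h1] at this
  let F : {d : Fin k × Fin L // (θ d).2 - 1 < d.2} ⊕ Fin k → {d : Fin k × Fin L // e d.2 = true} :=
    Sum.elim (fun d => pos d.1) fun s => pos (s, 0)
  have hcross : ∀ (d : Fin k × Fin L) (s : Fin k), (θ d).2 - 1 < d.2 → pos d ≠ pos (s, 0) := by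
    intro d s hd h
    obtain ⟨h0, hle⟩ := hdesc d hd
    rcases hpos _ _ h with h | h
    · subst h
      exact h0 (nonpos_iff_eq_zero.1 hle)
    · exact h0 (by rw [h])
  have hF : Function.Injective F := by
    rintro (⟨d, hd⟩ | s) (⟨d', hd'⟩ | s') h
    · rcases hpos d d' h with h | h
      · subst h; rfl
      · have h1 := (hdesc d hd).2
        have h2 := (hdesc d' hd').2
        rw [← h, hθ] at h2
        exact absurd (le_antisymm h1 h2) (hne d)
    · exact absurd h (hcross d s' hd)
    · exact absurd h.symm (hcross d' s hd')
    · rcases hpos _ _ h with h | h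
      · cases h; rfl
      · exact absurd (by rw [h]) (hne (s, 0))
  simpa using Fintype.card_le_of_injective F hF

lemma exists_iterate_descent {k L : ℕ} (ν : Fin k × Fin L → Fin k × Fin L) (hν : Function.Injective ν)
    (hacyc : ∀ d, ¬ ∀ n, (ν^[n] d).2 = d.2) (d : Fin k × Fin L) :
    ∃ n, (ν (ν^[n] d)).2 < (ν^[n] d).2 := by
  by_contra! hcon
  have hmono : Monotone fun n => (ν^[n] d).2 := monotone_nat_of_le_succ fun n => by
    simpa only [Function.iterate_succ_apply'] using hcon n
  obtain ⟨N, hN, hper⟩ := hν.mem_periodicPts d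
  refine hacyc d fun n => le_antisymm ?_ (hmono (Nat.zero_le n))
  have h1 := hmono (Nat.le_mul_of_pos_left n hN)
  have h2 : ν^[N * n] d = d := hper.mul_const n
  simpa only [h2] using h1

/-- An involution of the positions of `k` words of length `L` that inverts signs, has potentials for its
odd functions, and has no horizontal orbit of the associated return map, does not exist. -/
theorem no_pairing {k L : ℕ} [NeZero k] [NeZero L] (e : Fin L → Bool) (θ : Fin k × Fin L → Fin k × Fin L)
    (hθ : Function.Involutive θ) (hsign : ∀ d, e (θ d).2 = !e d.2)
    (H : ∀ f : Fin k × Fin L → ℚ, (∀ d, f (θ d) = - f d) → (∀ s, ∑ i, f (s, i) = 0) →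
      ∃ P : Fin k × Fin L → ℚ, (∀ d, P d = P (d.1, d.2 - 1) + f d) ∧
        ∀ d, P ((θ d).1, (θ d).2 - 1) = P d)
    (hacyc : ∀ d, ¬ ∀ n, ((fun d => ((θ d).1, (θ d).2 - 1))^[n] d).2 = d.2) : False := by
  classical
  set ν : Fin k × Fin L → Fin k × Fin L := fun d => ((θ d).1, (θ d).2 - 1) with hνdef
  have hν : Function.Injective ν := by
    intro d d' h
    apply hθ.injective
    obtain ⟨h1, h2⟩ := Prod.ext_iff.1 h
    exact Prod.ext h1 (sub_left_injective h2)
  let Inv : Submodule ℚ (Fin k × Fin L → ℚ) :=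
    { carrier := {P | ∀ d, P (ν d) = P d}
      add_mem' := fun {a b} ha hb d => by simp only [Pi.add_apply, ha d, hb d]
      zero_mem' := fun d => rfl
      smul_mem' := fun c a ha d => by simp only [Pi.smul_apply, ha d] }
  let res : Inv →ₗ[ℚ] ({d : Fin k × Fin L // (θ d).2 - 1 < d.2} → ℚ) :=
    { toFun := fun P d => P.1 d.1
      map_add' := fun _ _ => rfl
      map_smul' := fun _ _ => rfl }
  have hit : ∀ P : Inv, ∀ n d, P.1 (ν^[n] d) = P.1 d := by
    intro P n d
    induction n with
    | zero => rfl
    | succ n ih => rw [Function.iterate_succ_apply', P.2, ih]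
  have hres : Function.Injective res := by
    intro P Q h
    ext d
    obtain ⟨n, hn⟩ := exists_iterate_descent ν hν hacyc d
    have := congrFun h ⟨ν^[n] d, hn⟩
    rw [← hit P n, ← hit Q n]
    exact this
  have hInv : Module.finrank ℚ Inv ≤ Fintype.card {d : Fin k × Fin L // (θ d).2 - 1 < d.2} := by
    simpa using LinearMap.finrank_le_finrank_of_injective hres
  let δ : Inv →ₗ[ℚ] (Fin k × Fin L → ℚ) :=
    { toFun := fun P d => P.1 d - P.1 (d.1, d.2 - 1)
      map_add' := fun P Q => by
        ext d; simp only [Submodule.coe_add, Pi.add_apply]; ring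
      map_smul' := fun c P => by
        ext d; simp only [Submodule.coe_smul, Pi.smul_apply, smul_eq_mul, RingHom.id_apply]; ring }
  let ext : ({d : Fin k × Fin L // e d.2 = true} → ℚ) →ₗ[ℚ] (Fin k × Fin L → ℚ) :=
    { toFun := fun f d => if h : e d.2 = true then f ⟨d, h⟩ else
        - f ⟨θ d, by rw [hsign]; simpa using h⟩
      map_add' := fun f g => by
        ext d
        simp only [Pi.add_apply]
        split_ifs <;> ring
      map_smul' := fun c f => by
        ext d
        simp only [Pi.smul_apply, smul_eq_mul, RingHom.id_apply]
        split_ifs <;> ring }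
  have hext : Function.Injective ext := by
    intro f g h
    ext ⟨d, hd⟩
    have := congrFun h d
    simpa [ext, hd] using this
  have hodd : ∀ f d, ext f (θ d) = - ext f d := by
    intro f d
    have h1 := hsign d
    simp only [ext, LinearMap.coe_mk, AddHom.coe_mk, hθ d]
    by_cases h : e d.2 = true
    · rw [dif_pos h, dif_neg (by simp [h1, h])]
    · rw [dif_neg h, dif_pos (by simpa [h1] using h), neg_neg]
  let Γ : ({d : Fin k × Fin L // e d.2 = true} → ℚ) →ₗ[ℚ] (Fin k → ℚ) :=
    { toFun := fun f s => ∑ i, ext f (s, i)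
      map_add' := fun f g => by
        ext s; simp only [map_add, Pi.add_apply, Finset.sum_add_distrib]
      map_smul' := fun c f => by
        ext s
        simp only [map_smul, Pi.smul_apply, smul_eq_mul, RingHom.id_apply, Finset.mul_sum] }
  have hle : (LinearMap.ker Γ).map ext ≤ LinearMap.range δ := by
    rintro _ ⟨f, hf, rfl⟩
    obtain ⟨P, h1, h2⟩ := H (ext f) (hodd f) fun s => congrFun (LinearMap.mem_ker.1 hf) s
    refine ⟨⟨P, h2⟩, ?_⟩
    ext d
    exact sub_eq_of_eq_add' (h1 d)
  have e1 := Submodule.finrank_mono hle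
  rw [← (Submodule.equivMapOfInjective ext hext _).finrank_eq] at e1
  have e2 := LinearMap.finrank_range_add_finrank_ker Γ
  have e3 := LinearMap.finrank_range_add_finrank_ker δ
  have e4 := Submodule.finrank_le (LinearMap.range Γ)
  have e5 := card_descents_add_le e θ hθ hsign
  have e6 : 1 ≤ Module.finrank ℚ (LinearMap.ker δ) := by
    rw [Submodule.one_le_finrank_iff, Submodule.ne_bot_iff]
    refine ⟨⟨fun _ => 1, fun _ => rfl⟩, ?_, ?_⟩
    · rw [LinearMap.mem_ker]
      ext d
      exact sub_self _
    · intro h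
      have := congrFun (congrArg Subtype.val h) (0, 0)
      exact one_ne_zero this
  simp only [Module.finrank_fintype_fun_eq_card, Fintype.card_fin] at e2 e4
  omega

end Counting

section FreeGroupAction

variable {A Y : Type*} [Group A] [MulAction A Y]

variable (A Y) in
/-- The action on a free group induced by an action on the generators. -/
def freeGroupAut : A →* MulAut (FreeGroup Y) where
  toFun a := FreeGroup.freeGroupCongr (MulAction.toPerm a)
  map_one' := by
    refine MulEquiv.toMonoidHom_injective (FreeGroup.ext_hom _ _ fun y => ?_)
    simp
  map_mul' a b := by
    refine MulEquiv.toMonoidHom_injective (FreeGroup.ext_hom _ _ fun y => ?_)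
    simp [mul_smul]

lemma freeGroupAut_mk (a : A) (u : List (Y × Bool)) :
    freeGroupAut A Y a (FreeGroup.mk u) = FreeGroup.mk (u.map fun x => (a • x.1, x.2)) := rfl

lemma FreeGroup.IsCyclicallyReduced.snd_eq {X : Type*} {u : List (X × Bool)}
    (hu : FreeGroup.IsCyclicallyReduced u) [NeZero u.length] (i : Fin u.length)
    (h : (u[i]).1 = (u[i + 1]).1) : (u[i]).2 = (u[i + 1]).2 := by
  by_cases hi : (i : ℕ) + 1 < u.length
  · have h1 : ((i + 1 : Fin u.length) : ℕ) = i + 1 := Fin.val_add_one_of_lt' hi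
    simp only [Fin.getElem_fin, h1] at h ⊢
    exact List.isChain_iff_getElem.1 hu.isReduced i hi h
  · have h1 : (i : ℕ) + 1 = u.length := by omega
    have h2 : ((i + 1 : Fin u.length) : ℕ) = 0 := by
      rw [Fin.val_add, Fin.val_one', Nat.add_mod_mod, h1, Nat.mod_self]
    have hne : u ≠ [] := List.ne_nil_of_length_pos (NeZero.pos _)
    simp only [Fin.getElem_fin, h2] at h ⊢
    refine hu.2 _ ?_ _ ?_ h
    · rw [List.getLast?_eq_getElem?]
      simp [← h1]
    · rw [List.head?_eq_getElem?]
      simp [NeZero.pos]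

/-- If no nonempty product of elements moving `x` to a different point `y` is trivial, then no
product of conjugates of translates of a nontrivial element of the free group is trivial. -/
theorem prod_conj_freeGroupAut_ne_one
    (hY : ∀ x y : Y, x ≠ y → ∀ l : List A, l ≠ [] → (∀ c ∈ l, c • x = y) → l.prod ≠ 1)
    (w : FreeGroup Y) (hw : w ≠ 1) (l : List (A × FreeGroup Y)) (hl : l ≠ []) :
    (l.map fun p => p.2 * freeGroupAut A Y p.1 w * p.2⁻¹).prod ≠ 1 := by
  classical
  intro h1
  set u := FreeGroup.reduceCyclically w.toWord with hu_def
  set v := FreeGroup.mk (FreeGroup.reduceCyclically.conjugator w.toWord) with hv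
  have hwu : w = v * FreeGroup.mk u * v⁻¹ := by
    rw [hv, FreeGroup.inv_mk, FreeGroup.mul_mk, FreeGroup.mul_mk,
      FreeGroup.reduceCyclically.conj_conjugator_reduceCyclically, FreeGroup.mk_toWord]
  have hu : FreeGroup.IsCyclicallyReduced u :=
    FreeGroup.reduceCyclically.isCyclicallyReduced FreeGroup.isReduced_toWord
  have hu0 : u ≠ [] := by
    intro h
    apply hw
    rw [hwu, h, ← FreeGroup.one_eq_mk, mul_one, mul_inv_cancel]
  have : NeZero u.length := ⟨by simpa using hu0⟩
  have : NeZero l.length := ⟨by simpa using hl⟩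
  let lab : Fin l.length × Fin u.length → Y × Bool := fun d =>
    ((l[d.1]).1 • (u[d.2]).1, (u[d.2]).2)
  obtain ⟨θ, hθ, hlab, H⟩ := exists_pairing lab
    (fun s => ((l[s]).2 * freeGroupAut A Y (l[s]).1 v).toWord) (by
      rw [← h1]
      congr 1
      apply List.ext_getElem (by simp)
      intro s hs hs'
      have h2 : ((List.finRange u.length).map fun i => lab (⟨s, by simpa using hs⟩, i)) =
          u.map fun x => ((l[s]'(by simpa using hs)).1 • x.1, x.2) := by
        apply List.ext_getElem <;> simp [lab]
      simp only [List.getElem_map, List.getElem_finRange, FreeGroup.mk_toWord]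
      simp only [Fin.cast_mk, h2, ← freeGroupAut_mk, Fin.getElem_fin]
      rw [show freeGroupAut A Y (l[s]'(by simpa using hs)).1 w = _ from congrArg _ hwu]
      simp only [map_mul, map_inv]
      group)
  refine no_pairing (fun i => (u[i]).2) θ hθ (fun d => congrArg Prod.snd (hlab d)) H ?_
  intro d hd
  set ν : Fin l.length × Fin u.length → Fin l.length × Fin u.length :=
    fun d => ((θ d).1, (θ d).2 - 1) with hνdef
  have hν : Function.Injective ν := by
    intro d d' h
    apply hθ.injective
    obtain ⟨h1, h2⟩ := Prod.ext_iff.1 h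
    exact Prod.ext h1 (sub_left_injective h2)
  have hstep : ∀ n, θ (ν^[n] d) = ((ν^[n + 1] d).1, d.2 + 1) := by
    intro n
    have := hd (n + 1)
    rw [Function.iterate_succ_apply'] at this ⊢
    exact Prod.ext rfl (sub_eq_iff_eq_add.1 this)
  let b : ℕ → A := fun n => (l[(ν^[n] d).1]).1
  have hb : ∀ n, ((b (n + 1))⁻¹ * b n) • (u[d.2]).1 = (u[d.2 + 1]).1 := by
    intro n
    have h2 := congrArg Prod.fst (hlab (ν^[n] d))
    rw [hstep] at h2
    simp only [lab, hd n] at h2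
    rw [mul_smul, inv_smul_eq_iff]
    exact h2.symm
  have hne : (u[d.2]).1 ≠ (u[d.2 + 1]).1 := by
    intro h
    have h2 := hu.snd_eq d.2 h
    have h3 := congrArg Prod.snd (hlab d)
    have h4 := hstep 0
    simp only [Function.iterate_zero, id] at h4
    rw [h4] at h3
    simp only [lab] at h3
    rw [← h2] at h3
    simp at h3
  obtain ⟨N, hN, hper⟩ := hν.mem_periodicPts d
  have hprod : ∀ n, (((List.range n).reverse).map fun m => (b (m + 1))⁻¹ * b m).prod =
      (b n)⁻¹ * b 0 := by
    intro n
    induction n with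
    | zero => simp
    | succ n ih =>
      rw [List.range_succ, List.reverse_append, List.map_append, List.prod_append, ih]
      simp [mul_assoc]
  refine hY _ _ hne (((List.range N).reverse).map fun m => (b (m + 1))⁻¹ * b m) ?_ ?_ ?_
  · simpa using hN.ne'
  · intro c hc
    obtain ⟨m, -, rfl⟩ := List.mem_map.1 hc
    exact hb m
  · rw [hprod]
    have : b N = b 0 :=
      congrArg (fun d' : Fin l.length × Fin u.length => (l[d'.1]).1) hper
    rw [this, inv_mul_cancel]

theorem not_isGenTorsion_inl
    (hY : ∀ x y : Y, x ≠ y → ∀ l : List A, l ≠ [] → (∀ c ∈ l, c • x = y) → l.prod ≠ 1)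
    (w : FreeGroup Y) :
    ¬ IsGenTorsion (SemidirectProduct.inl w : FreeGroup Y ⋊[freeGroupAut A Y] A) := by
  rintro ⟨hw, l, hl, h1⟩
  have hw' : w ≠ 1 := by
    rintro rfl
    exact hw (map_one _)
  refine prod_conj_freeGroupAut_ne_one hY w hw'
    (l.map fun h => (h.right⁻¹, freeGroupAut A Y h.right⁻¹ h.left⁻¹)) (by simpa using hl) ?_
  apply SemidirectProduct.inl_injective (φ := freeGroupAut A Y)
  rw [map_one, ← h1, map_list_prod, List.map_map, List.map_map]
  congr 1
  refine List.map_congr_left fun h _ => ?_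
  ext1 <;> simp

end FreeGroupAction

section Amalgam

variable {A : Type*} [Group A] (C : Subgroup A) (I : Type*)

/-- The group acts on copies of its coset space, by left multiplication on each copy. -/
instance cosetCopiesAction : MulAction A (I × (A ⧸ C)) where
  smul a x := (x.1, a • x.2)
  one_smul x := Prod.ext rfl (one_smul A x.2)
  mul_smul a b x := Prod.ext rfl (mul_smul a b x.2)

variable {C I}

lemma smul_cosetCopies (a : A) (x : I × (A ⧸ C)) : a • x = (x.1, a • x.2) := rfl

lemma prod_ne_one_of_smul_eq
    (hRTF : ∀ g : A, g ∉ C → ∀ l : List A, l ≠ [] → (∀ c ∈ l, c ∈ C) →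
      (l.map fun c => g * c).prod ≠ 1)
    (x y : I × (A ⧸ C)) (hxy : x ≠ y) (l : List A) (hl : l ≠ []) (h : ∀ c ∈ l, c • x = y) :
    l.prod ≠ 1 := by
  obtain ⟨i, x⟩ := x
  obtain ⟨j, y⟩ := y
  induction x using QuotientGroup.induction_on with | H g =>
  induction y using QuotientGroup.induction_on with | H g' =>
  have hc : ∀ c ∈ l, i = j ∧ g'⁻¹ * (c * g) ∈ C := by
    intro c hc
    obtain ⟨h1, h2⟩ := Prod.ext_iff.1 (h c hc)
    exact ⟨h1, QuotientGroup.eq.1 (Eq.symm h2)⟩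
  obtain ⟨c₀, hc₀⟩ := List.exists_mem_of_ne_nil l hl
  have hij := (hc c₀ hc₀).1
  subst hij
  have hg : g⁻¹ * g' ∉ C := fun h => hxy (by rw [QuotientGroup.eq.2 h])
  intro h1
  refine hRTF _ hg (l.map fun c => g'⁻¹ * (c * g)) (by simpa using hl) ?_ ?_
  · intro c' hc'
    obtain ⟨c, hcl, rfl⟩ := List.mem_map.1 hc'
    exact (hc c hcl).2
  · have h2 : ∀ m : List A, ((m.map fun c => g'⁻¹ * (c * g)).map fun c => g⁻¹ * g' * c).prod =
        g⁻¹ * m.prod * g := by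
      intro m
      induction m with
      | nil => simp
      | cons a m ih =>
        rw [List.map_cons, List.map_cons, List.prod_cons, ih, List.prod_cons]
        group
    rw [h2, h1]
    simp

/-- The word of the image in the free group of a word in copies of `A`. -/
def cosetWord (C : Subgroup A) : List (I × A) → List ((I × (A ⧸ C)) × Bool)
  | [] => []
  | x :: l => ((x.1, (1 : A)), false) :: ((x.1, x.2), true) ::
      (cosetWord C l).map fun y => (x.2 • y.1, y.2)

lemma isReduced_cosetWord (l : List (I × A)) (hl : l.IsChain fun x y => x.1 ≠ y.1)
    (hC : ∀ x ∈ l, x.2 ∉ C) : FreeGroup.IsReduced (cosetWord C l) := by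
  induction l with
  | nil => exact FreeGroup.IsReduced.nil
  | cons x l ih =>
    have h1 : FreeGroup.IsReduced ((cosetWord C l).map fun y => (x.2 • y.1, y.2)) := by
      refine (List.isChain_map _).2 ((ih hl.tail fun y hy => hC y (by simp [hy])).imp ?_)
      intro y z h h2
      exact h (smul_left_cancel x.2 h2)
    simp only [cosetWord]
    rw [FreeGroup.isReduced_cons_cons]
    refine ⟨fun h => ?_, ?_⟩
    · have h2 := QuotientGroup.eq.1 (Prod.ext_iff.1 h).2
      exact absurd (by simpa using h2) (hC x (by simp))
    · cases l with
      | nil => exact FreeGroup.IsReduced.singleton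
      | cons y l =>
        simp only [cosetWord, List.map_cons] at h1 ⊢
        rw [FreeGroup.isReduced_cons_cons]
        refine ⟨fun h => ?_, h1⟩
        exact absurd (Prod.ext_iff.1 h).1 (List.isChain_cons_cons.1 hl).1

/-- The embedding of `A` into the semidirect product as a complement which depends on `i`. -/
def cosetConj (C : Subgroup A) (i : I) :
    A →* FreeGroup (I × (A ⧸ C)) ⋊[freeGroupAut A (I × (A ⧸ C))] A :=
  (MulAut.conj (SemidirectProduct.inl (FreeGroup.of (i, ((1 : A) : A ⧸ C))))⁻¹).toMonoidHom.comp
    SemidirectProduct.inr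

lemma cosetConj_apply (i : I) (a : A) : cosetConj C i a =
    ⟨FreeGroup.mk [((i, ((1 : A) : A ⧸ C)), false), ((i, (a : A ⧸ C)), true)], a⟩ := by
  have : a • ((1 : A) : A ⧸ C) = (a : A ⧸ C) := by
    rw [MulAction.Quotient.smul_mk, smul_eq_mul, mul_one]
  ext1
  · simp [cosetConj, FreeGroup.of, FreeGroup.invRev, freeGroupAut_mk, smul_cosetCopies, this]
  · simp [cosetConj]

/-- The homomorphism from the amalgam of copies of `A` that conjugates the copies of `A` in the
semidirect product apart. -/
def amalgamHom (C : Subgroup A) (I : Type*) : Monoid.PushoutI (fun _ : I => C.subtype) →*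
    FreeGroup (I × (A ⧸ C)) ⋊[freeGroupAut A (I × (A ⧸ C))] A :=
  Monoid.PushoutI.lift (cosetConj C) (SemidirectProduct.inr.comp C.subtype) fun i =>
    MonoidHom.ext fun c => (cosetConj_apply i c.1).trans <| by
      have : ((c : A) : A ⧸ C) = ((1 : A) : A ⧸ C) := QuotientGroup.eq.2 (by simp)
      ext1
      · rw [this]
        exact Quot.sound (FreeGroup.Red.Step.not (L₁ := []) (L₂ := []))
      · rfl

lemma amalgamHom_of (i : I) (a : A) :
    amalgamHom C I (Monoid.PushoutI.of i a) =
      ⟨FreeGroup.mk [((i, ((1 : A) : A ⧸ C)), false), ((i, (a : A ⧸ C)), true)], a⟩ :=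
  (Monoid.PushoutI.lift_of (φ := fun _ : I => C.subtype) (cosetConj C) _ _ a).trans
    (cosetConj_apply i a)

lemma amalgamHom_prod_left (l : List (I × A)) :
    (amalgamHom C I ((l.map fun x => Monoid.PushoutI.of x.1 x.2).prod)).left =
      FreeGroup.mk (cosetWord C l) := by
  induction l with
  | nil => simp [cosetWord, FreeGroup.one_eq_mk]
  | cons x l ih =>
    rw [List.map_cons, List.prod_cons, map_mul, SemidirectProduct.mul_left, ih, amalgamHom_of,
      freeGroupAut_mk, FreeGroup.mul_mk]
    rfl

lemma amalgamHom_injective : Function.Injective (amalgamHom C I) := by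
  classical
  rw [injective_iff_map_eq_one]
  intro g hg
  have hinj : ∀ _ : I, Function.Injective C.subtype := fun _ => C.subtype_injective
  obtain ⟨d⟩ := Monoid.PushoutI.NormalWord.transversal_nonempty (fun _ : I => C.subtype) hinj
  obtain ⟨w, rfl⟩ := (Monoid.PushoutI.NormalWord.equiv (d := d)).symm.surjective g
  change amalgamHom C I w.prod = 1 at hg
  change w.prod = 1
  let l : List (I × A) := w.toList.map fun x => (x.1, x.2)
  have hw : w.prod = Monoid.PushoutI.base _ w.head *
      (l.map fun x => Monoid.PushoutI.of x.1 x.2).prod := by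
    rw [Monoid.PushoutI.NormalWord.prod, Monoid.CoprodI.Word.prod, map_list_prod, List.map_map,
      List.map_map]
    refine congrArg _ (congrArg _ (List.map_congr_left fun x _ => ?_))
    exact Monoid.PushoutI.ofCoprodI_of _ _
  have hbase : amalgamHom C I (Monoid.PushoutI.base _ w.head) = SemidirectProduct.inr w.head.1 :=
    Monoid.PushoutI.lift_base (φ := fun _ : I => C.subtype) (cosetConj C) _ _ w.head
  have hleft := congrArg SemidirectProduct.left hg
  rw [hw, map_mul, hbase, SemidirectProduct.mul_left, amalgamHom_prod_left] at hleft
  have hmk : FreeGroup.mk (cosetWord C l) = 1 := by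
    simpa using hleft
  have hred : FreeGroup.IsReduced (cosetWord C l) := by
    refine isReduced_cosetWord l ((List.isChain_map _).2 w.chain_ne) ?_
    intro x hx
    obtain ⟨⟨i, a⟩, hy, rfl⟩ := List.mem_map.1 hx
    intro haC
    refine w.ne_one _ hy ?_
    have h1 := @(d.compl i).1 (⟨a, ⟨⟨a, haC⟩, rfl⟩⟩, ⟨1, d.one_mem i⟩)
      (⟨1, one_mem _⟩, ⟨a, w.normalized i a hy⟩) (by simp)
    exact congrArg (fun x => x.2.1) h1.symm
  have hl : l = [] := by
    have := hred.reduce_eq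
    rw [← FreeGroup.toWord_mk, hmk, FreeGroup.toWord_one] at this
    cases h : l with
    | nil => rfl
    | cons x l => rw [h] at this; simp [cosetWord] at this
  rw [hw, hl] at hg ⊢
  rw [List.map_nil, List.prod_nil, mul_one] at hg ⊢
  rw [hbase] at hg
  have : w.head = 1 := Subtype.ext (SemidirectProduct.inr_injective (hg.trans (map_one _).symm))
  rw [this, map_one]

end Amalgam

lemma IsGenTorsion.map {G H : Type*} [Group G] [Group H] {g : G} (hg : IsGenTorsion g) (f : G →* H)
    (hf : f g ≠ 1) : IsGenTorsion (f g) := by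
  obtain ⟨-, l, hl, h⟩ := hg
  refine ⟨hf, l.map f, by simpa using hl, ?_⟩
  rw [← map_one f, ← h, map_list_prod, List.map_map, List.map_map]
  congr 2
  funext x
  simp

/-- Let `A` be GTF with `C ≤ A` relatively torsion-free, and let `G = *_C A` be the
amalgam of copies of `A` (index set of cardinality ≥ 2) over `C`.  The family
`{NSS_A({a}) : a ≠ 1}` (one copy for each factor) consists of normal subsemigroups,
covers `A \ {1}`, has matching `C`-intersections across factors, and consequently `G`
is GTF. -/
theorem copies_amalgam_GTF {A : Type*} [Group A] (C : Subgroup A)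
    {I : Type*} (i₀ i₁ : I) (hI : i₀ ≠ i₁)
    (hGTF : IsGTF A)
    (hRTF : ∀ g : A, g ∉ C → ∀ l : List A, l ≠ [] → (∀ c ∈ l, c ∈ C) →
      (l.map fun c => g * c).prod ≠ 1) :
    (∀ a : A, a ≠ 1 → IsNormalSubsemigroup (nss A {a})) ∧
    ({x : A | x ≠ 1} = ⋃ a ∈ {a : A | a ≠ 1}, nss A {a}) ∧
    (∀ a : A, a ≠ 1 → ∃ b : A, b ≠ 1 ∧
      ∀ h : C, (h : A) ∈ nss A {a} ↔ (h : A) ∈ nss A {b}) ∧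
    IsGTF (Monoid.PushoutI (fun _ : I => C.subtype)) := by
  refine ⟨fun a _ => ⟨?_, ?_⟩, ?_, fun a ha => ⟨a, ha, fun _ => Iff.rfl⟩, ?_⟩
  · rintro x ⟨l, hl, h1, rfl⟩ y ⟨m, -, h2, rfl⟩
    refine ⟨l ++ m, by simp [hl], fun p hp => ?_, by simp⟩
    exact (List.mem_append.1 hp).elim (h1 p) (h2 p)
  · rintro x ⟨l, hl, h1, rfl⟩ g
    refine ⟨l.map fun p => (p.1, p.2 * g), by simpa using hl, ?_, ?_⟩
    · intro p hp
      obtain ⟨q, hq, rfl⟩ := List.mem_map.1 hp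
      exact h1 q hq
    · have := map_list_prod (MulAut.conj g⁻¹) (l.map fun p => p.2⁻¹ * p.1 * p.2)
      rw [MulAut.conj_apply, inv_inv] at this
      rw [this, List.map_map, List.map_map]
      congr 1
      refine List.map_congr_left fun p _ => ?_
      simp [mul_assoc]
  · ext x
    simp only [Set.mem_ofPred_eq, Set.mem_iUnion, exists_prop]
    constructor
    · intro hx
      exact ⟨x, hx, [(x, 1)], by simp⟩
    · rintro ⟨a, ha, l, hl, h1, rfl⟩ h
      refine hGTF a ⟨ha, l.map Prod.snd, by simpa using hl, ?_⟩
      rw [← h, List.map_map]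
      congr 1
      refine List.map_congr_left fun p hp => ?_
      rw [Function.comp_apply, h1 p hp]
  · intro g hg
    have h1 := hg.map (amalgamHom C I)
      fun h => hg.1 (amalgamHom_injective (h.trans (map_one _).symm))
    by_cases h2 : (amalgamHom C I g).right = 1
    · refine not_isGenTorsion_inl (prod_ne_one_of_smul_eq hRTF) (amalgamHom C I g).left ?_
      convert h1
      ext1
      · rfl
      · exact h2.symm
    · exact hGTF _ (h1.map SemidirectProduct.rightHom h2)
end

section
/- Let G = A * B be a free product of groups. Then the factor A is multi-malnormal in G: for every normal subsemigroup P of A with 1 ∉ P, every product d_1^{f_1} ⋯ d_n^{f_n} with n ≥ 1, d_i ∈ P, f_i ∈ G \ A lies in G \ A. -/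
universe u v

namespace Monoid.Coprod

variable {A B : Type*} [Group A] [Group B]

/-- Elements of `A ∗ B` that are products of letters from `A` and `B` with exactly `k` letters
from `B` (some of which may be trivial). -/
def rightLength (A B : Type*) [Group A] [Group B] : ℕ → Set (Coprod A B)
  | 0 => {g | ∃ a : A, g = inl a}
  | k + 1 => {g | ∃ h ∈ rightLength A B k, ∃ (b : B) (a : A), g = h * inr b * inl a}

theorem mul_inl_mem_rightLength {k : ℕ} {g : Coprod A B} (hg : g ∈ rightLength A B k) (a : A) :
    g * inl a ∈ rightLength A B k := by
  cases k with
  | zero =>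
    obtain ⟨c, rfl⟩ := hg
    exact ⟨c * a, by simp⟩
  | succ k =>
    obtain ⟨h, hh, b, c, rfl⟩ := hg
    exact ⟨h, hh, b, c * a, by simp [mul_assoc]⟩

theorem mul_inr_mem_rightLength {k : ℕ} {g : Coprod A B} (hg : g ∈ rightLength A B k) (b : B) :
    g * inr b ∈ rightLength A B (k + 1) :=
  ⟨g, hg, b, 1, by simp⟩

theorem rightLength_mono : Monotone (rightLength A B) :=
  monotone_nat_of_le_succ fun k g hg => by simpa using mul_inr_mem_rightLength hg (1 : B)

theorem exists_mem_rightLength (g : Coprod A B) : ∃ k, g ∈ rightLength A B k := by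
  have key : ∀ g h : Coprod A B, (∃ k, h ∈ rightLength A B k) →
      ∃ k, h * g ∈ rightLength A B k := by
    intro g
    induction g using Monoid.Coprod.induction_on with
    | inl a => exact fun h ⟨k, hk⟩ => ⟨k, mul_inl_mem_rightLength hk a⟩
    | inr b => exact fun h ⟨k, hk⟩ => ⟨k + 1, mul_inr_mem_rightLength hk b⟩
    | mul x y hx hy =>
      intro h hh
      rw [← mul_assoc]
      exact hy _ (hx _ hh)
  simpa using key g 1 ⟨0, 1, by simp⟩

/-- The free product of copies of `A` indexed by `B`. -/
abbrev Copies (A B : Type*) [Group A] : Type _ := CoprodI fun _ : B => A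

/-- The translation of the index set of `Copies A B` by an element of `B`. -/
def shiftHom (A : Type*) {B : Type*} [Group A] [Group B] (b : B) : Copies A B →* Copies A B :=
  CoprodI.lift fun c => CoprodI.of (M := fun _ : B => A) (i := b * c)

/-- The copy of `a` in the factor of `Copies A B` with index `b`. -/
def copy (b : B) : A →* Copies A B := CoprodI.of (M := fun _ : B => A) (i := b)

theorem copies_hom_ext {A B : Type*} [Group A] {H : Type*} [Monoid H] {f g : Copies A B →* H}
    (h : ∀ b a, f (copy b a) = g (copy b a)) : f = g :=
  CoprodI.ext_hom _ _ fun b => MonoidHom.ext (h b)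

@[simp]
theorem shiftHom_copy (b c : B) (a : A) : shiftHom A b (copy c a) = copy (b * c) a :=
  CoprodI.lift_of _ _

theorem shiftHom_one : shiftHom A (1 : B) = MonoidHom.id _ :=
  copies_hom_ext fun b a => by simp

theorem shiftHom_mul (b c : B) : shiftHom A (b * c) = (shiftHom A b).comp (shiftHom A c) :=
  copies_hom_ext fun d a => by simp [mul_assoc]

/-- The action of `B` on `Copies A B` by translation of the indices. -/
def shift (A B : Type*) [Group A] [Group B] : B →* MulAut (Copies A B) where
  toFun b := MonoidHom.toMulEquiv (shiftHom A b) (shiftHom A b⁻¹)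
    (by rw [← shiftHom_mul, inv_mul_cancel, shiftHom_one])
    (by rw [← shiftHom_mul, mul_inv_cancel, shiftHom_one])
  map_one' := MulEquiv.ext fun x => by simp [shiftHom_one]
  map_mul' b c := MulEquiv.ext fun x => by simp [shiftHom_mul]

@[simp]
theorem shift_copy (b c : B) (a : A) : shift A B b (copy c a) = copy (b * c) a :=
  shiftHom_copy b c a

@[simp]
theorem shift_symm_copy (b c : B) (a : A) :
    (shift A B b).symm (copy c a) = copy (b⁻¹ * c) a :=
  shiftHom_copy b⁻¹ c a

/-- The canonical homomorphism from `A ∗ B` to the free wreath product of `A` by `B`. -/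
def toWreath (A B : Type*) [Group A] [Group B] :
    Coprod A B →* Copies A B ⋊[shift A B] B :=
  lift (SemidirectProduct.inl.comp (copy 1)) SemidirectProduct.inr

@[simp]
theorem toWreath_inl (a : A) : toWreath A B (inl a) = SemidirectProduct.inl (copy 1 a) := rfl

@[simp]
theorem toWreath_inr (b : B) : toWreath A B (inr b) = SemidirectProduct.inr b := rfl

/-- The homomorphism sending the copy of `a` with index `b` to `b * a * b⁻¹`. -/
def copiesToCoprod (A B : Type*) [Group A] [Group B] : Copies A B →* Coprod A B :=
  CoprodI.lift fun b => (MulAut.conj (inr b)).toMonoidHom.comp inl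

@[simp]
theorem copiesToCoprod_copy (b : B) (a : A) :
    copiesToCoprod A B (copy b a) = inr b * inl a * (inr b)⁻¹ :=
  CoprodI.lift_of _ _

theorem copiesToCoprod_shift (b : B) (n : Copies A B) :
    copiesToCoprod A B (shift A B b n) = inr b * copiesToCoprod A B n * (inr b)⁻¹ := by
  have h : (copiesToCoprod A B).comp (shift A B b).toMonoidHom =
      (MulAut.conj (inr b)).toMonoidHom.comp (copiesToCoprod A B) :=
    copies_hom_ext fun c a => by simp [mul_assoc]
  exact DFunLike.congr_fun h n

theorem copiesToCoprod_toWreath (g : Coprod A B) :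
    copiesToCoprod A B (toWreath A B g).left * inr (toWreath A B g).right = g := by
  induction g using Monoid.Coprod.induction_on with
  | inl a => simp
  | inr b => simp
  | mul x y hx hy =>
    conv_rhs => rw [← hx, ← hy]
    simp [copiesToCoprod_shift, mul_assoc]

open Classical in
/-- The homomorphism separating the factor of `Copies A B` with index `1` from the other ones. -/
noncomputable def separate (A B : Type*) [Group A] [Group B] :
    Copies A B →* Coprod A (Copies A B) :=
  CoprodI.lift fun b => if b = 1 then inl else inr.comp (copy b)

theorem separate_copy_one (a : A) : separate A B (copy 1 a) = inl a :=
  (CoprodI.lift_of _ _).trans (by simp)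

theorem separate_copy_of_ne {b : B} (hb : b ≠ 1) (a : A) :
    separate A B (copy b a) = inr (copy b a) :=
  (CoprodI.lift_of _ _).trans (by simp [hb])

theorem lift_separate (n : Copies A B) :
    lift inl (copiesToCoprod A B) (separate A B n) = copiesToCoprod A B n := by
  have h : (lift inl (copiesToCoprod A B)).comp (separate A B) = copiesToCoprod A B := by
    refine copies_hom_ext fun b a => ?_
    by_cases hb : b = 1
    · subst hb
      simp [separate_copy_one]
    · simp [separate_copy_of_ne hb]
  exact DFunLike.congr_fun h n

theorem toWreath_left_mul_inr_mul_inl (g : Coprod A B) (b : B) (a : A) :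
    (toWreath A B (g * inr b * inl a)).left =
      (toWreath A B g).left * copy (toWreath A B (g * inr b * inl a)).right a := by
  simp

theorem separate_toWreath_mem_rightLength {k : ℕ} {g : Coprod A B}
    (hg : g ∈ rightLength A B k) :
    separate A B (toWreath A B g).left ∈ rightLength A (Copies A B) k := by
  induction k generalizing g with
  | zero =>
    obtain ⟨a, rfl⟩ := hg
    exact ⟨a, by simp [separate_copy_one]⟩
  | succ k ih =>
    obtain ⟨h, hh, b, a, rfl⟩ := hg
    rw [toWreath_left_mul_inr_mul_inl, map_mul]
    by_cases hb : (toWreath A B (h * inr b * inl a)).right = 1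
    · rw [hb, separate_copy_one]
      exact rightLength_mono k.le_succ (mul_inl_mem_rightLength (ih hh) a)
    · rw [separate_copy_of_ne hb]
      exact mul_inr_mem_rightLength (ih hh) _

theorem separate_toWreath_mem_rightLength_pred {k : ℕ} {g : Coprod A B}
    (hg : g ∈ rightLength A B (k + 1)) (h1 : (toWreath A B g).right = 1) :
    separate A B (toWreath A B g).left ∈ rightLength A (Copies A B) k := by
  obtain ⟨h, hh, b, a, rfl⟩ := hg
  rw [toWreath_left_mul_inr_mul_inl, map_mul, h1, separate_copy_one]
  exact mul_inl_mem_rightLength (separate_toWreath_mem_rightLength hh) a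

theorem separate_toWreath_notMem_range {g : Coprod A B}
    (hg : g ∉ (inl : A →* Coprod A B).range) (h1 : (toWreath A B g).right = 1) :
    separate A B (toWreath A B g).left ∉ (inl : A →* Coprod A (Copies A B)).range := by
  rintro ⟨a, ha⟩
  refine hg ⟨a, ?_⟩
  have := copiesToCoprod_toWreath g
  rw [h1, map_one, mul_one, ← lift_separate, ← ha, lift_apply_inl] at this
  exact this

/-- The `Copies A B` component of the image of `g` in the wreath product, with `B` written on
the left. -/
def wreathTail (g : Coprod A B) : Copies A B :=
  shift A B (toWreath A B g).right⁻¹ (toWreath A B g).left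

theorem wreathTail_eq_left {g : Coprod A B} (h : (toWreath A B g).right = 1) :
    wreathTail g = (toWreath A B g).left := by
  rw [wreathTail, h, inv_one, map_one, MulAut.one_apply]

theorem toWreath_conj (g : Coprod A B) (a : A) :
    toWreath A B (g⁻¹ * inl a * g) = SemidirectProduct.inl
      ((wreathTail g)⁻¹ * copy (toWreath A B g).right⁻¹ a * wreathTail g) := by
  have hg : toWreath A B g =
      SemidirectProduct.inr (toWreath A B g).right * SemidirectProduct.inl (wreathTail g) := by
    ext <;> simp [wreathTail]
  have hc : (SemidirectProduct.inr (toWreath A B g).right : Copies A B ⋊[shift A B] B)⁻¹ *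
      SemidirectProduct.inl (copy 1 a) * SemidirectProduct.inr (toWreath A B g).right =
      SemidirectProduct.inl (copy (toWreath A B g).right⁻¹ a) := by
    ext <;> simp
  rw [map_mul, map_mul, map_inv, toWreath_inl]
  conv_lhs => rw [hg]
  rw [map_mul, map_mul, map_inv, ← hc]
  group

open Classical in
/-- The projection of `Copies A B` to its factor with index `b`. -/
noncomputable def proj (A : Type*) {B : Type*} [Group A] (b : B) : Copies A B →* A :=
  CoprodI.lift fun c => if c = b then MonoidHom.id A else 1

theorem proj_copy_self {A B : Type*} [Group A] (b : B) (a : A) : proj A b (copy b a) = a :=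
  (CoprodI.lift_of _ _).trans (by simp)

theorem proj_copy_of_ne {A B : Type*} [Group A] {b c : B} (h : c ≠ b) (a : A) : proj A b (copy c a) = 1 :=
  (CoprodI.lift_of _ _).trans (by simp [h])

theorem _root_.List.prod_mem_or_eq_one_of_forall {M : Type*} [Monoid M] {P : Set M}
    (hmul : ∀ x ∈ P, ∀ y ∈ P, x * y ∈ P) {l : List M} (hl : ∀ x ∈ l, x ∈ P ∨ x = 1) :
    (l.prod ∈ P ∨ l.prod = 1) ∧ ((∃ x ∈ l, x ∈ P) → l.prod ∈ P) := by
  induction l with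
  | nil => simp
  | cons x l ih =>
    obtain ⟨h₁, h₂⟩ := ih fun y hy => hl y (List.mem_cons_of_mem _ hy)
    rw [List.prod_cons]
    rcases hl x List.mem_cons_self with hx | rfl
    · have : x * l.prod ∈ P := by
        rcases h₁ with h | h
        · exact hmul _ hx _ h
        · simpa [h] using hx
      exact ⟨Or.inl this, fun _ => this⟩
    · rw [one_mul]
      refine ⟨h₁, ?_⟩
      rintro ⟨y, hy, hyP⟩
      rcases List.mem_cons.1 hy with rfl | hy
      · rcases h₁ with h | h
        · exact h
        · rwa [h]
      · exact h₂ ⟨y, hy, hyP⟩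

theorem prod_copies_eq {l : List (A × Coprod A B)} {a : A}
    (h : (l.map fun p => p.2⁻¹ * inl p.1 * p.2).prod = inl a) :
    (l.map fun p => (wreathTail p.2)⁻¹ * copy (toWreath A B p.2).right⁻¹ p.1 *
      wreathTail p.2).prod = copy 1 a := by
  refine SemidirectProduct.inl_injective (φ := shift A B) ?_
  rw [← toWreath_inl, ← h, map_list_prod, map_list_prod, List.map_map, List.map_map]
  congr 1
  exact List.map_congr_left fun p _ => (toWreath_conj p.2 p.1).symm

theorem toWreath_right_eq_one {P : Set A} (hmul : ∀ x ∈ P, ∀ y ∈ P, x * y ∈ P)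
    (hconj : ∀ x ∈ P, ∀ a : A, a⁻¹ * x * a ∈ P) (h1 : (1 : A) ∉ P)
    {l : List (A × Coprod A B)} (hl : ∀ p ∈ l, p.1 ∈ P) {a : A}
    (h : (l.map fun p => p.2⁻¹ * inl p.1 * p.2).prod = inl a)
    {p : A × Coprod A B} (hp : p ∈ l) : (toWreath A B p.2).right = 1 := by
  by_contra hne
  have hne' : (1 : B) ≠ (toWreath A B p.2).right⁻¹ := fun e => hne (inv_eq_one.1 e.symm)
  have hprod := congrArg (proj A (toWreath A B p.2).right⁻¹) (prod_copies_eq h)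
  rw [map_list_prod, List.map_map, proj_copy_of_ne hne'] at hprod
  refine h1 (hprod ▸ (List.prod_mem_or_eq_one_of_forall hmul ?_).2 ?_)
  · intro x hx
    obtain ⟨q, hq, rfl⟩ := List.mem_map.1 hx
    by_cases e : (toWreath A B q.2).right⁻¹ = (toWreath A B p.2).right⁻¹
    · left
      simp only [Function.comp_apply, map_mul, map_inv, e, proj_copy_self]
      exact hconj _ (hl q hq) _
    · right
      simp [proj_copy_of_ne e]
  · refine ⟨_, List.mem_map_of_mem hp, ?_⟩
    simp only [Function.comp_apply, map_mul, map_inv, proj_copy_self]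
    exact hconj _ (hl p hp) _

theorem prod_separate_eq {l : List (A × Coprod A B)} {a : A}
    (h : (l.map fun p => p.2⁻¹ * inl p.1 * p.2).prod = inl a)
    (hr : ∀ p ∈ l, (toWreath A B p.2).right = 1) :
    ((l.map fun p => (p.1, separate A B (toWreath A B p.2).left)).map
      fun p => p.2⁻¹ * inl p.1 * p.2).prod = inl a := by
  have hprod := congrArg (separate A B) (prod_copies_eq h)
  rw [map_list_prod, List.map_map, separate_copy_one] at hprod
  rw [← hprod, List.map_map]
  congr 1
  refine List.map_congr_left fun p hp => ?_
  simp [wreathTail_eq_left (hr p hp), hr p hp, separate_copy_one]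

theorem prod_conj_ne_inl_of_rightLength {A : Type u} [Group A] {P : Set A}
    (hmul : ∀ x ∈ P, ∀ y ∈ P, x * y ∈ P) (hconj : ∀ x ∈ P, ∀ a : A, a⁻¹ * x * a ∈ P)
    (h1 : (1 : A) ∉ P) (k : ℕ) {B : Type (max u v)} [Group B] {l : List (A × Coprod A B)}
    (hne : l ≠ [])
    (hl : ∀ p ∈ l, p.1 ∈ P ∧ p.2 ∉ (inl : A →* Coprod A B).range ∧ p.2 ∈ rightLength A B k)
    (a : A) : (l.map fun p => p.2⁻¹ * inl p.1 * p.2).prod ≠ inl a := by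
  induction k generalizing B with
  | zero =>
    obtain ⟨p, hp⟩ := List.exists_mem_of_ne_nil l hne
    obtain ⟨-, hp₁, c, hc⟩ := hl p hp
    exact absurd ⟨c, hc.symm⟩ hp₁
  | succ k ih =>
    intro h
    have hr : ∀ p ∈ l, (toWreath A B p.2).right = 1 := fun p hp =>
      toWreath_right_eq_one hmul hconj h1 (fun q hq => (hl q hq).1) h hp
    refine ih (B := Copies A B) (by simpa using hne) ?_ (prod_separate_eq h hr)
    intro q hq
    obtain ⟨p, hp, rfl⟩ := List.mem_map.1 hq
    obtain ⟨h₁, h₂, h₃⟩ := hl p hp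
    exact ⟨h₁, separate_toWreath_notMem_range h₂ (hr p hp),
      separate_toWreath_mem_rightLength_pred h₃ (hr p hp)⟩

theorem exists_rightLength_of_list (l : List (A × Coprod A B)) :
    ∃ k, ∀ p ∈ l, p.2 ∈ rightLength A B k := by
  induction l with
  | nil => simp
  | cons p l ih =>
    obtain ⟨k, hk⟩ := ih
    obtain ⟨m, hm⟩ := exists_mem_rightLength p.2
    refine ⟨max k m, fun q hq => ?_⟩
    rcases List.mem_cons.1 hq with rfl | hq
    · exact rightLength_mono (le_max_right k m) hm
    · exact rightLength_mono (le_max_left k m) (hk q hq)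

end Monoid.Coprod

/-- In a free product `G = A ∗ B`, the factor `A` is multi-malnormal in `G`: for
every normal subsemigroup `P` of `A` with `1 ∉ P`, every nonempty product of
conjugates `d₁^{f₁} ⋯ dₙ^{fₙ}` with `dᵢ ∈ P` and `fᵢ ∈ G \ A` lies in `G \ A`. -/
theorem freeProduct_factor_multiMalnormal {A B : Type*} [Group A] [Group B]
    (P : Set A)
    (hmul : ∀ x ∈ P, ∀ y ∈ P, x * y ∈ P)
    (hconj : ∀ x ∈ P, ∀ a : A, a⁻¹ * x * a ∈ P)
    (h1 : (1 : A) ∉ P)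
    (l : List (A × Monoid.Coprod A B)) (hne : l ≠ [])
    (hl : ∀ p ∈ l, p.1 ∈ P ∧ p.2 ∉ (Monoid.Coprod.inl : A →* Monoid.Coprod A B).range) :
    (l.map fun p => p.2⁻¹ * Monoid.Coprod.inl p.1 * p.2).prod ∉
      (Monoid.Coprod.inl : A →* Monoid.Coprod A B).range := by
  rintro ⟨a, ha⟩
  let e : Monoid.Coprod A B ≃* Monoid.Coprod A (ULift.{max u_1 u_2} B) :=
    MulEquiv.coprodCongr (MulEquiv.refl A) MulEquiv.ulift.symm
  have he : ∀ x : A, e (Monoid.Coprod.inl x) = Monoid.Coprod.inl x := fun _ => rfl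
  obtain ⟨k, hk⟩ := Monoid.Coprod.exists_rightLength_of_list (l.map fun p => (p.1, e p.2))
  refine Monoid.Coprod.prod_conj_ne_inl_of_rightLength.{u_1, max u_1 u_2} hmul hconj h1 k
    (l := l.map fun p => (p.1, e p.2)) (by simpa using hne) ?_ a ?_
  · intro q hq
    refine ⟨?_, ?_, hk q hq⟩
    all_goals obtain ⟨p, hp, rfl⟩ := List.mem_map.1 hq
    · exact (hl p hp).1
    · rintro ⟨c, hc⟩
      exact (hl p hp).2 ⟨c, e.injective ((he c).trans hc)⟩
  · rw [← he, ha, map_list_prod, List.map_map, List.map_map]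
    congr 1
    exact List.map_congr_left fun p _ => by simp [he]
end
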